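/- (Korn–Maxwell–Sobolev of the second kind, symmetric part, 1 < p < 3) Let Q = (0,1)³ and 1 < p < 3. There is c = c(p) > 0 such that for all F ∈ C^∞(closure of Q; ℝ^{3×3}) satisfying ∫_Q ⟨F, Π⟩ dx = 0 for every skew-symmetric Π ∈ ℝ^{3×3}, one has ‖F‖_{L^{3p/(3−p)}(Q)} ≤ c(‖F^sym‖_{L^{3p/(3−p)}(Q)} + ‖curl F‖_{Lᵖ(Q)}). -/

import Mathlib

open MeasureTheory
open scoped ENNReal

noncomputable def pd (j : Fin 3) (f : (Fin 3 → ℝ) → ℝ) (x : Fin 3 → ℝ) : ℝ :=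
  fderiv ℝ f x (Pi.single j 1)

/-- The row-wise curl of a matrix field `F : ℝ³ → ℝ^{3×3}`. -/
noncomputable def mcurl (F : (Fin 3 → ℝ) → Fin 3 → Fin 3 → ℝ) (x : Fin 3 → ℝ) :
    Fin 3 → Fin 3 → ℝ :=
  fun i => ![pd 1 (fun y => F y i 2) x - pd 2 (fun y => F y i 1) x,
             pd 2 (fun y => F y i 0) x - pd 0 (fun y => F y i 2) x,
             pd 0 (fun y => F y i 1) x - pd 1 (fun y => F y i 0) x]

/-- The open unit cube `Q = (0,1)³`. -/
def Q3 : Set (Fin 3 → ℝ) := {x | ∀ j, x j ∈ Set.Ioo (0 : ℝ) 1}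

/-!
Write `F = S + A` with symmetric part `S` and skew part `A`. A tensor `Tᵢⱼₖ` that is symmetric in
`j, k` and skew in `i, j` vanishes; applied to `∫ Fᵢⱼ ∂ₖV` for a test function `V` that
vanishes on the boundary of the cube `Q`, where exchanging `j` and `k` costs `∫ (curl F) V` and
exchanging `i` and `j` costs `∫ S ∂V`, this algebra and Sobolev's inequality for `V` bound `∇A` by
`‖S‖_q + ‖curl F‖_p` in the dual of the Sobolev space with exponent `r = q'`.

It remains to bound a function of mean zero in `L^q(Q)` by its gradient in that dual space
(Nečas). Integrating against the Laplacian of a truncated fundamental solution gives this in the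
interior, up to a smooth remainder controlled by Poincaré's argument, as soon as
`‖∂ᵢ∂ⱼφ‖_r ≤ C ‖Δφ‖_r`. Near the boundary the function is extended by higher-order reflections,
chosen so that the adjoint of the extension turns a partial derivative of a test function into the
same partial derivative of a test function that vanishes on the boundary of `Q`.

The estimate for second derivatives comes from a Bellman function of two variables: composed with
two solutions of the discrete heat equation on a finite abelian group, it yields a bilinear
estimate with a constant that does not depend on the group. Passing from finite groups to `ℤⁿ` and
then from differences on finer and finer lattices to derivatives gives the estimate on `ℝⁿ`.
-/

namespace KornMaxwellSobolev

/-! ### A Bellman function for conjugate exponents -/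

section SignedPow

variable {t : ℝ}

/-- The odd power function `a ↦ sign a * |a| ^ (t + 1)`. For `t = q - 2` it is the duality map of
`L^q`, whose inverse is the one for the conjugate exponent. -/
noncomputable def signedPow (t a : ℝ) : ℝ := a * |a| ^ t

lemma signedPow_neg (t a : ℝ) : signedPow t (-a) = -signedPow t a := by
  simp [signedPow]

lemma signedPow_of_nonneg (ht : -1 < t) {a : ℝ} (ha : 0 ≤ a) : signedPow t a = a ^ (t + 1) := by
  rw [signedPow, abs_of_nonneg ha, Real.rpow_add_one' ha (by linarith), mul_comm]

lemma abs_signedPow (ht : -1 < t) (a : ℝ) : |signedPow t a| = |a| ^ (t + 1) := by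
  rw [signedPow, abs_mul, abs_of_nonneg (Real.rpow_nonneg (abs_nonneg a) t),
    Real.rpow_add_one' (abs_nonneg a) (by linarith), mul_comm]

lemma self_mul_signedPow (ht : -2 < t) (a : ℝ) : a * signedPow t a = |a| ^ (t + 2) := by
  rcases eq_or_ne a 0 with rfl | ha
  · simp [Real.zero_rpow (by linarith : t + 2 ≠ 0)]
  · rw [Real.rpow_add (abs_pos.2 ha), Real.rpow_two, sq_abs, signedPow]
    ring

lemma monotone_signedPow (ht : -1 < t) : Monotone (signedPow t) := by
  refine monotone_of_odd_of_monotoneOn_nonneg (signedPow_neg t) fun a ha b hb hab => ?_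
  rw [signedPow_of_nonneg ht ha, signedPow_of_nonneg ht hb]
  exact Real.rpow_le_rpow ha hab (by linarith)

lemma signedPow_sub_mul_sub (ht : -1 < t) (a b : ℝ) :
    (signedPow t a - signedPow t b) * (a - b) = |signedPow t a - signedPow t b| * |a - b| := by
  rw [← abs_mul, abs_of_nonneg]
  rcases le_total a b with h | h
  · exact mul_nonneg_of_nonpos_of_nonpos (sub_nonpos.2 (monotone_signedPow ht h)) (sub_nonpos.2 h)
  · exact mul_nonneg (sub_nonneg.2 (monotone_signedPow ht h)) (sub_nonneg.2 h)

lemma signedPow_sub_le_of_abs_le (ht : 0 ≤ t) {a b : ℝ} (hab : |b| ≤ a) :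
    signedPow t a - signedPow t b ≤ (t + 1) * a ^ t * (a - b) := by
  have ha0 : 0 ≤ a := (abs_nonneg b).trans hab
  rcases ha0.eq_or_lt with rfl | ha
  · simp [abs_nonpos_iff.1 hab]
  rcases le_total 0 b with hb | hb
  · have bernoulli := one_add_mul_self_le_rpow_one_add (s := b / a - 1) (p := t + 1)
      (by linarith [div_nonneg hb ha0]) (by linarith)
    rw [add_sub_cancel, Real.div_rpow hb ha0, le_div_iff₀ (by positivity),
      Real.rpow_add_one ha.ne'] at bernoulli
    rw [signedPow_of_nonneg (by linarith) ha0, signedPow_of_nonneg (by linarith) hb,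
      Real.rpow_add_one ha.ne']
    have expand : (1 + (t + 1) * (b / a - 1)) * (a ^ t * a) =
        a ^ t * a - (t + 1) * a ^ t * (a - b) := by
      field_simp
      ring
    linarith
  · have hpow : |b| ^ t ≤ a ^ t := Real.rpow_le_rpow (abs_nonneg b) hab ht
    have hmain : 0 ≤ t * (a ^ t * (a - b)) :=
      mul_nonneg ht (mul_nonneg (by positivity) (by linarith))
    rw [signedPow, signedPow, abs_of_nonneg ha0]
    nlinarith [mul_le_mul_of_nonpos_left hpow hb]

lemma abs_signedPow_sub_le (ht : 0 ≤ t) (a b : ℝ) :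
    |signedPow t a - signedPow t b| ≤ (t + 1) * (|a| ^ t + |b| ^ t) * |a - b| := by
  wlog hab : |b| ≤ |a| generalizing a b
  · rw [abs_sub_comm, add_comm (|a| ^ t), abs_sub_comm a]
    exact this b a (le_of_not_ge hab)
  wlog ha : 0 ≤ a generalizing a b
  · have h := this (-a) (-b) (by simpa using hab) (by linarith)
    simp only [signedPow_neg, abs_neg] at h
    rwa [← neg_sub', abs_neg, ← neg_sub', abs_neg] at h
  have hba : b ≤ a := (le_abs_self b).trans (hab.trans_eq (abs_of_nonneg ha))
  rw [abs_of_nonneg (sub_nonneg.2 (monotone_signedPow (by linarith) hba)),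
    abs_of_nonneg (sub_nonneg.2 hba)]
  refine (signedPow_sub_le_of_abs_le ht (hab.trans_eq (abs_of_nonneg ha))).trans ?_
  rw [abs_of_nonneg ha]
  have hb : 0 ≤ |b| ^ t := by positivity
  gcongr
  linarith

lemma abs_mul_rpow_sub_rpow_le (ht : 0 ≤ t) {u a b : ℝ} (hu : |u| ≤ |b|) (ha : |a| ≤ |b|) :
    |u| * (|b| ^ t - (max |u| |a|) ^ t) ≤ |signedPow t a - signedPow t b| := by
  have hM : max |u| |a| ≤ |b| := max_le hu ha
  have hdiff : 0 ≤ |b| ^ t - (max |u| |a|) ^ t :=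
    sub_nonneg.2 (Real.rpow_le_rpow (by positivity) hM ht)
  calc |u| * (|b| ^ t - (max |u| |a|) ^ t)
      ≤ max |u| |a| * (|b| ^ t - (max |u| |a|) ^ t) := by gcongr; exact le_max_left _ _
    _ ≤ |b| * |b| ^ t - |a| * |a| ^ t := by
        have h₁ : max |u| |a| * |b| ^ t ≤ |b| * |b| ^ t := by gcongr
        have h₂ : |a| * |a| ^ t ≤ max |u| |a| * (max |u| |a|) ^ t := by
          gcongr <;> exact le_max_right _ _
        linarith
    _ = |signedPow t b| - |signedPow t a| := by
        simp only [signedPow, abs_mul, abs_of_nonneg (Real.rpow_nonneg (abs_nonneg _) t)]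
    _ ≤ |signedPow t a - signedPow t b| := by
        rw [abs_sub_comm]
        exact abs_sub_abs_le_abs_sub _ _

lemma sq_sub_sq_mul_max_rpow_sub_le (ht : 0 ≤ t) (u u' a a' : ℝ) :
    (u ^ 2 - u' ^ 2) * ((max |u'| |a'|) ^ t - (max |u| |a|) ^ t) ≤
      2 * |u - u'| * |signedPow t a - signedPow t a'| := by
  wlog h : |u'| ≤ |u| generalizing u u' a a'
  · have := this u' u a' a (le_of_not_ge h)
    rw [abs_sub_comm, abs_sub_comm (signedPow t a)]
    linarith
  have hsq : 0 ≤ u ^ 2 - u' ^ 2 := sub_nonneg.2 (sq_le_sq.2 h)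
  rcases le_or_gt (max |u'| |a'|) (max |u| |a|) with hM | hM
  · have := Real.rpow_le_rpow (by positivity) hM ht
    exact (mul_nonpos_of_nonneg_of_nonpos hsq (by linarith)).trans (by positivity)
  have hmax : max |u'| |a'| = |a'| :=
    max_eq_right (le_of_not_ge fun hle =>
      absurd (hM.trans_eq (max_eq_left hle)) (not_lt.2 (h.trans (le_max_left _ _))))
  rw [hmax] at hM ⊢
  have hfactor : u ^ 2 - u' ^ 2 ≤ |u - u'| * (2 * |u|) := by
    calc u ^ 2 - u' ^ 2 ≤ |u - u'| * |u + u'| := by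
          rw [← abs_mul]
          exact (le_abs_self _).trans_eq (by ring_nf)
      _ ≤ |u - u'| * (2 * |u|) := by
          gcongr
          linarith [abs_add_le u u']
  have hpow : 0 ≤ |a'| ^ t - (max |u| |a|) ^ t :=
    sub_nonneg.2 (Real.rpow_le_rpow (by positivity) hM.le ht)
  calc (u ^ 2 - u' ^ 2) * (|a'| ^ t - (max |u| |a|) ^ t)
      ≤ |u - u'| * (2 * |u|) * (|a'| ^ t - (max |u| |a|) ^ t) := by gcongr
    _ = 2 * |u - u'| * (|u| * (|a'| ^ t - (max |u| |a|) ^ t)) := by ring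
    _ ≤ 2 * |u - u'| * |signedPow t a - signedPow t a'| := by
        gcongr
        exact abs_mul_rpow_sub_rpow_le ht ((le_max_left _ _).trans hM.le)
          ((le_max_right _ _).trans hM.le)

end SignedPow

section TruncInv

/-- The inversion `a ↦ u ^ 2 / a` outside `[-|u|, |u|]`, continued by the identity inside; it is
part of the second partial derivative of the Bellman function. -/
noncomputable def truncInv (u a : ℝ) : ℝ := (min |u| |a|) ^ 2 / a

lemma truncInv_of_abs_le {u a : ℝ} (h : |a| ≤ |u|) : truncInv u a = a := by
  rw [truncInv, min_eq_right h, sq_abs, sq, mul_self_div_self]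

lemma truncInv_of_le_abs {u a : ℝ} (h : |u| ≤ |a|) : truncInv u a = u ^ 2 / a := by
  rw [truncInv, min_eq_left h, sq_abs]

lemma truncInv_neg (u a : ℝ) : truncInv u (-a) = -truncInv u a := by
  simp [truncInv, div_neg]

lemma abs_truncInv_sub_le_left (u u' a : ℝ) :
    |truncInv u a - truncInv u' a| ≤ 2 * |u - u'| := by
  rcases eq_or_ne a 0 with rfl | ha
  · simp [truncInv]
  have hmin : |(min |u| |a|) - (min |u'| |a|)| ≤ |u - u'| :=
    (abs_inf_sub_inf_le_abs _ _ _).trans (abs_abs_sub_abs_le_abs_sub u u')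
  have hsum : |(min |u| |a|) + (min |u'| |a|)| ≤ 2 * |a| := by
    rw [abs_of_nonneg (by positivity)]
    linarith [min_le_right |u| |a|, min_le_right |u'| |a|]
  rw [truncInv, truncInv, ← sub_div, sq_sub_sq, abs_div, abs_mul, div_le_iff₀ (abs_pos.2 ha)]
  calc _ ≤ 2 * |a| * |u - u'| := by gcongr
    _ = 2 * |u - u'| * |a| := by ring

lemma monotone_sub_truncInv (u : ℝ) : Monotone fun a => a - truncInv u a := by
  refine monotone_of_odd_of_monotoneOn_nonneg (fun a => by rw [truncInv_neg]; ring) ?_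
  intro a ha b hb hab
  simp only [Set.mem_Ici] at ha hb
  rcases le_total a |u| with hau | hau
  · have hb' : truncInv u b ≤ b := by
      rw [truncInv, abs_of_nonneg hb]
      refine div_le_of_le_mul₀ hb hb ?_
      rw [← sq]
      gcongr
      exact min_le_right _ _
    simp only [truncInv_of_abs_le ((abs_of_nonneg ha).trans_le hau)]
    linarith
  · have hu : ∀ {x : ℝ}, a ≤ x → truncInv u x = u ^ 2 / x := fun {x} hx =>
      truncInv_of_le_abs ((hau.trans hx).trans (le_abs_self x))
    rcases ha.eq_or_lt with rfl | ha
    · have : u = 0 := abs_nonpos_iff.1 hau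
      simpa [truncInv, this] using hb
    simp only [hu le_rfl, hu hab]
    gcongr

lemma monotone_add_truncInv (u : ℝ) : Monotone fun a => a + truncInv u a := by
  refine monotone_of_odd_of_monotoneOn_nonneg (fun a => by rw [truncInv_neg]; ring) ?_
  intro a ha b hb hab
  simp only [Set.mem_Ici] at ha hb
  rcases hb.eq_or_lt with rfl | hb'
  · simp [le_antisymm hab ha]
  rcases le_total b |u| with hbu | hbu
  · simp only [truncInv_of_abs_le ((abs_of_nonneg ha).trans_le (hab.trans hbu)),
      truncInv_of_abs_le ((abs_of_nonneg hb).trans_le hbu)]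
    linarith
  simp only [truncInv_of_le_abs (hbu.trans (le_abs_self b))]
  rcases le_total a |u| with hau | hau
  · rw [truncInv_of_abs_le ((abs_of_nonneg ha).trans_le hau), ← sub_nonneg, ← sq_abs u]
    have : b + |u| ^ 2 / b - (a + a) = ((b - |u|) ^ 2 + 2 * b * (|u| - a)) / b := by
      field_simp
      ring
    rw [this]
    have := sub_nonneg.2 hau
    positivity
  · rcases ha.eq_or_lt with rfl | ha
    · have : u = 0 := abs_nonpos_iff.1 hau
      simpa [truncInv, this] using hb
    rw [truncInv_of_le_abs (hau.trans (le_abs_self a)), ← sub_nonneg, ← sq_abs u]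
    have : b + |u| ^ 2 / b - (a + |u| ^ 2 / a) = (b - a) * (a * b - |u| * |u|) / (a * b) := by
      field_simp
      ring
    rw [this]
    have := sub_nonneg.2 (mul_le_mul hau hbu (abs_nonneg u) ha.le)
    have := sub_nonneg.2 hab
    positivity

lemma abs_truncInv_sub_le_right (u a a' : ℝ) : |truncInv u a - truncInv u a'| ≤ |a - a'| := by
  wlog h : a' ≤ a generalizing a a'
  · rw [abs_sub_comm, abs_sub_comm a]
    exact this a' a (le_of_not_ge h)
  have hsub := monotone_sub_truncInv u h
  have hadd := monotone_add_truncInv u h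
  rw [abs_of_nonneg (sub_nonneg.2 h), abs_le]
  constructor <;> linarith

lemma abs_truncInv_sub_le (u u' a a' : ℝ) :
    |truncInv u a - truncInv u' a'| ≤ 2 * |u - u'| + |a - a'| :=
  (abs_sub_le _ (truncInv u' a) _).trans
    (add_le_add (abs_truncInv_sub_le_left u u' a) (abs_truncInv_sub_le_right u' a a'))

end TruncInv

section GradientMonotone

/-- AM-GM: `6 X Z N ≤ X ^ 2 N ^ 2 + 9 Z ^ 2`, where one factor `Z` is at most `c * N * Y`. -/
lemma six_mul_le_sq_mul_add {X Y Z N c : ℝ} (hN : 0 ≤ N) (hZ : 0 ≤ Z) (h : Z ≤ c * N * Y) :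
    6 * X * Z ≤ X ^ 2 * N + 9 * c * (Z * Y) := by
  rcases hN.eq_or_lt with rfl | hN
  · simp [le_antisymm (by simpa using h) hZ]
  refine le_of_mul_le_mul_right ?_ hN
  nlinarith [sq_nonneg (X * N - 3 * Z), mul_le_mul_of_nonneg_left h hZ]

/-- The left factor of `k₁ * α + k₂ * truncInv u α` has to beat the Lipschitz constants of
`truncInv` and of `signedPow t`, whence the size of `k₁`. -/
lemma two_mul_abs_sub_mul_abs_signedPow_sub_le {t k₁ k₂ : ℝ} (ht : 0 ≤ t) (hk₂ : 0 ≤ k₂)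
    (hk₂' : k₂ ≤ 1) (hk₁ : 9 * (t + 1) + k₂ ≤ k₁) (u u' α α' : ℝ) :
    2 * |u - u'| * |signedPow t α - signedPow t α'| ≤
      (u - u') * (2 * u * (max |u| |α|) ^ t - 2 * u' * (max |u'| |α'|) ^ t) +
      (signedPow t α - signedPow t α') *
        ((k₁ * α + k₂ * truncInv u α) - (k₁ * α' + k₂ * truncInv u' α')) := by
  set N := (max |u| |α|) ^ t
  set N' := (max |u'| |α'|) ^ t
  set D := truncInv u α - truncInv u' α'
  have hX := abs_nonneg (u - u')
  have hY := abs_nonneg (α - α')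
  have hZ := abs_nonneg (signedPow t α - signedPow t α')
  have quadratic : 6 * |u - u'| * |signedPow t α - signedPow t α'| ≤
      |u - u'| ^ 2 * (N + N') +
        9 * (t + 1) * (|signedPow t α - signedPow t α'| * |α - α'|) := by
    refine six_mul_le_sq_mul_add (by positivity) hZ ((abs_signedPow_sub_le ht α α').trans ?_)
    have hα : |α| ^ t ≤ N := Real.rpow_le_rpow (abs_nonneg α) (le_max_right _ _) ht
    have hα' : |α'| ^ t ≤ N' := Real.rpow_le_rpow (abs_nonneg α') (le_max_right _ _) ht
    gcongr
  have cross : -(|signedPow t α - signedPow t α'| * (2 * |u - u'| + |α - α'|)) ≤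
      (signedPow t α - signedPow t α') * D := by
    refine neg_le_of_neg_le ?_
    refine (neg_le_abs _).trans ?_
    rw [abs_mul]
    exact mul_le_mul_of_nonneg_left (abs_truncInv_sub_le u u' α α') hZ
  have first := sq_sub_sq_mul_max_rpow_sub_le ht u u' α α'
  have first_eq : (u - u') * (2 * u * N - 2 * u' * N') =
      |u - u'| ^ 2 * (N + N') - (u ^ 2 - u' ^ 2) * (N' - N) := by
    rw [sq_abs]
    ring
  have second_eq : (signedPow t α - signedPow t α') *
      ((k₁ * α + k₂ * truncInv u α) - (k₁ * α' + k₂ * truncInv u' α')) =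
      k₁ * (|signedPow t α - signedPow t α'| * |α - α'|) +
        k₂ * ((signedPow t α - signedPow t α') * D) := by
    rw [← signedPow_sub_mul_sub (by linarith)]
    ring
  rw [first_eq, second_eq]
  nlinarith [mul_le_mul_of_nonneg_left cross hk₂,
    mul_le_mul_of_nonneg_right hk₁ (mul_nonneg hZ hY),
    mul_le_mul_of_nonneg_right hk₂' (mul_nonneg hZ hX)]

end GradientMonotone

section Bellman

variable {p q K u v : ℝ}

/-- A simple variant of the Bellman function of Nazarov and Treil for the exponents `p ≥ 2` and
`q = p / (p - 1)`, glued along `|u| = |v| ^ (q - 1)`. -/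
noncomputable def bellman (p q K u v : ℝ) : ℝ :=
  u ^ 2 * (max |u| (|v| ^ (q - 1))) ^ (p - 2) - (1 - 2 / p) * (max |u| (|v| ^ (q - 1))) ^ p +
    K * |v| ^ q

/-- The derivative of `bellman p q K` in the first variable. -/
noncomputable def bellmanDerivFst (p q u v : ℝ) : ℝ :=
  2 * u * (max |u| (|v| ^ (q - 1))) ^ (p - 2)

/-- The derivative of `bellman p q K` in the second variable. -/
noncomputable def bellmanDerivSnd (q K u v : ℝ) : ℝ :=
  (K * q - (2 - q)) * signedPow (q - 2) v + (2 - q) * truncInv u (signedPow (q - 2) v)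

lemma conjExponent_le_two (hpq : p.HolderConjugate q) (hp : 2 ≤ p) : q ≤ 2 := by
  nlinarith [hpq.symm.sub_one_mul_conj]

lemma abs_signedPow_sub_two (hq : 1 < q) (v : ℝ) : |signedPow (q - 2) v| = |v| ^ (q - 1) := by
  rw [abs_signedPow (by linarith)]
  ring_nf

lemma sq_mul_abs_rpow_sub_two (hp : p ≠ 0) (u : ℝ) : u ^ 2 * |u| ^ (p - 2) = |u| ^ p := by
  rcases eq_or_ne u 0 with rfl | hu
  · simp [Real.zero_rpow hp]
  · rw [← sq_abs, ← Real.rpow_two, ← Real.rpow_add (abs_pos.2 hu)]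
    ring_nf

lemma abs_rpow_rpow_conj (hpq : p.HolderConjugate q) (v : ℝ) : (|v| ^ (q - 1)) ^ p = |v| ^ q := by
  rw [← Real.rpow_mul (abs_nonneg v), hpq.symm.sub_one_mul_conj]

lemma abs_rpow_rpow_conj_sub_two (hpq : p.HolderConjugate q) (v : ℝ) :
    (|v| ^ (q - 1)) ^ (p - 2) = |v| ^ (2 - q) := by
  rw [← Real.rpow_mul (abs_nonneg v), mul_sub, hpq.symm.sub_one_mul_conj]
  ring_nf

lemma signedPow_signedPow_conj (hpq : p.HolderConjugate q) (v : ℝ) :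
    signedPow (p - 2) (signedPow (q - 2) v) = v := by
  rw [signedPow, abs_signedPow_sub_two hpq.symm.lt, abs_rpow_rpow_conj_sub_two hpq, signedPow]
  rcases eq_or_ne v 0 with rfl | hv
  · simp
  · rw [mul_assoc, ← Real.rpow_add (abs_pos.2 hv)]
    simp

lemma bellman_of_rpow_le (hp : p ≠ 0) (h : |v| ^ (q - 1) ≤ |u|) :
    bellman p q K u v = 2 / p * |u| ^ p + K * |v| ^ q := by
  rw [bellman, max_eq_left h, sq_mul_abs_rpow_sub_two hp]
  ring

lemma bellman_of_le_rpow (hpq : p.HolderConjugate q) (h : |u| ≤ |v| ^ (q - 1)) :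
    bellman p q K u v = u ^ 2 * |v| ^ (2 - q) + (K - (1 - 2 / p)) * |v| ^ q := by
  rw [bellman, max_eq_right h, abs_rpow_rpow_conj_sub_two hpq, abs_rpow_rpow_conj hpq]
  ring

lemma bellman_nonneg (hpq : p.HolderConjugate q) (hK : 1 ≤ K) (u v : ℝ) :
    0 ≤ bellman p q K u v := by
  have hp := hpq.pos
  rcases le_total (|v| ^ (q - 1)) |u| with h | h
  · rw [bellman_of_rpow_le hp.ne' h]
    positivity
  · rw [bellman_of_le_rpow hpq h]
    have : 0 ≤ K - (1 - 2 / p) := by linarith [div_pos two_pos hp]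
    positivity

lemma bellman_le (hp : 2 ≤ p) (hpq : p.HolderConjugate q) (hK : 0 ≤ K) (u v : ℝ) :
    bellman p q K u v ≤ (1 + K) * (|u| ^ p + |v| ^ q) := by
  have hu : 0 ≤ |u| ^ p := by positivity
  have hv : 0 ≤ |v| ^ q := by positivity
  have hp2 : 2 / p ≤ 1 := (div_le_one (by linarith)).2 hp
  rcases le_total (|v| ^ (q - 1)) |u| with h | h
  · rw [bellman_of_rpow_le (by linarith) h]
    nlinarith
  · rw [bellman_of_le_rpow hpq h]
    have hcross : u ^ 2 * |v| ^ (2 - q) ≤ |v| ^ q := by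
      calc u ^ 2 * |v| ^ (2 - q) ≤ (|v| ^ (q - 1)) ^ 2 * (|v| ^ (q - 1)) ^ (p - 2) := by
            rw [← abs_rpow_rpow_conj_sub_two hpq, ← sq_abs u]
            gcongr
        _ = |v| ^ q := by
            rw [← abs_rpow_rpow_conj hpq]
            simpa [abs_of_nonneg (Real.rpow_nonneg (abs_nonneg v) _)] using
              sq_mul_abs_rpow_sub_two hpq.ne_zero (|v| ^ (q - 1))
    nlinarith

lemma two_mul_abs_sub_mul_abs_sub_le_bellmanDeriv (hp : 2 ≤ p) (hpq : p.HolderConjugate q)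
    (hK : 9 * p ≤ K) (u v u' v' : ℝ) :
    2 * |u - u'| * |v - v'| ≤ (u - u') * (bellmanDerivFst p q u v - bellmanDerivFst p q u' v') +
      (v - v') * (bellmanDerivSnd q K u v - bellmanDerivSnd q K u' v') := by
  have hq := hpq.symm.lt
  have hq2 := conjExponent_le_two hpq hp
  have := two_mul_abs_sub_mul_abs_signedPow_sub_le (t := p - 2) (k₁ := K * q - (2 - q))
    (k₂ := 2 - q) (by linarith) (by linarith) (by linarith) (by nlinarith) u u'
    (signedPow (q - 2) v) (signedPow (q - 2) v')
  rwa [signedPow_signedPow_conj hpq, signedPow_signedPow_conj hpq, abs_signedPow_sub_two hq,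
    abs_signedPow_sub_two hq] at this

lemma hasFDerivAt_fst_add_snd {f g : ℝ → ℝ} {f' g' : ℝ} (hf : HasDerivAt f f' u)
    (hg : HasDerivAt g g' v) :
    HasFDerivAt (fun z : ℝ × ℝ => f z.1 + g z.2)
      (f' • ContinuousLinearMap.fst ℝ ℝ ℝ + g' • ContinuousLinearMap.snd ℝ ℝ ℝ) (u, v) :=
  (hf.comp_hasFDerivAt (u, v) hasFDerivAt_fst).add (hg.comp_hasFDerivAt (u, v) hasFDerivAt_snd)

lemma hasFDerivAt_bellman_zero (hp : 2 ≤ p) (hpq : p.HolderConjugate q) (hK : 1 ≤ K) :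
    HasFDerivAt (fun z : ℝ × ℝ => bellman p q K z.1 z.2) (0 : ℝ × ℝ →L[ℝ] ℝ) (0, 0) := by
  have hmajorant := hasFDerivAt_fst_add_snd ((hasDerivAt_abs_rpow 0 hpq.lt).const_mul (1 + K))
    ((hasDerivAt_abs_rpow 0 hpq.symm.lt).const_mul (1 + K))
  have hp0 : (0 : ℝ) ^ p = 0 := Real.zero_rpow hpq.ne_zero
  have hq0 : (0 : ℝ) ^ q = 0 := Real.zero_rpow hpq.symm.ne_zero
  have hzero : bellman p q K 0 0 = 0 :=
    le_antisymm (by simpa [hp0, hq0] using bellman_le hp hpq (by linarith : 0 ≤ K) 0 0)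
      (bellman_nonneg hpq hK 0 0)
  rw [hasFDerivAt_iff_isLittleO] at hmajorant ⊢
  refine Asymptotics.IsBigO.trans_isLittleO (Asymptotics.isBigO_of_le _ fun z => ?_) hmajorant
  simp only [abs_zero, hp0, hq0, hzero, mul_zero, zero_smul, add_zero, sub_zero,
    zero_apply]
  rw [Real.norm_of_nonneg (bellman_nonneg hpq hK _ _), ← mul_add]
  exact (bellman_le hp hpq (by linarith) _ _).trans (le_abs_self _)

lemma hasFDerivWithinAt_bellman_of_rpow_le (hpq : p.HolderConjugate q) (h : |v| ^ (q - 1) ≤ |u|) :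
    HasFDerivWithinAt (fun z : ℝ × ℝ => bellman p q K z.1 z.2)
      (bellmanDerivFst p q u v • ContinuousLinearMap.fst ℝ ℝ ℝ +
        bellmanDerivSnd q K u v • ContinuousLinearMap.snd ℝ ℝ ℝ)
      {z | |z.2| ^ (q - 1) ≤ |z.1|} (u, v) := by
  have hp := hpq.ne_zero
  have hderiv := (hasFDerivAt_fst_add_snd ((hasDerivAt_abs_rpow u hpq.lt).const_mul (2 / p))
    ((hasDerivAt_abs_rpow v hpq.symm.lt).const_mul K)).hasFDerivWithinAt
    (s := {z : ℝ × ℝ | |z.2| ^ (q - 1) ≤ |z.1|})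
  have hfst : bellmanDerivFst p q u v = 2 / p * (p * |u| ^ (p - 2) * u) := by
    rw [bellmanDerivFst, max_eq_left h]
    field_simp
  have hsnd : bellmanDerivSnd q K u v = K * (q * |v| ^ (q - 2) * v) := by
    rw [bellmanDerivSnd, truncInv_of_abs_le ((abs_signedPow_sub_two hpq.symm.lt v).trans_le h),
      signedPow]
    ring
  rw [hfst, hsnd]
  exact hderiv.congr (fun z hz => bellman_of_rpow_le hp hz) (bellman_of_rpow_le hp h)

lemma hasDerivAt_abs_rpow_of_ne_zero (hv : v ≠ 0) (t : ℝ) :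
    HasDerivAt (fun x : ℝ => |x| ^ t) (t * |v| ^ (t - 2) * v) v := by
  have hv' := abs_pos.2 hv
  refine ((hasDerivAt_abs hv).rpow_const (Or.inl hv'.ne')).congr_deriv ?_
  rw [show t - 1 = t - 2 + 1 by ring, Real.rpow_add_one hv'.ne']
  linear_combination t * |v| ^ (t - 2) * sign_mul_abs v

lemma hasFDerivWithinAt_bellman_of_le_rpow (hpq : p.HolderConjugate q) (hv : v ≠ 0)
    (h : |u| ≤ |v| ^ (q - 1)) :
    HasFDerivWithinAt (fun z : ℝ × ℝ => bellman p q K z.1 z.2)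
      (bellmanDerivFst p q u v • ContinuousLinearMap.fst ℝ ℝ ℝ +
        bellmanDerivSnd q K u v • ContinuousLinearMap.snd ℝ ℝ ℝ)
      {z | |z.1| ≤ |z.2| ^ (q - 1)} (u, v) := by
  have hp := hpq.ne_zero
  have hv' := abs_pos.2 hv
  have hfst : bellmanDerivFst p q u v = 2 * u * |v| ^ (2 - q) := by
    rw [bellmanDerivFst, max_eq_right h, abs_rpow_rpow_conj_sub_two hpq]
  have hinv : (signedPow (q - 2) v)⁻¹ = |v| ^ (-q) * v := by
    refine inv_eq_of_mul_eq_one_left ?_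
    calc |v| ^ (-q) * v * signedPow (q - 2) v = |v| ^ (-q) * (v * signedPow (q - 2) v) := by ring
      _ = 1 := by
        rw [self_mul_signedPow (by linarith [hpq.symm.lt]), ← Real.rpow_add hv']
        simp
  have hsnd : bellmanDerivSnd q K u v = u ^ 2 * ((2 - q) * |v| ^ (-q) * v) +
      (K - (1 - 2 / p)) * (q * |v| ^ (q - 2) * v) := by
    have hcoeff : (1 - 2 / p) * q = 2 - q := by
      field_simp
      linear_combination 2 * hpq.symm.sub_one_mul_conj
    rw [bellmanDerivSnd, truncInv_of_le_abs (h.trans_eq (abs_signedPow_sub_two hpq.symm.lt v).symm),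
      div_eq_mul_inv, hinv, signedPow]
    linear_combination (v * |v| ^ (q - 2)) * hcoeff
  have hsq := (hasDerivAt_pow 2 u).comp_hasFDerivAt (u, v) (hasFDerivAt_fst (𝕜 := ℝ))
  have hpow := (hasDerivAt_abs_rpow_of_ne_zero hv (2 - q)).comp_hasFDerivAt (u, v)
    (hasFDerivAt_snd (𝕜 := ℝ))
  have hlast := ((hasDerivAt_abs_rpow v hpq.symm.lt).const_mul (K - (1 - 2 / p))).comp_hasFDerivAt
    (u, v) (hasFDerivAt_snd (𝕜 := ℝ))
  refine (((hsq.mul hpow).add hlast).hasFDerivWithinAt.congr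
    (fun z hz => bellman_of_le_rpow hpq hz) (bellman_of_le_rpow hpq h)).congr_fderiv ?_
  rw [hfst, hsnd]
  ext
  · simp
    ring
  · simp

lemma hasFDerivAt_bellman (hp : 2 ≤ p) (hpq : p.HolderConjugate q) (hK : 1 ≤ K) (u v : ℝ) :
    HasFDerivAt (fun z : ℝ × ℝ => bellman p q K z.1 z.2)
      (bellmanDerivFst p q u v • ContinuousLinearMap.fst ℝ ℝ ℝ +
        bellmanDerivSnd q K u v • ContinuousLinearMap.snd ℝ ℝ ℝ) (u, v) := by
  have hq : 0 ≤ q - 1 := hpq.symm.sub_one_pos.le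
  have hq' : q - 1 ≠ 0 := hpq.symm.sub_one_pos.ne'
  by_cases h0 : u = 0 ∧ v = 0
  · obtain ⟨rfl, rfl⟩ := h0
    simpa [bellmanDerivFst, bellmanDerivSnd, signedPow, truncInv] using
      hasFDerivAt_bellman_zero hp hpq hK
  have hclosed : IsClosed {z : ℝ × ℝ | |z.2| ^ (q - 1) ≤ |z.1|} ∧
      IsClosed {z : ℝ × ℝ | |z.1| ≤ |z.2| ^ (q - 1)} := by
    have hcont : Continuous fun z : ℝ × ℝ => |z.2| ^ (q - 1) :=
      continuous_snd.abs.rpow_const fun _ => Or.inr hq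
    exact ⟨isClosed_le hcont continuous_fst.abs, isClosed_le continuous_fst.abs hcont⟩
  rw [← hasFDerivWithinAt_univ, ← Set.eq_univ_of_forall (fun z : ℝ × ℝ =>
    show z ∈ {z | |z.2| ^ (q - 1) ≤ |z.1|} ∪ {z | |z.1| ≤ |z.2| ^ (q - 1)} from
    le_total (|z.2| ^ (q - 1)) |z.1|)]
  refine .union ?_ ?_
  · by_cases h : |v| ^ (q - 1) ≤ |u|
    · exact hasFDerivWithinAt_bellman_of_rpow_le hpq h
    · exact .of_notMem_closure (by rwa [hclosed.1.closure_eq])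
  · by_cases h : |u| ≤ |v| ^ (q - 1)
    · refine hasFDerivWithinAt_bellman_of_le_rpow hpq (fun hv => h0 ⟨?_, hv⟩) h
      simpa [hv, Real.zero_rpow hq'] using h
    · exact .of_notMem_closure (by rwa [hclosed.2.closure_eq])

end Bellman

section IsBellmanFunction

variable {p q C : ℝ} {B B₁ B₂ : ℝ → ℝ → ℝ}

/-- A Bellman function for the exponents `p` and `q`: a convex function `B` of at most the growth
of `|u| ^ p + |v| ^ q` whose gradient `(B₁, B₂)` is so monotone that `B` controls products
`|du| * |dv|`. -/
structure IsBellmanFunction (p q C : ℝ) (B B₁ B₂ : ℝ → ℝ → ℝ) : Prop where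
  nonneg : ∀ u v, 0 ≤ B u v
  le : ∀ u v, B u v ≤ C * (|u| ^ p + |v| ^ q)
  hasFDerivAt : ∀ u v, HasFDerivAt (fun z : ℝ × ℝ => B z.1 z.2)
    (B₁ u v • ContinuousLinearMap.fst ℝ ℝ ℝ + B₂ u v • ContinuousLinearMap.snd ℝ ℝ ℝ) (u, v)
  mul_abs_sub_le : ∀ u v u' v', 2 * |u - u'| * |v - v'| ≤
    (u - u') * (B₁ u v - B₁ u' v') + (v - v') * (B₂ u v - B₂ u' v')

namespace IsBellmanFunction

lemma swap (h : IsBellmanFunction p q C B B₁ B₂) :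
    IsBellmanFunction q p C (fun u v => B v u) (fun u v => B₂ v u) fun u v => B₁ v u where
  nonneg u v := h.nonneg v u
  le u v := by simpa [add_comm] using h.le v u
  hasFDerivAt u v := by
    have hswap : HasFDerivAt Prod.swap _ (u, v) := (ContinuousLinearMap.snd ℝ ℝ ℝ |>.prod
      (ContinuousLinearMap.fst ℝ ℝ ℝ)).hasFDerivAt
    refine ((h.hasFDerivAt v u).comp (u, v) hswap).congr_fderiv ?_
    ext <;> simp
  mul_abs_sub_le u v u' v' := by linarith [h.mul_abs_sub_le v u v' u']

lemma hasDerivAt_comp (h : IsBellmanFunction p q C B B₁ B₂) {u v : ℝ → ℝ} {u' v' t : ℝ}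
    (hu : HasDerivAt u u' t) (hv : HasDerivAt v v' t) :
    HasDerivAt (fun t => B (u t) (v t)) (B₁ (u t) (v t) * u' + B₂ (u t) (v t) * v') t :=
  (HasFDerivAt.comp_hasDerivAt (f := fun t => (u t, v t)) t (h.hasFDerivAt (u t) (v t))
    (hu.prodMk hv)).congr_deriv (by simp)

end IsBellmanFunction

lemma exists_isBellmanFunction (hpq : p.HolderConjugate q) :
    ∃ C B B₁ B₂, 0 < C ∧ IsBellmanFunction p q C B B₁ B₂ := by
  wlog hp : 2 ≤ p generalizing p q
  · have hq : 2 ≤ q := by nlinarith [hpq.sub_one_mul_conj, hpq.lt, hpq.symm.lt]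
    obtain ⟨C, B, B₁, B₂, hC, h⟩ := this hpq.symm hq
    exact ⟨C, _, _, _, hC, h.swap⟩
  exact ⟨1 + 9 * p, bellman p q (9 * p), bellmanDerivFst p q, bellmanDerivSnd q (9 * p),
    by linarith, bellman_nonneg hpq (by linarith), bellman_le hp hpq (by linarith),
    hasFDerivAt_bellman hp hpq (by linarith),
    two_mul_abs_sub_mul_abs_sub_le_bellmanDeriv hp hpq le_rfl⟩

end IsBellmanFunction

/-! ### The discrete Hessian estimate -/

section DiscreteLaplacian

open Matrix

variable {G ι κ : Type*} [AddCommGroup G]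

/-- The operator `f ↦ f (· + e) + f (· - e) - 2 * f`. -/
def secondDifference (e : G) : Module.End ℝ (G → ℝ) :=
  LinearMap.funLeft ℝ ℝ (· + e) + LinearMap.funLeft ℝ ℝ (· - e) - (2 : ℝ) • 1

lemma secondDifference_apply (e : G) (f : G → ℝ) (x : G) :
    secondDifference e f x = f (x + e) + f (x - e) - 2 * f x := by
  simp [secondDifference, LinearMap.funLeft_apply]

lemma commute_secondDifference (e e' : G) :
    Commute (secondDifference e) (secondDifference e') := by
  refine LinearMap.ext fun f => funext fun x => ?_
  simp only [Module.End.mul_apply, secondDifference_apply, sub_add_eq_add_sub,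
    add_right_comm x e e', sub_right_comm x e e']
  ring

/-- The linear combination `∑ d, c d • secondDifference (e d)`; for `c = 1` it is the Laplacian of
the Cayley graph with generators `e`. -/
def discreteLaplacian [Fintype ι] (c : ι → ℝ) (e : ι → G) : Module.End ℝ (G → ℝ) :=
  ∑ d, c d • secondDifference (e d)

/-- The bilinear form of `-discreteLaplacian c e`. -/
def discreteDirichletForm [Fintype ι] [Fintype G] (c : ι → ℝ) (e : ι → G) (f g : G → ℝ) : ℝ :=
  ∑ d, c d * ∑ x, (f (x + e d) - f x) * (g (x + e d) - g x)

variable [Fintype ι] [Fintype κ]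

lemma discreteLaplacian_apply (c : ι → ℝ) (e : ι → G) (f : G → ℝ) (x : G) :
    discreteLaplacian c e f x = ∑ d, c d * (f (x + e d) + f (x - e d) - 2 * f x) := by
  simp [discreteLaplacian, secondDifference_apply]

lemma commute_discreteLaplacian (c : ι → ℝ) (e : ι → G) (c' : κ → ℝ) (e' : κ → G) :
    Commute (discreteLaplacian c e) (discreteLaplacian c' e') :=
  Commute.sum_left _ _ _ fun d _ => Commute.sum_right _ _ _ fun d' _ =>
    ((commute_secondDifference (e d) (e' d')).smul_left (c d)).smul_right (c' d')

variable [Fintype G]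

lemma discreteDirichletForm_comm (c : ι → ℝ) (e : ι → G) (f g : G → ℝ) :
    discreteDirichletForm c e f g = discreteDirichletForm c e g f := by
  simp only [discreteDirichletForm, mul_comm]

lemma dotProduct_secondDifference (e : G) (f g : G → ℝ) :
    g ⬝ᵥ secondDifference e f = -∑ x, (f (x + e) - f x) * (g (x + e) - g x) := by
  have shift : ∑ x, g x * (f x - f (x - e)) = ∑ x, g (x + e) * (f (x + e) - f x) := by
    rw [← Equiv.sum_comp (Equiv.addRight e)]
    simp
  have split : ∀ x, g x * secondDifference e f x =
      g x * (f (x + e) - f x) - g x * (f x - f (x - e)) := fun x => by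
    rw [secondDifference_apply]
    ring
  rw [dotProduct, Finset.sum_congr rfl fun x _ => split x, Finset.sum_sub_distrib, shift,
    ← Finset.sum_sub_distrib, ← Finset.sum_neg_distrib]
  exact Finset.sum_congr rfl fun x _ => by ring

lemma dotProduct_discreteLaplacian (c : ι → ℝ) (e : ι → G) (f g : G → ℝ) :
    g ⬝ᵥ discreteLaplacian c e f = -discreteDirichletForm c e f g := by
  simp [discreteLaplacian, discreteDirichletForm, LinearMap.sum_apply, dotProduct_sum,
    dotProduct_secondDifference]

lemma dotProduct_discreteLaplacian_comm (c : ι → ℝ) (e : ι → G) (f g : G → ℝ) :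
    g ⬝ᵥ discreteLaplacian c e f = f ⬝ᵥ discreteLaplacian c e g := by
  rw [dotProduct_discreteLaplacian, dotProduct_discreteLaplacian, discreteDirichletForm_comm]

lemma abs_discreteDirichletForm_le {c : ι → ℝ} (hc : ∀ d, |c d| ≤ 1) (e : ι → G) (f g : G → ℝ) :
    |discreteDirichletForm c e f g| ≤
      ∑ d, ∑ x, |f (x + e d) - f x| * |g (x + e d) - g x| := by
  refine (Finset.abs_sum_le_sum_abs _ _).trans (Finset.sum_le_sum fun d _ => ?_)
  rw [abs_mul]
  refine (mul_le_of_le_one_left (abs_nonneg _) (hc d)).trans ?_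
  simpa only [abs_mul] using Finset.abs_sum_le_sum_abs
    (fun x => (f (x + e d) - f x) * (g (x + e d) - g x)) Finset.univ

lemma abs_discreteDirichletForm_le_energy {c : ι → ℝ} (hc : ∀ d, |c d| ≤ 1) (e : ι → G)
    (f g : G → ℝ) :
    |discreteDirichletForm c e f g| ≤
      (discreteDirichletForm 1 e f f + discreteDirichletForm 1 e g g) / 2 := by
  refine (abs_discreteDirichletForm_le hc e f g).trans ?_
  simp only [discreteDirichletForm, Pi.one_apply, one_mul, ← Finset.sum_add_distrib,
    Finset.sum_div]
  gcongr with d _ x _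
  nlinarith [sq_nonneg (|f (x + e d) - f x| - |g (x + e d) - g x|), sq_abs (f (x + e d) - f x),
    sq_abs (g (x + e d) - g x)]

end DiscreteLaplacian

section DiscreteHeatFlow

open Matrix

lemma hasDerivAt_dotProduct {ι : Type*} [Fintype ι] {u v : ℝ → ι → ℝ} {u' v' : ι → ℝ} {t : ℝ}
    (hu : HasDerivAt u u' t) (hv : HasDerivAt v v' t) :
    HasDerivAt (fun t => u t ⬝ᵥ v t) (u' ⬝ᵥ v t + u t ⬝ᵥ v') t := by
  rw [hasDerivAt_pi] at hu hv
  exact (HasDerivAt.fun_sum (u := Finset.univ) fun i _ => (hu i).fun_mul (hv i)).congr_deriv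
    Finset.sum_add_distrib

variable {G ι : Type*} [AddCommGroup G] [Fintype ι] {e : ι → G} {U V : ℝ → G → ℝ}

/-- `U` solves the heat equation for the Laplacian with generators `e`. -/
def IsDiscreteHeatFlow (e : ι → G) (U : ℝ → G → ℝ) : Prop :=
  ∀ t, HasDerivAt U (discreteLaplacian 1 e (U t)) t

lemma exists_isDiscreteHeatFlow [Finite G] (e : ι → G) (φ : G → ℝ) :
    ∃ U, IsDiscreteHeatFlow e U ∧ U 0 = φ := by
  cases nonempty_fintype G
  let L : (G → ℝ) →L[ℝ] (G → ℝ) := LinearMap.toContinuousLinearMap (discreteLaplacian 1 e)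
  refine ⟨fun t => NormedSpace.exp (t • L) φ, fun t => ?_, by simp⟩
  exact HasFDerivAt.comp_hasDerivAt t (ContinuousLinearMap.apply ℝ (G → ℝ) φ).hasFDerivAt
    (hasDerivAt_exp_smul_const' (𝕂 := ℝ) L t)

namespace IsDiscreteHeatFlow

lemma map [Finite G] (hU : IsDiscreteHeatFlow e U) {A : Module.End ℝ (G → ℝ)}
    (hA : Commute A (discreteLaplacian 1 e)) : IsDiscreteHeatFlow e fun t => A (U t) := fun t => by
  cases nonempty_fintype G
  have h := HasFDerivAt.comp_hasDerivAt t (LinearMap.toContinuousLinearMap A).hasFDerivAt (hU t)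
  exact h.congr_deriv (LinearMap.congr_fun hA.eq (U t))

variable [Fintype G]

lemma hasDerivAt_dotProduct (hU : IsDiscreteHeatFlow e U) (hV : IsDiscreteHeatFlow e V) (t : ℝ) :
    HasDerivAt (fun t => U t ⬝ᵥ V t) (2 * (U t ⬝ᵥ discreteLaplacian 1 e (V t))) t := by
  refine (KornMaxwellSobolev.hasDerivAt_dotProduct (hU t) (hV t)).congr_deriv ?_
  rw [dotProduct_comm, dotProduct_discreteLaplacian_comm]
  ring

/-- The quantity `‖U t‖ ^ 2 + 2 * t * energy (U t)` is nonincreasing. -/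
lemma discreteDirichletForm_le (hU : IsDiscreteHeatFlow e U) {S : ℝ} (hS : 0 < S) :
    discreteDirichletForm 1 e (U S) (U S) ≤ (U 0 ⬝ᵥ U 0) / (2 * S) := by
  have hL := hU.map (Commute.refl (discreteLaplacian 1 e))
  have hnorm : ∀ t, HasDerivAt (fun t => U t ⬝ᵥ U t)
      (-(2 * discreteDirichletForm 1 e (U t) (U t))) t := fun t =>
    (hU.hasDerivAt_dotProduct hU t).congr_deriv (by rw [dotProduct_discreteLaplacian]; ring)
  have henergy : ∀ t, HasDerivAt (fun t => discreteDirichletForm 1 e (U t) (U t))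
      (-(2 * (discreteLaplacian 1 e (U t) ⬝ᵥ discreteLaplacian 1 e (U t)))) t := fun t => by
    have := (hU.hasDerivAt_dotProduct hL t).fun_neg
    simp only [dotProduct_discreteLaplacian, neg_neg] at this
    refine this.congr_deriv ?_
    rw [← dotProduct_discreteLaplacian, dotProduct_discreteLaplacian_comm]
  have hderiv : ∀ t, HasDerivAt
      (fun t => U t ⬝ᵥ U t + 2 * t * discreteDirichletForm 1 e (U t) (U t))
      (-(4 * t * (discreteLaplacian 1 e (U t) ⬝ᵥ discreteLaplacian 1 e (U t)))) t := fun t =>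
    ((hnorm t).fun_add (((hasDerivAt_id' t).const_mul 2).fun_mul (henergy t))).congr_deriv
      (by ring)
  have hanti : AntitoneOn (fun t => U t ⬝ᵥ U t + 2 * t * discreteDirichletForm 1 e (U t) (U t))
      (Set.Ici 0) := by
    refine antitoneOn_of_deriv_nonpos (convex_Ici 0)
      (fun t _ => (hderiv t).continuousAt.continuousWithinAt)
      (fun t _ => (hderiv t).differentiableAt.differentiableWithinAt) fun t ht => ?_
    rw [(hderiv t).deriv]
    have ht0 : 0 ≤ t := (interior_Ici (a := (0 : ℝ)) ▸ ht : t ∈ Set.Ioi 0).le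
    have := mul_nonneg ht0 (dotProduct_self_star_nonneg (discreteLaplacian 1 e (U t)))
    simp only [star_trivial] at this
    linarith
  have hle := hanti Set.self_mem_Ici hS.le hS.le
  have hnonneg := dotProduct_self_star_nonneg (U S)
  simp only [star_trivial, mul_zero, zero_mul, add_zero] at hle hnonneg
  rw [le_div_iff₀ (by positivity)]
  linarith

lemma abs_dotProduct_discreteLaplacian_le {c : ι → ℝ} (hc : ∀ d, |c d| ≤ 1)
    (hU : IsDiscreteHeatFlow e U) (hV : IsDiscreteHeatFlow e V) {S : ℝ} (hS : 0 < S) :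
    |discreteLaplacian c e (U S) ⬝ᵥ V S| ≤ (U 0 ⬝ᵥ U 0 + V 0 ⬝ᵥ V 0) / (4 * S) := by
  rw [dotProduct_comm, dotProduct_discreteLaplacian, abs_neg]
  calc |discreteDirichletForm c e (U S) (V S)|
      ≤ (discreteDirichletForm 1 e (U S) (U S) + discreteDirichletForm 1 e (V S) (V S)) / 2 :=
        abs_discreteDirichletForm_le_energy hc e _ _
    _ ≤ ((U 0 ⬝ᵥ U 0) / (2 * S) + (V 0 ⬝ᵥ V 0) / (2 * S)) / 2 := by
        gcongr
        · exact hU.discreteDirichletForm_le hS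
        · exact hV.discreteDirichletForm_le hS
    _ = (U 0 ⬝ᵥ U 0 + V 0 ⬝ᵥ V 0) / (4 * S) := by
        field_simp
        ring

lemma hasDerivAt_discreteLaplacian_dotProduct (hU : IsDiscreteHeatFlow e U)
    (hV : IsDiscreteHeatFlow e V) (c : ι → ℝ) (t : ℝ) :
    HasDerivAt (fun t => discreteLaplacian c e (U t) ⬝ᵥ V t)
      (-(2 * discreteDirichletForm c e (discreteLaplacian 1 e (U t)) (V t))) t := by
  have hA := commute_discreteLaplacian c e 1 e
  refine ((hU.map hA).hasDerivAt_dotProduct hV t).congr_deriv ?_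
  have hcomm := LinearMap.congr_fun hA.eq (U t)
  simp only [Module.End.mul_apply] at hcomm
  rw [dotProduct_discreteLaplacian_comm, ← hcomm, dotProduct_discreteLaplacian]
  ring

variable {p q C : ℝ} {B B₁ B₂ : ℝ → ℝ → ℝ}

/-- Summation by parts turns the derivative into a sum over edges, which the Bellman property
bounds edge by edge. -/
lemma exists_hasDerivAt_sum_bellman (hB : IsBellmanFunction p q C B B₁ B₂)
    (hU : IsDiscreteHeatFlow e U) (hV : IsDiscreteHeatFlow e V) (t : ℝ) :
    ∃ R', HasDerivAt (fun t => ∑ x, B (U t x) (V t x)) R' t ∧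
      ∀ c : ι → ℝ, (∀ d, |c d| ≤ 1) → 2 * |discreteDirichletForm c e (U t) (V t)| ≤ -R' := by
  refine ⟨_, HasDerivAt.fun_sum (u := Finset.univ) fun x _ =>
    hB.hasDerivAt_comp (hasDerivAt_pi.1 (hU t) x) (hasDerivAt_pi.1 (hV t) x), fun c hc => ?_⟩
  have hparts : -∑ x, (B₁ (U t x) (V t x) * discreteLaplacian 1 e (U t) x +
      B₂ (U t x) (V t x) * discreteLaplacian 1 e (V t) x) =
      discreteDirichletForm 1 e (U t) (fun x => B₁ (U t x) (V t x)) +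
        discreteDirichletForm 1 e (V t) (fun x => B₂ (U t x) (V t x)) := by
    rw [Finset.sum_add_distrib, neg_add]
    exact congrArg₂ (· + ·)
      (neg_eq_iff_eq_neg.2 (dotProduct_discreteLaplacian 1 e (U t) fun x => B₁ (U t x) (V t x)))
      (neg_eq_iff_eq_neg.2 (dotProduct_discreteLaplacian 1 e (V t) fun x => B₂ (U t x) (V t x)))
  rw [hparts]
  calc 2 * |discreteDirichletForm c e (U t) (V t)|
      ≤ 2 * ∑ d, ∑ x, |U t (x + e d) - U t x| * |V t (x + e d) - V t x| := by
        gcongr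
        exact abs_discreteDirichletForm_le hc e _ _
    _ ≤ _ := by
        simp only [discreteDirichletForm, Pi.one_apply, one_mul, ← Finset.sum_add_distrib,
          Finset.mul_sum, ← mul_assoc]
        gcongr with d _ x _
        exact hB.mul_abs_sub_le _ _ _ _

lemma mul_dotProduct_le_add_mul_dotProduct (hB : IsBellmanFunction p q C B B₁ B₂)
    (hU : IsDiscreteHeatFlow e U) (hV : IsDiscreteHeatFlow e V) {c : ι → ℝ}
    (hc : ∀ d, |c d| ≤ 1) {σ S : ℝ} (hσ : |σ| = 1) (hS : 0 ≤ S) :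
    σ * (discreteLaplacian c e (U 0) ⬝ᵥ V 0) ≤
      ∑ x, B (discreteLaplacian 1 e (U 0) x) (V 0 x) +
        σ * (discreteLaplacian c e (U S) ⬝ᵥ V S) := by
  choose R' hR' hle using
    exists_hasDerivAt_sum_bellman hB (hU.map (Commute.refl (discreteLaplacian 1 e))) hV
  have hderiv := fun t =>
    (hR' t).fun_sub ((hU.hasDerivAt_discreteLaplacian_dotProduct hV c t).const_mul σ)
  have hanti := antitone_of_deriv_nonpos (fun t => (hderiv t).differentiableAt) fun t => by
    rw [(hderiv t).deriv]
    have hform := hle t c hc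
    have habs := le_abs_self
      (σ * discreteDirichletForm c e (discreteLaplacian 1 e (U t)) (V t))
    rw [abs_mul, hσ] at habs
    linarith
  have hnonneg : 0 ≤ ∑ x, B (discreteLaplacian 1 e (U S) x) (V S x) :=
    Finset.sum_nonneg fun x _ => hB.nonneg _ _
  have := hanti hS
  simp only at this
  linarith

end IsDiscreteHeatFlow

lemma IsBellmanFunction.abs_discreteLaplacian_dotProduct_le [Fintype G] {p q C : ℝ}
    {B B₁ B₂ : ℝ → ℝ → ℝ} (hB : IsBellmanFunction p q C B B₁ B₂) {c : ι → ℝ}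
    (hc : ∀ d, |c d| ≤ 1) (e : ι → G) (φ ψ : G → ℝ) :
    |discreteLaplacian c e φ ⬝ᵥ ψ| ≤
      C * (∑ x, |discreteLaplacian 1 e φ x| ^ p + ∑ x, |ψ x| ^ q) := by
  obtain ⟨U, hU, rfl⟩ := exists_isDiscreteHeatFlow e φ
  obtain ⟨V, hV, rfl⟩ := exists_isDiscreteHeatFlow e ψ
  have hlim : Filter.Tendsto (fun S : ℝ => ∑ x, B (discreteLaplacian 1 e (U 0) x) (V 0 x) +
      (U 0 ⬝ᵥ U 0 + V 0 ⬝ᵥ V 0) / (4 * S)) Filter.atTop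
      (nhds (∑ x, B (discreteLaplacian 1 e (U 0) x) (V 0 x) + 0)) :=
    tendsto_const_nhds.add (Filter.Tendsto.const_div_atTop
      (Filter.Tendsto.const_mul_atTop (by norm_num) Filter.tendsto_id) _)
  rw [add_zero] at hlim
  calc |discreteLaplacian c e (U 0) ⬝ᵥ V 0|
      ≤ ∑ x, B (discreteLaplacian 1 e (U 0) x) (V 0 x) := by
        refine ge_of_tendsto hlim ?_
        filter_upwards [Filter.eventually_gt_atTop 0] with S hS
        have hpos := hU.mul_dotProduct_le_add_mul_dotProduct hB hV hc abs_one hS.le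
        have hneg := hU.mul_dotProduct_le_add_mul_dotProduct hB hV hc (σ := -1) (by simp) hS.le
        have hdecay := abs_le.1 (hU.abs_dotProduct_discreteLaplacian_le hc hV hS)
        rw [abs_le]
        constructor <;> linarith
    _ ≤ C * (∑ x, |discreteLaplacian 1 e (U 0) x| ^ p + ∑ x, |V 0 x| ^ q) := by
        rw [← Finset.sum_add_distrib, Finset.mul_sum]
        exact Finset.sum_le_sum fun x _ => hB.le _ _

end DiscreteHeatFlow

universe u v in
/-- The constant depends neither on the group nor on the number of generators, which is what
makes the passage to `ℝ^n` possible. -/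
lemma exists_sum_abs_discreteLaplacian_rpow_le {p q : ℝ} (hpq : p.HolderConjugate q) :
    ∃ C : ℝ, 0 < C ∧
      ∀ (G : Type u) (ι : Type v) [AddCommGroup G] [Fintype G] [Fintype ι] (e : ι → G) (c : ι → ℝ),
      (∀ d, |c d| ≤ 1) → ∀ φ : G → ℝ,
      ∑ x, |discreteLaplacian c e φ x| ^ p ≤ C * ∑ x, |discreteLaplacian 1 e φ x| ^ p := by
  obtain ⟨C, B, B₁, B₂, hC, hB⟩ := exists_isBellmanFunction hpq
  have hq := hpq.symm.sub_one_pos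
  obtain ⟨t, ht, hts⟩ : ∃ t : ℝ, 0 < t ∧ C * t ^ q = t / 2 := by
    refine ⟨(1 / (2 * C)) ^ (q - 1)⁻¹, by positivity, ?_⟩
    rw [show ∀ x : ℝ, x ^ q = x ^ (q - 1 + 1) by simp, Real.rpow_add_one (by positivity),
      Real.rpow_inv_rpow (by positivity) hq.ne']
    field_simp
  refine ⟨2 * C / t, by positivity, fun G ι _ _ _ e c hc φ => ?_⟩
  set A := discreteLaplacian c e φ
  have hbilinear := hB.abs_discreteLaplacian_dotProduct_le hc e φ
    fun x => t * signedPow (p - 2) (A x)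
  have hleft : A ⬝ᵥ (fun x => t * signedPow (p - 2) (A x)) = t * ∑ x, |A x| ^ p := by
    rw [Finset.mul_sum]
    refine Finset.sum_congr rfl fun x _ => ?_
    rw [mul_left_comm, self_mul_signedPow (by linarith [hpq.pos])]
    ring_nf
  have hright : ∑ x, |t * signedPow (p - 2) (A x)| ^ q = t ^ q * ∑ x, |A x| ^ p := by
    rw [Finset.mul_sum]
    refine Finset.sum_congr rfl fun x _ => ?_
    rw [abs_mul, abs_of_pos ht, Real.mul_rpow ht.le (abs_nonneg _),
      abs_signedPow_sub_two hpq.lt, abs_rpow_rpow_conj hpq.symm]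
  rw [hleft, hright] at hbilinear
  rw [div_mul_eq_mul_div, le_div_iff₀ ht]
  linear_combination 2 * (le_abs_self _).trans hbilinear + 2 * (∑ x, |A x| ^ p) * hts

section Lattice

lemma tsum_mapDomain {G H : Type*} {π : G → H} {f : G →₀ ℝ} (hπ : Set.InjOn π f.support)
    {F : ℝ → ℝ≥0∞} (hF : F 0 = 0) : ∑' z, F (f.mapDomain π z) = ∑' x, F (f x) := by
  classical
  have hsupport : ∀ x ∉ f.support, F (f x) = 0 := fun x hx => by
    rw [Finsupp.notMem_support_iff.1 hx, hF]
  rw [tsum_eq_sum hsupport, tsum_eq_sum (s := f.support.image π) fun z hz => ?_,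
    Finset.sum_image hπ]
  · exact Finset.sum_congr rfl fun x hx => by rw [Finsupp.mapDomain_apply' _ f subset_rfl hπ hx]
  · rw [← Finsupp.mapDomain_support_of_injOn f hπ, Finsupp.notMem_support_iff] at hz
    rw [hz, hF]

lemma exists_injOn_intCast_zmod {ι : Type*} [Finite ι] (T : Finset (ι → ℤ)) :
    ∃ M : ℕ, M ≠ 0 ∧ Set.InjOn (fun (k : ι → ℤ) i => (k i : ZMod M)) T := by
  cases nonempty_fintype ι
  obtain ⟨M, hM⟩ := ((T ×ˢ T ×ˢ Finset.univ).image
    fun k : (ι → ℤ) × (ι → ℤ) × ι => (k.2.1 k.2.2 - k.1 k.2.2).natAbs).bddAbove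
  refine ⟨M + 1, M.succ_ne_zero, fun k hk l hl hkl => funext fun i => ?_⟩
  have hlt : (l i - k i).natAbs < M + 1 := Nat.lt_succ_of_le <| hM <|
    Finset.mem_image_of_mem _ (Finset.mk_mem_product hk
      (Finset.mk_mem_product hl (Finset.mem_univ i)))
  have hdvd := (ZMod.intCast_eq_intCast_iff_dvd_sub _ _ _).1 (congrFun hkl i)
  have := Int.eq_zero_of_abs_lt_dvd hdvd (by rw [Int.abs_eq_natAbs]; exact_mod_cast hlt)
  lia

lemma sum_enorm_rpow_eq_ofReal {G : Type*} [Fintype G] {p : ℝ} (hp : 0 ≤ p) (f : G → ℝ) :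
    ∑ x, ‖f x‖ₑ ^ p = ENNReal.ofReal (∑ x, |f x| ^ p) := by
  rw [ENNReal.ofReal_sum_of_nonneg fun _ _ => by positivity]
  refine Finset.sum_congr rfl fun x _ => ?_
  rw [Real.enorm_eq_ofReal_abs, ENNReal.ofReal_rpow_of_nonneg (abs_nonneg _) hp]

variable {G H ι κ : Type*} [AddCommGroup G] [AddCommGroup H] [Fintype κ]

/-- `discreteLaplacian` as an operator on finitely supported functions, which can be pushed forward
along group homomorphisms. -/
noncomputable def finsuppLaplacian (c : κ → ℝ) (e : κ → G) : Module.End ℝ (G →₀ ℝ) :=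
  ∑ d, c d • (Finsupp.lmapDomain ℝ ℝ (Equiv.subRight (e d)) +
    Finsupp.lmapDomain ℝ ℝ (Equiv.addRight (e d)) - (2 : ℝ) • 1)

lemma finsuppLaplacian_apply (c : κ → ℝ) (e : κ → G) (f : G →₀ ℝ) (x : G) :
    finsuppLaplacian c e f x = discreteLaplacian c e f x := by
  simp only [finsuppLaplacian, discreteLaplacian_apply, LinearMap.sum_apply,
    Finsupp.finsetSum_apply, LinearMap.smul_apply, Finsupp.smul_apply, smul_eq_mul,
    LinearMap.sub_apply, LinearMap.add_apply, Finsupp.sub_apply, Finsupp.add_apply,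
    Finsupp.lmapDomain_apply, Finsupp.mapDomain_equiv_apply, Module.End.one_apply]
  simp [sub_eq_add_neg]

lemma mapDomain_finsuppLaplacian (π : G →+ H) (c : κ → ℝ) (e : κ → G) (f : G →₀ ℝ) :
    (finsuppLaplacian c e f).mapDomain π = finsuppLaplacian c (π ∘ e) (f.mapDomain π) := by
  change Finsupp.lmapDomain ℝ ℝ π _ = _
  simp only [finsuppLaplacian, LinearMap.sum_apply, map_sum, LinearMap.smul_apply, map_smul,
    LinearMap.sub_apply, LinearMap.add_apply, map_sub, map_add, Finsupp.lmapDomain_apply,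
    Module.End.one_apply, ← Finsupp.mapDomain_comp]
  refine Finset.sum_congr rfl fun d _ => ?_
  congr 5 <;> ext x <;> simp

variable (ι κ) in
/-- A finitely supported function on `ℤ^ι` pushes forward injectively to a large enough finite
quotient `(ℤ / M)^ι`. -/
lemma exists_tsum_enorm_discreteLaplacian_rpow_le [Finite ι] {p q : ℝ}
    (hpq : p.HolderConjugate q) :
    ∃ C : ℝ, 0 < C ∧ ∀ (e : κ → ι → ℤ) (c : κ → ℝ), (∀ d, |c d| ≤ 1) → ∀ f : (ι → ℤ) →₀ ℝ,
      ∑' k, ‖discreteLaplacian c e f k‖ₑ ^ p ≤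
        ENNReal.ofReal C * ∑' k, ‖discreteLaplacian 1 e f k‖ₑ ^ p := by
  classical
  cases nonempty_fintype ι
  obtain ⟨C, hC, hfinite⟩ := exists_sum_abs_discreteLaplacian_rpow_le hpq
  refine ⟨C, hC, fun e c hc f => ?_⟩
  obtain ⟨M, hM, hinj⟩ := exists_injOn_intCast_zmod
    ((finsuppLaplacian c e f).support ∪ (finsuppLaplacian 1 e f).support)
  have : NeZero M := ⟨hM⟩
  rw [Finset.coe_union] at hinj
  let π : (ι → ℤ) →+ (ι → ZMod M) := ((Int.castRingHom (ZMod M)).compLeft ι).toAddMonoidHom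
  have hzero : ‖(0 : ℝ)‖ₑ ^ p = 0 := by simp [hpq.pos]
  have hsum : ∀ c : κ → ℝ, Set.InjOn π (finsuppLaplacian c e f).support →
      ∑' k, ‖discreteLaplacian c e f k‖ₑ ^ p =
        ENNReal.ofReal (∑ z, |discreteLaplacian c (π ∘ e) (f.mapDomain π) z| ^ p) := by
    intro c hc
    simp only [← finsuppLaplacian_apply]
    rw [← tsum_mapDomain hc (F := fun t => ‖t‖ₑ ^ p) hzero, tsum_fintype,
      sum_enorm_rpow_eq_ofReal hpq.pos.le, mapDomain_finsuppLaplacian]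
  rw [hsum c (hinj.mono Set.subset_union_left), hsum 1 (hinj.mono Set.subset_union_right),
    ← ENNReal.ofReal_mul hC.le]
  exact ENNReal.ofReal_le_ofReal (hfinite _ _ _ _ hc _)

end Lattice

section Unfolding

variable {E ι κ : Type*} [NormedAddCommGroup E] [NormedSpace ℝ E] [Fintype ι] [Fintype κ]

lemma discreteLaplacian_comp_add {G H : Type*} [AddCommGroup G] [AddCommGroup H] (π : G →+ H)
    (c : κ → ℝ) (e : κ → G) (f : H → ℝ) (x : H) (k : G) :
    discreteLaplacian c e (fun k => f (x + π k)) k = discreteLaplacian c (π ∘ e) f (x + π k) := by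
  simp [discreteLaplacian_apply, add_assoc, sub_eq_add_neg]

lemma finite_support_comp_add_linearCombination (b : Module.Basis ι ℝ E)
    {f : E → ℝ} (hf : HasCompactSupport f) (x : E) :
    (Function.support fun k => f (x + Fintype.linearCombination ℤ b k)).Finite := by
  have := b.finiteDimensional_of_finite
  have hbounded : Bornology.IsBounded ((x + ·) ⁻¹' tsupport f) :=
    ((Homeomorph.addLeft x).isCompact_preimage.2 hf.isCompact).isBounded
  have hinj : Function.Injective (Fintype.linearCombination ℤ b) :=
    (b.linearIndependent.restrict_scalars
      fun m n h => by simpa using h).fintypeLinearCombination_injective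
  refine ((ZSpan.setFinite_inter b hbounded).preimage hinj.injOn).subset fun k hk =>
    ⟨subset_tsupport f hk, ?_⟩
  rw [← Fintype.range_linearCombination]
  exact LinearMap.mem_range_self _ k

variable [MeasurableSpace E] [BorelSpace E] (μ : Measure E) [μ.IsAddHaarMeasure]

lemma lintegral_eq_setLIntegral_tsum_linearCombination (b : Module.Basis ι ℝ E) {f : E → ℝ≥0∞}
    (hf : Measurable f) :
    ∫⁻ x, f x ∂μ = ∫⁻ x in ZSpan.fundamentalDomain b,
      ∑' k : ι → ℤ, f (x + Fintype.linearCombination ℤ b k) ∂μ := by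
  have : VAddInvariantMeasure (Submodule.span ℤ (Set.range b)) E μ :=
    ⟨fun c s _ => measure_preimage_add μ (c : E) s⟩
  let L : (ι → ℤ) ≃ Submodule.span ℤ (Set.range b) :=
    (b.restrictScalars ℤ).equivFun.symm.toEquiv
  have hL : ∀ k, (L k : E) = Fintype.linearCombination ℤ b k := fun k => by
    simp [L, Module.Basis.equivFun_symm_apply, Fintype.linearCombination_apply]
  have : Countable (Submodule.span ℤ (Set.range b)) := L.countable_iff.1 inferInstance
  rw [(ZSpan.isAddFundamentalDomain b μ).lintegral_eq_tsum'',
    lintegral_tsum fun k => by fun_prop, ← L.tsum_eq]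
  refine tsum_congr fun k => lintegral_congr fun x => ?_
  rw [Submodule.vadd_def, hL, vadd_eq_add, add_comm]

variable (ι κ) in
lemma exists_lintegral_enorm_discreteLaplacian_rpow_le {p q : ℝ}
    (hpq : p.HolderConjugate q) :
    ∃ C : ℝ, 0 < C ∧ ∀ (b : Module.Basis ι ℝ E) (e : κ → ι → ℤ) (c : κ → ℝ), (∀ d, |c d| ≤ 1) →
      ∀ f : E → ℝ, Continuous f → HasCompactSupport f →
      ∫⁻ x, ‖discreteLaplacian c (Fintype.linearCombination ℤ b ∘ e) f x‖ₑ ^ p ∂μ ≤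
        ENNReal.ofReal C *
          ∫⁻ x, ‖discreteLaplacian 1 (Fintype.linearCombination ℤ b ∘ e) f x‖ₑ ^ p ∂μ := by
  obtain ⟨C, hC, hlattice⟩ := exists_tsum_enorm_discreteLaplacian_rpow_le ι κ hpq
  refine ⟨C, hC, fun b e c hc f hf hsupp => ?_⟩
  have hmeas : ∀ c : κ → ℝ, Measurable fun x =>
      ‖discreteLaplacian c (Fintype.linearCombination ℤ b ∘ e) f x‖ₑ ^ p := fun c => by
    simp only [discreteLaplacian_apply]
    fun_prop
  rw [lintegral_eq_setLIntegral_tsum_linearCombination μ b (hmeas c),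
    lintegral_eq_setLIntegral_tsum_linearCombination μ b (hmeas 1),
    ← lintegral_const_mul' _ _ ENNReal.ofReal_ne_top]
  refine lintegral_mono fun x => ?_
  have h := hlattice e c hc
    (Finsupp.ofSupportFinite _ (finite_support_comp_add_linearCombination b hsupp x))
  simpa only [Finsupp.ofSupportFinite_coe, ← LinearMap.toAddMonoidHom_coe,
    discreteLaplacian_comp_add] using h

end Unfolding

/-! ### The Calderón–Zygmund estimate -/

section SecondDerivative

open Filter Topology

variable {E κ : Type*} [NormedAddCommGroup E] [NormedSpace ℝ E] [Fintype κ]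
  {φ : E → ℝ} {c : κ → ℝ} {v : κ → E}

/-- The operator `∑ d, c d • ∂²/∂(v d)²`, the continuous counterpart of `discreteLaplacian`. -/
noncomputable def directionalLaplacian (c : κ → ℝ) (v : κ → E) (φ : E → ℝ) (x : E) : ℝ :=
  ∑ d, c d * fderiv ℝ (fderiv ℝ φ) x (v d) (v d)

lemma continuous_fderiv_fderiv (hφ : ContDiff ℝ 2 φ) : Continuous (fderiv ℝ (fderiv ℝ φ)) :=
  (hφ.fderiv_right (m := 1) (by norm_num)).continuous_fderiv (by norm_num)

lemma hasDerivAt_comp_add_smul {F : Type*} [NormedAddCommGroup F] [NormedSpace ℝ F] {f : E → F}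
    (hf : Differentiable ℝ f) (x v : E) (t : ℝ) :
    HasDerivAt (fun t : ℝ => f (x + t • v)) (fderiv ℝ f (x + t • v) v) t := by
  have hline : HasDerivAt (fun t : ℝ => x + t • v) v t := by
    simpa using ((hasDerivAt_id t).smul_const v).const_add x
  exact (hf _).hasFDerivAt.comp_hasDerivAt t hline

lemma exists_secondDifference_smul_eq (hφ : ContDiff ℝ 2 φ) (x v : E) {t : ℝ} (ht : 0 < t) :
    ∃ ξ ∈ Set.Ioo 0 t, secondDifference (t • v) φ x = t ^ 2 *
      ((fderiv ℝ (fderiv ℝ φ) (x + ξ • v) v v + fderiv ℝ (fderiv ℝ φ) (x + ξ • -v) v v) / 2) := by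
  have hdiff : Differentiable ℝ φ := hφ.differentiable (by norm_num)
  have hdiff' : Differentiable ℝ (fderiv ℝ φ) :=
    (hφ.fderiv_right (m := 1) (by norm_num)).differentiable (by norm_num)
  set g : ℝ → ℝ := fun s => φ (x + s • v) + φ (x + s • -v)
  set g' : ℝ → ℝ := fun s => fderiv ℝ φ (x + s • v) v + fderiv ℝ φ (x + s • -v) (-v)
  have hg : ∀ s, HasDerivAt g (g' s) s := fun s =>
    (hasDerivAt_comp_add_smul hdiff x v s).add (hasDerivAt_comp_add_smul hdiff x (-v) s)
  have hg' : ∀ s, HasDerivAt g' (fderiv ℝ (fderiv ℝ φ) (x + s • v) v v +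
      fderiv ℝ (fderiv ℝ φ) (x + s • -v) (-v) (-v)) s := fun s =>
    ((hasDerivAt_comp_add_smul hdiff' x v s).clm_apply (hasDerivAt_const s v)).add
      ((hasDerivAt_comp_add_smul hdiff' x (-v) s).clm_apply (hasDerivAt_const s (-v)))
      |>.congr_deriv (by simp)
  obtain ⟨η, hη, hratio⟩ := exists_ratio_hasDerivAt_eq_ratio_slope g g' ht
    (fun s _ => (hg s).continuousAt.continuousWithinAt) (fun s _ => hg s) (fun s => s ^ 2)
    (fun s => 2 * s) (by fun_prop) fun s _ => by simpa using hasDerivAt_pow 2 s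
  obtain ⟨ξ, hξ, hslope⟩ := exists_hasDerivAt_eq_slope g' _ hη.1
    (fun s _ => (hg' s).continuousAt.continuousWithinAt) fun s _ => hg' s
  have hg₀ : g' 0 = 0 := by simp [g']
  refine ⟨ξ, ⟨hξ.1, hξ.2.trans hη.2⟩, ?_⟩
  have hη₀ : η ≠ 0 := hη.1.ne'
  simp only [hg₀, sub_zero, map_neg, neg_apply, neg_neg] at hslope
  rw [hslope, secondDifference_apply, sub_eq_add_neg x, ← smul_neg]
  simp only [g, zero_smul, add_zero] at hratio
  field_simp
  linarith

lemma tendsto_inv_sq_mul_secondDifference (hφ : ContDiff ℝ 2 φ) (x v : E) :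
    Tendsto (fun t : ℝ => (t ^ 2)⁻¹ * secondDifference (t • v) φ x) (𝓝[>] 0)
      (𝓝 (fderiv ℝ (fderiv ℝ φ) x v v)) := by
  have := continuous_fderiv_fderiv hφ
  set D : ℝ → ℝ := fun ξ =>
    (fderiv ℝ (fderiv ℝ φ) (x + ξ • v) v v + fderiv ℝ (fderiv ℝ φ) (x + ξ • -v) v v) / 2
  have hD : Tendsto D (𝓝 0) (𝓝 (fderiv ℝ (fderiv ℝ φ) x v v)) := by
    have : Continuous D := by fun_prop
    simpa [D] using this.tendsto 0
  have hmean := fun t : ℝ => exists_secondDifference_smul_eq hφ x v (t := t)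
  choose! ξ hξ hmean using hmean
  have hlim : Tendsto ξ (𝓝[>] 0) (𝓝 0) :=
    tendsto_of_tendsto_of_tendsto_of_le_of_le' tendsto_const_nhds
      (tendsto_id.mono_left nhdsWithin_le_nhds)
      (eventually_mem_nhdsWithin.mono fun t ht => (hξ t ht).1.le)
      (eventually_mem_nhdsWithin.mono fun t ht => (hξ t ht).2.le)
  refine (hD.comp hlim).congr' (eventually_mem_nhdsWithin.mono fun t ht => ?_)
  have ht₀ : 0 < t := ht
  simp only [hmean t ht₀, Function.comp_apply, D]
  field_simp

lemma tendsto_inv_sq_mul_discreteLaplacian (hφ : ContDiff ℝ 2 φ) (x : E) :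
    Tendsto (fun t : ℝ => (t ^ 2)⁻¹ * discreteLaplacian c (t • v) φ x) (𝓝[>] 0)
      (𝓝 (directionalLaplacian c v φ x)) := by
  simp only [discreteLaplacian_apply, ← secondDifference_apply, Finset.mul_sum,
    mul_left_comm _ (c _)]
  exact tendsto_finsetSum _ fun d _ =>
    (tendsto_inv_sq_mul_secondDifference hφ x (v d)).const_mul (c d)

lemma exists_abs_inv_sq_mul_discreteLaplacian_le (hφ : ContDiff ℝ 2 φ)
    (hsupp : HasCompactSupport φ) :
    ∃ M, ∀ t > 0, ∀ x, |(t ^ 2)⁻¹ * discreteLaplacian c (t • v) φ x| ≤ M := by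
  have hbound : ∀ w, ∃ M, ∀ y, |fderiv ℝ (fderiv ℝ φ) y w w| ≤ M := fun w => by
    have := continuous_fderiv_fderiv hφ
    exact Continuous.bounded_above_of_compact_support (by fun_prop)
      (((hsupp.fderiv ℝ).fderiv ℝ).comp_left
        (g := fun L : E →L[ℝ] E →L[ℝ] ℝ => L w w) (by simp))
  choose M hM using hbound
  refine ⟨∑ d, |c d| * M (v d), fun t ht x => ?_⟩
  simp only [discreteLaplacian_apply, ← secondDifference_apply, Finset.mul_sum,
    mul_left_comm _ (c _)]
  refine (Finset.abs_sum_le_sum_abs _ _).trans (Finset.sum_le_sum fun d _ => ?_)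
  obtain ⟨ξ, -, hξ⟩ := exists_secondDifference_smul_eq hφ x (v d) ht
  rw [Pi.smul_apply, hξ, inv_mul_cancel_left₀ (pow_pos ht 2).ne', abs_mul, abs_div, abs_two]
  gcongr
  linarith [abs_add_le (fderiv ℝ (fderiv ℝ φ) (x + ξ • v d) (v d) (v d))
    (fderiv ℝ (fderiv ℝ φ) (x + ξ • -v d) (v d) (v d)), hM (v d) (x + ξ • v d),
    hM (v d) (x + ξ • -v d)]

lemma discreteLaplacian_smul_eq_zero_of_notMem_cthickening {t : ℝ} (ht : t ∈ Set.Ioc 0 1) {x : E}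
    (hx : x ∉ Metric.cthickening (∑ d, ‖v d‖) (tsupport φ)) :
    discreteLaplacian c (t • v) φ x = 0 := by
  have hzero : ∀ y, ‖y‖ ≤ ∑ d, ‖v d‖ → φ (x + y) = 0 := fun y hy => by
    by_contra h
    exact hx (Metric.mem_cthickening_of_dist_le _ _ _ _ (subset_tsupport φ h) (by simpa using hy))
  have hv : ∀ d, ‖t • v d‖ ≤ ∑ d, ‖v d‖ := fun d => by
    rw [norm_smul, Real.norm_of_nonneg ht.1.le]
    exact (mul_le_of_le_one_left (norm_nonneg _) ht.2).trans
      (Finset.single_le_sum (f := fun d => ‖v d‖) (fun _ _ => norm_nonneg _) (Finset.mem_univ d))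
  have hx₀ : φ x = 0 := by
    simpa using hzero 0 (by simpa using Finset.sum_nonneg fun d _ => norm_nonneg (v d))
  rw [discreteLaplacian_apply]
  refine Finset.sum_eq_zero fun d _ => ?_
  rw [sub_eq_add_neg x, Pi.smul_apply, hzero _ (hv d), hzero _ ((norm_neg _).trans_le (hv d)), hx₀]
  simp

variable [FiniteDimensional ℝ E] [MeasurableSpace E] [BorelSpace E] (μ : Measure E)

lemma tendsto_lintegral_enorm_discreteLaplacian_rpow [IsFiniteMeasureOnCompacts μ]
    (hφ : ContDiff ℝ 2 φ) (hsupp : HasCompactSupport φ) {p : ℝ} (hp : 0 < p) :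
    Tendsto (fun t : ℝ => ‖(t ^ 2)⁻¹‖ₑ ^ p * ∫⁻ x, ‖discreteLaplacian c (t • v) φ x‖ₑ ^ p ∂μ)
      (𝓝[>] 0) (𝓝 (∫⁻ x, ‖directionalLaplacian c v φ x‖ₑ ^ p ∂μ)) := by
  have hcont := hφ.continuous
  obtain ⟨M, hM⟩ := exists_abs_inv_sq_mul_discreteLaplacian_le (c := c) (v := v) hφ hsupp
  set K := Metric.cthickening (∑ d, ‖v d‖) (tsupport φ)
  have hK : IsCompact K := hsupp.isCompact.cthickening
  have hpull : ∀ t : ℝ, ‖(t ^ 2)⁻¹‖ₑ ^ p * ∫⁻ x, ‖discreteLaplacian c (t • v) φ x‖ₑ ^ p ∂μ =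
      ∫⁻ x, ‖(t ^ 2)⁻¹ * discreteLaplacian c (t • v) φ x‖ₑ ^ p ∂μ := fun t => by
    rw [← lintegral_const_mul' _ _ (by finiteness)]
    simp only [enorm_mul, ENNReal.mul_rpow_of_nonneg _ _ hp.le]
  simp only [hpull]
  refine tendsto_lintegral_filter_of_dominated_convergence
    (K.indicator fun _ => ENNReal.ofReal M ^ p) ?_ ?_ ?_ ?_
  · refine Eventually.of_forall fun t => ?_
    simp only [discreteLaplacian_apply]
    fun_prop
  · filter_upwards [Ioc_mem_nhdsGT one_pos] with t ht
    refine Eventually.of_forall fun x => ?_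
    by_cases hx : x ∈ K
    · rw [Set.indicator_of_mem hx, Real.enorm_eq_ofReal_abs]
      gcongr
      exact hM t ht.1 x
    · simp [discreteLaplacian_smul_eq_zero_of_notMem_cthickening ht hx, hp]
  · rw [lintegral_indicator hK.measurableSet, setLIntegral_const]
    exact ENNReal.mul_ne_top (by finiteness) hK.measure_lt_top.ne
  · exact Eventually.of_forall fun x => ((ENNReal.continuous_rpow_const.comp
      continuous_enorm).tendsto _).comp (tendsto_inv_sq_mul_discreteLaplacian hφ x)

variable {ι : Type*} [Fintype ι] [μ.IsAddHaarMeasure]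

variable (κ) in
lemma exists_lintegral_enorm_directionalLaplacian_rpow_le {p q : ℝ} (hpq : p.HolderConjugate q)
    (b : Module.Basis ι ℝ E) :
    ∃ C : ℝ, 0 < C ∧ ∀ (e : κ → ι → ℤ) (c : κ → ℝ), (∀ d, |c d| ≤ 1) →
      ∀ φ : E → ℝ, ContDiff ℝ 2 φ → HasCompactSupport φ →
      ∫⁻ x, ‖directionalLaplacian c (Fintype.linearCombination ℤ b ∘ e) φ x‖ₑ ^ p ∂μ ≤
        ENNReal.ofReal C *
          ∫⁻ x, ‖directionalLaplacian 1 (Fintype.linearCombination ℤ b ∘ e) φ x‖ₑ ^ p ∂μ := by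
  obtain ⟨C, hC, hscale⟩ := exists_lintegral_enorm_discreteLaplacian_rpow_le ι κ μ hpq
  refine ⟨C, hC, fun e c hc φ hφ hsupp => ?_⟩
  refine le_of_tendsto_of_tendsto
    (tendsto_lintegral_enorm_discreteLaplacian_rpow μ hφ hsupp hpq.pos)
    (ENNReal.Tendsto.const_mul (tendsto_lintegral_enorm_discreteLaplacian_rpow μ hφ hsupp hpq.pos)
      (Or.inr ENNReal.ofReal_ne_top)) (eventually_mem_nhdsWithin.mono fun t ht => ?_)
  have hsmul : Fintype.linearCombination ℤ (b.unitsSMul fun _ => Units.mk0 t (ne_of_gt ht)) ∘ e =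
      t • Fintype.linearCombination ℤ b ∘ e := by
    funext d
    simp [Fintype.linearCombination_apply, Finset.smul_sum, Module.Basis.unitsSMul_apply,
      Units.smul_def, smul_comm t]
  have h := hscale (b.unitsSMul fun _ => Units.mk0 t (ne_of_gt ht)) e c hc φ hφ.continuous hsupp
  rw [hsmul] at h
  beta_reduce
  rw [mul_left_comm]
  gcongr

end SecondDerivative

section CalderonZygmund

open scoped NNReal

lemma fderiv_fderiv_comm {E : Type*} [NormedAddCommGroup E] [NormedSpace ℝ E] {φ : E → ℝ}
    (hφ : ContDiff ℝ 2 φ) (x u v : E) :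
    fderiv ℝ (fderiv ℝ φ) x u v = fderiv ℝ (fderiv ℝ φ) x v u :=
  hφ.contDiffAt.isSymmSndFDerivAt (by simp) u v

variable {ι : Type*} [Fintype ι] [DecidableEq ι] {φ : (ι → ℝ) → ℝ}

/-- The `i`-th partial derivative. -/
noncomputable def partialDeriv (i : ι) (f : (ι → ℝ) → ℝ) (x : ι → ℝ) : ℝ :=
  fderiv ℝ f x (Pi.single i 1)

/-- The Laplacian on `ι → ℝ`. Mathlib's `Laplacian` needs an inner product space, while the
Lebesgue measure, the cubes and the reflections below live on `ι → ℝ`. -/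
noncomputable def laplacian (f : (ι → ℝ) → ℝ) (x : ι → ℝ) : ℝ :=
  ∑ i, partialDeriv i (partialDeriv i f) x

lemma partialDeriv_partialDeriv (hφ : ContDiff ℝ 2 φ) (i j : ι) (x : ι → ℝ) :
    partialDeriv i (partialDeriv j φ) x =
      fderiv ℝ (fderiv ℝ φ) x (Pi.single i 1) (Pi.single j 1) := by
  have hdiff : DifferentiableAt ℝ (fderiv ℝ φ) x :=
    (hφ.fderiv_right (m := 1) (by norm_num)).differentiable (by norm_num) x
  rw [partialDeriv, show partialDeriv j φ = fun y => fderiv ℝ φ y (Pi.single j 1) from rfl,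
    fderiv_clm_apply hdiff (differentiableAt_const _)]
  simp

variable (ι) in
/-- The integer vectors `eᵢ + eⱼ` and `eᵢ - eⱼ`, whose pure second derivatives express all
`∂ᵢ∂ⱼ` by polarization and add up to a multiple of the Laplacian. -/
def polarizationDirection : (ι × ι) ⊕ (ι × ι) → ι → ℤ :=
  Sum.elim (fun d => Pi.single d.1 1 + Pi.single d.2 1) (fun d => Pi.single d.1 1 - Pi.single d.2 1)

lemma linearCombination_comp_polarizationDirection :
    Fintype.linearCombination ℤ (Pi.basisFun ℝ ι) ∘ polarizationDirection ι =
      Sum.elim (fun d => Pi.single d.1 1 + Pi.single d.2 1)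
        (fun d => Pi.single d.1 1 - Pi.single d.2 1) := by
  funext d
  rcases d with d | d <;>
    simp [polarizationDirection, Fintype.linearCombination_apply_single]

lemma directionalLaplacian_polarizationDirection (hφ : ContDiff ℝ 2 φ)
    (c : (ι × ι) ⊕ (ι × ι) → ℝ) (x : ι → ℝ) :
    directionalLaplacian c
        (Fintype.linearCombination ℤ (Pi.basisFun ℝ ι) ∘ polarizationDirection ι) φ x =
      ∑ i, ∑ j, ((c (.inl (i, j)) + c (.inr (i, j))) *
          (partialDeriv i (partialDeriv i φ) x + partialDeriv j (partialDeriv j φ) x) +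
        2 * (c (.inl (i, j)) - c (.inr (i, j))) * partialDeriv i (partialDeriv j φ) x) := by
  rw [linearCombination_comp_polarizationDirection]
  simp only [directionalLaplacian, Fintype.sum_sum_type, Sum.elim_inl, Sum.elim_inr,
    Fintype.sum_prod_type, ← Finset.sum_add_distrib, partialDeriv_partialDeriv hφ]
  refine Finset.sum_congr rfl fun i _ => Finset.sum_congr rfl fun j _ => ?_
  simp only [map_add, map_sub, add_apply, sub_apply,
    fderiv_fderiv_comm hφ x (Pi.single j 1) (Pi.single i 1)]
  ring

lemma directionalLaplacian_one_polarizationDirection (hφ : ContDiff ℝ 2 φ) (x : ι → ℝ) :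
    directionalLaplacian 1
        (Fintype.linearCombination ℤ (Pi.basisFun ℝ ι) ∘ polarizationDirection ι) φ x =
      4 * Fintype.card ι * laplacian φ x := by
  rw [directionalLaplacian_polarizationDirection hφ]
  simp only [Pi.one_apply, sub_self, mul_zero, zero_mul, add_zero, ← Finset.mul_sum,
    Finset.sum_add_distrib, Finset.sum_const, Finset.card_univ, nsmul_eq_mul, laplacian]
  ring

lemma exists_directionalLaplacian_polarizationDirection_eq (i j : ι) :
    ∃ c : (ι × ι) ⊕ (ι × ι) → ℝ, (∀ d, |c d| ≤ 1) ∧ ∀ φ : (ι → ℝ) → ℝ, ContDiff ℝ 2 φ →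
      directionalLaplacian c
        (Fintype.linearCombination ℤ (Pi.basisFun ℝ ι) ∘ polarizationDirection ι) φ =
      partialDeriv i (partialDeriv j φ) := by
  let c : (ι × ι) ⊕ (ι × ι) → ℝ :=
    Sum.elim (fun d => if d = (i, j) then 1 / 4 else 0) (fun d => if d = (i, j) then -1 / 4 else 0)
  refine ⟨c, ?_, fun φ hφ => funext fun x => ?_⟩
  · rintro (d | d) <;> simp only [c, Sum.elim_inl, Sum.elim_inr] <;> split_ifs <;>
      norm_num [abs_le]
  · rw [directionalLaplacian_polarizationDirection hφ, Finset.sum_eq_single i,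
      Finset.sum_eq_single j]
    · simp [c]
      ring
    · intro k _ hk
      simp [c, hk]
    · simp
    · intro k _ hk
      simp [c, hk]
    · simp

lemma eLpNorm_le_mul_eLpNorm_of_lintegral_rpow_le {α E : Type*} [MeasurableSpace α]
    [NormedAddCommGroup E] {μ : Measure α} {f g : α → E} {p : ℝ} (hp : 0 < p) {C : ℝ≥0∞}
    (h : ∫⁻ x, ‖f x‖ₑ ^ p ∂μ ≤ C * ∫⁻ x, ‖g x‖ₑ ^ p ∂μ) :
    eLpNorm f (ENNReal.ofReal p) μ ≤ C ^ (1 / p) * eLpNorm g (ENNReal.ofReal p) μ := by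
  rw [eLpNorm_eq_lintegral_rpow_enorm_toReal (by simpa using hp) ENNReal.ofReal_ne_top,
    eLpNorm_eq_lintegral_rpow_enorm_toReal (by simpa using hp) ENNReal.ofReal_ne_top,
    ENNReal.toReal_ofReal hp.le, ← ENNReal.mul_rpow_of_nonneg _ _ (by positivity)]
  exact ENNReal.rpow_le_rpow h (by positivity)

variable (ι) in
lemma exists_eLpNorm_partialDeriv_partialDeriv_le {p q : ℝ} (hpq : p.HolderConjugate q) :
    ∃ C : ℝ≥0, ∀ (i j : ι) (φ : (ι → ℝ) → ℝ), ContDiff ℝ 2 φ → HasCompactSupport φ →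
      eLpNorm (partialDeriv i (partialDeriv j φ)) (ENNReal.ofReal p) volume ≤
        C * eLpNorm (laplacian φ) (ENNReal.ofReal p) volume := by
  obtain ⟨C, -, hCZ⟩ := exists_lintegral_enorm_directionalLaplacian_rpow_le ((ι × ι) ⊕ (ι × ι))
    volume hpq (Pi.basisFun ℝ ι)
  refine ⟨C.toNNReal ^ (1 / p) * (4 * Fintype.card ι), fun i j φ hφ hsupp => ?_⟩
  obtain ⟨c, hc, hrepr⟩ := exists_directionalLaplacian_polarizationDirection_eq i j
  have h := eLpNorm_le_mul_eLpNorm_of_lintegral_rpow_le hpq.pos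
    (hCZ (polarizationDirection ι) c hc φ hφ hsupp)
  have hlaplacian : directionalLaplacian 1
      (Fintype.linearCombination ℤ (Pi.basisFun ℝ ι) ∘ polarizationDirection ι) φ =
      (4 * Fintype.card ι : ℝ) • laplacian φ :=
    funext (directionalLaplacian_one_polarizationDirection hφ)
  rw [hrepr φ hφ, hlaplacian, eLpNorm_const_smul, ← mul_assoc] at h
  refine h.trans_eq ?_
  rw [Real.enorm_of_nonneg (by positivity), ENNReal.coe_mul,
    ENNReal.coe_rpow_of_nonneg _ hpq.one_div_nonneg]
  congr 2
  simp [ENNReal.ofReal_mul]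

end CalderonZygmund

/-! ### A parametrix of the Laplacian -/

section Parametrix

open scoped ContDiff

/-- The Laplacian of `x ↦ H (|x|²)` on `ℝⁿ`, as a function of `s = |x|²` and of `h = H'`. -/
noncomputable def radialLaplacian (n : ℕ) (h : ℝ → ℝ) (s : ℝ) : ℝ :=
  2 * n * h s + 4 * s * deriv h s

lemma radialLaplacian_const_mul_comp_mul_left_sub {f : ℝ → ℝ} (hf : Differentiable ℝ f) (n : ℕ)
    (a b s : ℝ) :
    radialLaplacian n (fun s => a * f (b * s) - f s) s =
      a * radialLaplacian n f (b * s) - radialLaplacian n f s := by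
  have hderiv : HasDerivAt (fun s => a * f (b * s) - f s)
      (a * (deriv f (b * s) * (b * 1)) - deriv f s) s :=
    (((hf (b * s)).hasDerivAt.comp s ((hasDerivAt_id s).const_mul b)).const_mul a).sub
      (hf s).hasDerivAt
  rw [radialLaplacian, hderiv.deriv, radialLaplacian, radialLaplacian]
  ring

/-- The derivative, up to a constant factor and as a function of `s = |x|²`, of the fundamental
solution of the Laplacian on `ℝⁿ`, cut off near the origin. -/
noncomputable def fundamentalProfile (n : ℕ) (s : ℝ) : ℝ :=
  Real.smoothTransition (16 * s - 1) * s ^ (-(n / 2 : ℝ))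

lemma fundamentalProfile_of_le {n : ℕ} {s : ℝ} (hs : s ≤ 1 / 16) : fundamentalProfile n s = 0 := by
  rw [fundamentalProfile, Real.smoothTransition.zero_of_nonpos (by linarith), zero_mul]

lemma fundamentalProfile_of_ge {n : ℕ} {s : ℝ} (hs : 1 / 8 ≤ s) :
    fundamentalProfile n s = s ^ (-(n / 2 : ℝ)) := by
  rw [fundamentalProfile, Real.smoothTransition.one_of_one_le (by linarith), one_mul]

lemma contDiff_fundamentalProfile (n : ℕ) : ContDiff ℝ ∞ (fundamentalProfile n) := by
  refine contDiff_iff_contDiffAt.2 fun s => ?_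
  rcases lt_or_ge s (1 / 16) with hs | hs
  · refine contDiffAt_const (c := 0) |>.congr_of_eventuallyEq ?_
    filter_upwards [gt_mem_nhds hs] with t ht using fundamentalProfile_of_le (le_of_lt ht)
  · have hs₀ : s ≠ 0 := by linarith
    have hcutoff : ContDiffAt ℝ ∞ (fun s : ℝ => Real.smoothTransition (16 * s - 1)) s :=
      Real.smoothTransition.contDiff.contDiffAt.comp s (by fun_prop)
    exact hcutoff.mul (contDiffAt_id.rpow_const_of_ne hs₀)

/-- Off the cut-off region the profile is harmonic: only the derivative of the cut-off remains. -/
lemma radialLaplacian_fundamentalProfile (n : ℕ) {s : ℝ} (hs : 0 < s) :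
    radialLaplacian n (fundamentalProfile n) s =
      4 * deriv (fun s => Real.smoothTransition (16 * s - 1)) s * s ^ (1 - n / 2 : ℝ) := by
  have hcutoff : DifferentiableAt ℝ (fun s : ℝ => Real.smoothTransition (16 * s - 1)) s :=
    (Real.smoothTransition.contDiffAt.differentiableAt one_ne_zero).comp s (by fun_prop)
  have hderiv : HasDerivAt (fundamentalProfile n) _ s :=
    hcutoff.hasDerivAt.mul (Real.hasDerivAt_rpow_const (p := -(n / 2 : ℝ)) (Or.inl hs.ne'))
  have hpow : s ^ (-(n / 2 : ℝ)) = s * s ^ (-(n / 2 : ℝ) - 1) := by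
    rw [Real.rpow_sub_one hs.ne']
    field_simp
  have hpow' : s ^ (1 - n / 2 : ℝ) = s * s ^ (-(n / 2 : ℝ)) := by
    rw [sub_eq_add_neg, Real.rpow_add hs, Real.rpow_one]
  rw [radialLaplacian, hderiv.deriv, fundamentalProfile, hpow', hpow]
  ring

lemma radialLaplacian_fundamentalProfile_nonneg (n : ℕ) {s : ℝ} (hs : 0 ≤ s) :
    0 ≤ radialLaplacian n (fundamentalProfile n) s := by
  rcases hs.eq_or_lt with rfl | hs
  · simp [radialLaplacian, fundamentalProfile_of_le]
  · have hmono : Monotone fun s : ℝ => Real.smoothTransition (16 * s - 1) :=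
      fun a b hab => Real.smoothTransition.monotone (by linarith)
    have := hmono.deriv_nonneg (x := s)
    rw [radialLaplacian_fundamentalProfile n hs]
    positivity

lemma radialLaplacian_fundamentalProfile_of_lt (n : ℕ) {s : ℝ} (hs : 1 / 8 < s) :
    radialLaplacian n (fundamentalProfile n) s = 0 := by
  have hcutoff : (fun s : ℝ => Real.smoothTransition (16 * s - 1)) =ᶠ[nhds s] fun _ => 1 := by
    filter_upwards [lt_mem_nhds hs] with t ht
    exact Real.smoothTransition.one_of_one_le (by linarith)
  rw [radialLaplacian_fundamentalProfile n (by linarith), hcutoff.deriv_eq, deriv_const, mul_zero,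
    zero_mul]

lemma exists_radialLaplacian_fundamentalProfile_ne_zero (n : ℕ) :
    ∃ s, 0 < s ∧ radialLaplacian n (fundamentalProfile n) s ≠ 0 := by
  have hcutoff : Differentiable ℝ fun s : ℝ => Real.smoothTransition (16 * s - 1) :=
    (Real.smoothTransition.contDiff.differentiable one_ne_zero).comp (by fun_prop)
  obtain ⟨s, hs, hslope⟩ := exists_deriv_eq_slope (fun s : ℝ => Real.smoothTransition (16 * s - 1))
    (a := 1 / 16) (b := 1 / 8) (by norm_num) hcutoff.continuous.continuousOn
    hcutoff.differentiableOn
  have hs₀ : 0 < s := by linarith [hs.1]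
  refine ⟨s, hs₀, ?_⟩
  rw [radialLaplacian_fundamentalProfile n hs₀, hslope,
    Real.smoothTransition.one_of_one_le (by norm_num),
    Real.smoothTransition.zero_of_nonpos (by norm_num)]
  have := Real.rpow_pos_of_pos hs₀ (1 - n / 2 : ℝ)
  norm_num [this.ne']

variable {ι : Type*} [Fintype ι]

/-- The dilate `ε⁻ⁿ κ(x / ε)`, which has the same integral as `κ`. -/
noncomputable def dilate (ε : ℝ) (κ : (ι → ℝ) → ℝ) (x : ι → ℝ) : ℝ :=
  (ε ^ Fintype.card ι)⁻¹ * κ (ε⁻¹ • x)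

lemma hasFDerivAt_sum_sq (x : ι → ℝ) :
    HasFDerivAt (fun x : ι → ℝ => ∑ j, x j ^ 2)
      (∑ j, (2 * x j) • ContinuousLinearMap.proj (R := ℝ) (φ := fun _ : ι => ℝ) j) x := by
  refine HasFDerivAt.fun_sum fun j _ => ?_
  simpa using (hasFDerivAt_apply (𝕜 := ℝ) (F' := fun _ : ι => ℝ) j x).pow 2

lemma abs_apply_lt_half_of_sum_sq_le {x : ι → ℝ} (hx : ∑ j, x j ^ 2 ≤ 1 / 8) (j : ι) :
    |x j| < 1 / 2 := by
  have hj : x j ^ 2 ≤ ∑ j, x j ^ 2 :=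
    Finset.single_le_sum (fun j _ => sq_nonneg (x j)) (Finset.mem_univ j)
  exact abs_lt_of_sq_lt_sq (by linarith) (by norm_num)

lemma support_subset_ball_half {f : (ι → ℝ) → ℝ} (hf : ∀ x, 1 / 8 < ∑ j, x j ^ 2 → f x = 0) :
    Function.support f ⊆ Metric.ball 0 (1 / 2) := by
  intro x hx
  have hsum : ∑ j, x j ^ 2 ≤ 1 / 8 := not_lt.1 (mt (hf x) hx)
  rw [mem_ball_zero_iff, pi_norm_lt_iff (by norm_num)]
  exact abs_apply_lt_half_of_sum_sq_le hsum

/-- The profile of the parametrix at scale `ε`. Off the cut-off region `s ^ (-n/2)` is invariant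
under the scaling, so that the two terms cancel. -/
noncomputable def parametrixProfile (n : ℕ) (ε s : ℝ) : ℝ :=
  (ε ^ n)⁻¹ * fundamentalProfile n ((ε ^ 2)⁻¹ * s) - fundamentalProfile n s

lemma contDiff_parametrixProfile (n : ℕ) (ε : ℝ) : ContDiff ℝ ∞ (parametrixProfile n ε) :=
  (contDiff_const.mul ((contDiff_fundamentalProfile n).comp (contDiff_const.mul contDiff_id))).sub
    (contDiff_fundamentalProfile n)

lemma parametrixProfile_of_ge {n : ℕ} {ε s : ℝ} (hε : 0 < ε) (hε₁ : ε ≤ 1) (hs : 1 / 8 ≤ s) :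
    parametrixProfile n ε s = 0 := by
  have hs₀ : 0 < s := by linarith
  have hscale : 1 / 8 ≤ (ε ^ 2)⁻¹ * s :=
    hs.trans (le_mul_of_one_le_left hs₀.le ((one_le_inv₀ (by positivity)).2 (by nlinarith)))
  have hpow : ((ε ^ 2)⁻¹ : ℝ) ^ (-(n / 2 : ℝ)) = ε ^ n := by
    rw [← Real.rpow_natCast, ← Real.rpow_neg hε.le, ← Real.rpow_mul hε.le, ← Real.rpow_natCast]
    congr 1
    push_cast
    ring
  rw [parametrixProfile, fundamentalProfile_of_ge hs, fundamentalProfile_of_ge hscale,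
    Real.mul_rpow (by positivity) hs₀.le, hpow]
  field_simp
  ring

/-- The radial antiderivative of `parametrixProfile`. -/
noncomputable def parametrix (ε : ℝ) (x : ι → ℝ) : ℝ :=
  ∫ s in (1 : ℝ)..∑ j, x j ^ 2, parametrixProfile (Fintype.card ι) ε s

lemma hasDerivAt_integral_parametrixProfile (n : ℕ) (ε s : ℝ) :
    HasDerivAt (fun s => ∫ t in (1 : ℝ)..s, parametrixProfile n ε t) (parametrixProfile n ε s) s :=
  intervalIntegral.integral_hasDerivAt_right
    ((contDiff_parametrixProfile n ε).continuous.intervalIntegrable 1 s)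
    ((contDiff_parametrixProfile n ε).continuous.stronglyMeasurableAtFilter _ _)
    (contDiff_parametrixProfile n ε).continuous.continuousAt

lemma contDiff_parametrix (ε : ℝ) : ContDiff ℝ ∞ (parametrix ε : (ι → ℝ) → ℝ) := by
  have hprimitive :
      ContDiff ℝ ∞ fun s => ∫ t in (1 : ℝ)..s, parametrixProfile (Fintype.card ι) ε t := by
    have hderiv := hasDerivAt_integral_parametrixProfile (Fintype.card ι) ε
    refine contDiff_infty_iff_deriv.2 ⟨fun s => (hderiv s).differentiableAt, ?_⟩
    rw [deriv_eq hderiv]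
    exact contDiff_parametrixProfile _ _
  exact hprimitive.comp (by fun_prop)

lemma support_parametrix_subset {ε : ℝ} (hε : 0 < ε) (hε₁ : ε ≤ 1) :
    Function.support (parametrix ε : (ι → ℝ) → ℝ) ⊆ Metric.ball 0 (1 / 2) := by
  refine support_subset_ball_half fun x hx => ?_
  refine intervalIntegral.integral_zero_ae (Filter.Eventually.of_forall fun s hs => ?_)
  refine parametrixProfile_of_ge hε hε₁ ?_
  rcases Set.mem_uIoc.1 hs with hs | hs <;> linarith [hs.1]

/-- The Laplacian of the cut-off fundamental solution, up to a constant factor. -/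
noncomputable def parametrixKernel (x : ι → ℝ) : ℝ :=
  radialLaplacian (Fintype.card ι) (fundamentalProfile (Fintype.card ι)) (∑ j, x j ^ 2)

lemma contDiff_parametrixKernel : ContDiff ℝ ∞ (parametrixKernel : (ι → ℝ) → ℝ) := by
  have hprofile := contDiff_fundamentalProfile (Fintype.card ι)
  have hderiv := (contDiff_infty_iff_deriv.1 hprofile).2
  have hradial : ContDiff ℝ ∞
      (radialLaplacian (Fintype.card ι) (fundamentalProfile (Fintype.card ι))) :=
    (contDiff_const.mul hprofile).add ((contDiff_const.mul contDiff_id).mul hderiv)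
  exact hradial.comp (by fun_prop)

lemma parametrixKernel_nonneg (x : ι → ℝ) : 0 ≤ parametrixKernel x :=
  radialLaplacian_fundamentalProfile_nonneg _ (Finset.sum_nonneg fun j _ => sq_nonneg (x j))

lemma support_parametrixKernel_subset :
    Function.support (parametrixKernel : (ι → ℝ) → ℝ) ⊆ Metric.ball 0 (1 / 2) :=
  support_subset_ball_half fun _ => radialLaplacian_fundamentalProfile_of_lt _

lemma hasCompactSupport_of_support_subset_ball {f : (ι → ℝ) → ℝ} {x₀ : ι → ℝ} {R : ℝ}
    (hf : Function.support f ⊆ Metric.ball x₀ R) : HasCompactSupport f :=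
  HasCompactSupport.intro (isCompact_closedBall x₀ R) fun _ hx =>
    Function.notMem_support.1 fun hx' => hx (Metric.ball_subset_closedBall (hf hx'))

lemma integral_parametrixKernel_pos [Nonempty ι] : 0 < ∫ x : ι → ℝ, parametrixKernel x := by
  classical
  obtain ⟨s, hs, hne⟩ := exists_radialLaplacian_fundamentalProfile_ne_zero (Fintype.card ι)
  obtain ⟨i⟩ := ‹Nonempty ι›
  refine contDiff_parametrixKernel.continuous.integral_pos_of_hasCompactSupport_nonneg_nonzero
    (x := Pi.single i √s) (hasCompactSupport_of_support_subset_ball support_parametrixKernel_subset)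
    parametrixKernel_nonneg ?_
  simpa [parametrixKernel, Pi.single_apply, ite_pow, Real.sq_sqrt hs.le] using hne

/-- A mollifier which differs from each of its contractions by the Laplacian of a test function,
as if it were the Laplacian of a regularised fundamental solution. -/
structure IsParametrixMollifier [DecidableEq ι] (κ : (ι → ℝ) → ℝ) : Prop where
  contDiff : ContDiff ℝ ∞ κ
  nonneg : ∀ x, 0 ≤ κ x
  support_subset : Function.support κ ⊆ Metric.ball 0 (1 / 2)
  integral_eq_one : ∫ x, κ x = 1
  exists_laplacian_eq : ∀ ε, 0 < ε → ε ≤ 1 → ∃ Γ : (ι → ℝ) → ℝ, ContDiff ℝ ∞ Γ ∧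
    Function.support Γ ⊆ Metric.ball 0 (1 / 2) ∧ ∀ x, laplacian Γ x = dilate ε κ x - κ x

variable [DecidableEq ι]

lemma partialDeriv_comp_sum_sq {H h : ℝ → ℝ} (hH : ∀ s, HasDerivAt H (h s) s) (i : ι) :
    partialDeriv i (fun x => H (∑ j, x j ^ 2)) = fun x => 2 * x i * h (∑ j, x j ^ 2) := by
  funext x
  have hcomp : HasFDerivAt (fun x : ι → ℝ => H (∑ j, x j ^ 2)) _ x :=
    (hH _).comp_hasFDerivAt x (hasFDerivAt_sum_sq x)
  rw [partialDeriv, hcomp.fderiv]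
  simp [Pi.single_apply]
  ring

lemma laplacian_comp_sum_sq {H h : ℝ → ℝ} (hH : ∀ s, HasDerivAt H (h s) s)
    (hh : Differentiable ℝ h) (x : ι → ℝ) :
    laplacian (fun x => H (∑ j, x j ^ 2)) x =
      radialLaplacian (Fintype.card ι) h (∑ j, x j ^ 2) := by
  have hsecond (i : ι) : partialDeriv i (partialDeriv i fun x => H (∑ j, x j ^ 2)) x =
      2 * h (∑ j, x j ^ 2) + 4 * x i ^ 2 * deriv h (∑ j, x j ^ 2) := by
    have hmul : HasFDerivAt (fun x : ι → ℝ => 2 * x i * h (∑ j, x j ^ 2)) _ x :=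
      ((hasFDerivAt_apply i x).const_mul 2).mul
        ((hh _).hasDerivAt.comp_hasFDerivAt x (hasFDerivAt_sum_sq x))
    rw [partialDeriv_comp_sum_sq hH, partialDeriv, hmul.fderiv]
    simp [Pi.single_apply]
    ring
  simp only [laplacian, hsecond, radialLaplacian, Finset.sum_add_distrib, ← Finset.sum_mul,
    ← Finset.mul_sum, Finset.sum_const, Finset.card_univ, nsmul_eq_mul]
  ring

lemma laplacian_parametrix (ε : ℝ) (x : ι → ℝ) :
    laplacian (parametrix ε) x = dilate ε parametrixKernel x - parametrixKernel x := by
  have hsum : ∑ j, (ε⁻¹ • x) j ^ 2 = (ε ^ 2)⁻¹ * ∑ j, x j ^ 2 := by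
    simp [mul_pow, Finset.mul_sum]
  have h := laplacian_comp_sum_sq (hasDerivAt_integral_parametrixProfile (Fintype.card ι) ε)
    ((contDiff_parametrixProfile _ ε).differentiable (by simp)) x
  rw [show parametrixProfile (Fintype.card ι) ε = _ from funext fun _ => parametrixProfile.eq_1 ..,
    radialLaplacian_const_mul_comp_mul_left_sub
      ((contDiff_fundamentalProfile _).differentiable (by simp))] at h
  rw [dilate, parametrixKernel, hsum, parametrixKernel, ← h]
  rfl

lemma laplacian_const_smul (c : ℝ) (f : (ι → ℝ) → ℝ) : laplacian (c • f) = c • laplacian f := by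
  have hpartial (i : ι) (f : (ι → ℝ) → ℝ) : partialDeriv i (c • f) = c • partialDeriv i f := by
    funext x
    simp [partialDeriv, fderiv_const_smul_field]
  funext x
  simp [laplacian, hpartial, Finset.mul_sum]

variable (ι) in
lemma exists_isParametrixMollifier [Nonempty ι] :
    ∃ κ : (ι → ℝ) → ℝ, IsParametrixMollifier κ := by
  let c : ℝ := (∫ x : ι → ℝ, parametrixKernel x)⁻¹
  have hc : 0 ≤ c := inv_nonneg.2 integral_parametrixKernel_pos.le
  refine ⟨c • parametrixKernel,
    { contDiff := contDiff_const.smul contDiff_parametrixKernel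
      nonneg := fun x => mul_nonneg hc (parametrixKernel_nonneg x)
      support_subset :=
        (Function.support_const_smul_subset c _).trans support_parametrixKernel_subset
      integral_eq_one := ?_
      exists_laplacian_eq := fun ε hε hε₁ =>
        ⟨c • parametrix ε, contDiff_const.smul (contDiff_parametrix ε),
          (Function.support_const_smul_subset c _).trans (support_parametrix_subset hε hε₁),
          fun x => ?_⟩ }⟩
  · simp only [Pi.smul_apply, smul_eq_mul, integral_const_mul]
    exact inv_mul_cancel₀ integral_parametrixKernel_pos.ne'
  · rw [laplacian_const_smul, Pi.smul_apply, laplacian_parametrix]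
    simp only [dilate, Pi.smul_apply, smul_eq_mul]
    ring

end Parametrix

/-! ### Local Nečas inequality -/

section LocalNecas

open scoped NNReal ContDiff Convolution Pointwise Topology
open Filter Function

lemma eLpNorm_integral_comp_sub_le {G E : Type*} [AddCommGroup G] [MeasurableSpace G]
    [MeasurableAdd₂ G] [MeasurableNeg G] [NormedAddCommGroup E] [NormedSpace ℝ E]
    {μ ν : Measure G} [IsProbabilityMeasure μ] [SFinite ν] [ν.IsAddRightInvariant]
    {g : G → E} (hg : StronglyMeasurable g) {p : ℝ} (hp : 1 ≤ p) :
    eLpNorm (fun x => ∫ t, g (x - t) ∂μ) (ENNReal.ofReal p) ν ≤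
      eLpNorm g (ENNReal.ofReal p) ν := by
  have hp₀ : 0 < p := one_pos.trans_le hp
  have hsub : StronglyMeasurable fun z : G × G => g (z.1 - z.2) :=
    hg.comp_measurable measurable_sub
  have jensen (x : G) : ‖∫ t, g (x - t) ∂μ‖ₑ ^ p ≤ ∫⁻ t, ‖g (x - t)‖ₑ ^ p ∂μ := by
    have hmono := eLpNorm'_le_eLpNorm'_of_exponent_le one_pos hp μ
      (hg.comp_measurable (measurable_id.const_sub x)).aestronglyMeasurable
    rw [lintegral_rpow_enorm_eq_rpow_eLpNorm' hp₀]
    gcongr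
    calc ‖∫ t, g (x - t) ∂μ‖ₑ ≤ ∫⁻ t, ‖g (x - t)‖ₑ ∂μ := enorm_integral_le_lintegral_enorm _
      _ = eLpNorm' (fun t => g (x - t)) 1 μ := by simp [eLpNorm'_eq_lintegral_enorm]
      _ ≤ eLpNorm' (fun t => g (x - t)) p μ := hmono
  suffices hle : ∫⁻ x, ‖∫ t, g (x - t) ∂μ‖ₑ ^ p ∂ν ≤ 1 * ∫⁻ x, ‖g x‖ₑ ^ p ∂ν by
    simpa using eLpNorm_le_mul_eLpNorm_of_lintegral_rpow_le hp₀ hle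
  calc ∫⁻ x, ‖∫ t, g (x - t) ∂μ‖ₑ ^ p ∂ν ≤ ∫⁻ x, ∫⁻ t, ‖g (x - t)‖ₑ ^ p ∂μ ∂ν :=
        lintegral_mono jensen
    _ = ∫⁻ t, ∫⁻ x, ‖g (x - t)‖ₑ ^ p ∂ν ∂μ :=
        lintegral_lintegral_swap (hsub.enorm.pow_const p).aemeasurable
    _ = 1 * ∫⁻ x, ‖g x‖ₑ ^ p ∂ν := by
        simp [lintegral_sub_right_eq_self (fun x => ‖g x‖ₑ ^ p)]

lemma hasCompactSupport_partialDeriv {ι : Type*} [DecidableEq ι] {φ : (ι → ℝ) → ℝ}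
    (hφ : HasCompactSupport φ) (i : ι) : HasCompactSupport (partialDeriv i φ) :=
  (hφ.fderiv ℝ).comp_left (g := fun L : (ι → ℝ) →L[ℝ] ℝ => L (Pi.single i 1)) rfl

lemma support_partialDeriv_subset {ι : Type*} [Finite ι] [DecidableEq ι] (i : ι)
    (φ : (ι → ℝ) → ℝ) : support (partialDeriv i φ) ⊆ tsupport φ := by
  cases nonempty_fintype ι
  exact (support_comp_subset (g := fun L : (ι → ℝ) →L[ℝ] ℝ => L (Pi.single i 1)) rfl
    (fderiv ℝ φ)).trans (support_fderiv_subset ℝ)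

lemma partialDeriv_comp_const_sub {ι : Type*} [Finite ι] [DecidableEq ι] (φ : (ι → ℝ) → ℝ) (i : ι)
    (y : ι → ℝ) : partialDeriv i (fun x => φ (y - x)) = fun x => -partialDeriv i φ (y - x) := by
  cases nonempty_fintype ι
  funext x
  have hsmul := fderiv_comp_smul (𝕜 := ℝ) (f := fun z => φ (y + z)) (x := x) (-1)
  rw [fderiv_comp_add_left] at hsmul
  simpa [partialDeriv, ← sub_eq_add_neg] using DFunLike.congr_fun hsmul (Pi.single i 1)

variable {ι : Type*} [Fintype ι] {κ φ g A : (ι → ℝ) → ℝ} {x₀ : ι → ℝ} {ε r : ℝ}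

lemma eLpNorm_convolution_le (hκ : Measurable κ) (hκ₀ : ∀ x, 0 ≤ κ x) (hκ₁ : ∫ x, κ x = 1)
    (hg : Continuous g) (hr : 1 ≤ r) :
    eLpNorm (κ ⋆ g) (ENNReal.ofReal r) volume ≤ eLpNorm g (ENNReal.ofReal r) volume := by
  let μ : Measure (ι → ℝ) := volume.withDensity fun t => ENNReal.ofReal (κ t)
  have : IsProbabilityMeasure μ := by
    refine ⟨?_⟩
    rw [withDensity_apply _ MeasurableSet.univ, Measure.restrict_univ,
      ← ofReal_integral_eq_lintegral_ofReal (integrable_of_integral_eq_one hκ₁)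
        (Eventually.of_forall hκ₀), hκ₁, ENNReal.ofReal_one]
  have hconv : κ ⋆ g = fun x => ∫ t, g (x - t) ∂μ := by
    funext x
    rw [integral_withDensity_eq_integral_toReal_smul (by fun_prop) (by simp), convolution_def]
    simp [hκ₀]
  rw [hconv]
  exact eLpNorm_integral_comp_sub_le hg.stronglyMeasurable hr

lemma abs_convolution_le {M : ℝ} (hκ₀ : ∀ x, 0 ≤ κ x) (hκ₁ : ∫ x, κ x = 1)
    (hM : ∀ x, |g x| ≤ M) (x : ι → ℝ) : |(κ ⋆ g) x| ≤ M := by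
  rw [← Real.norm_eq_abs, convolution_def]
  calc ‖∫ t, κ t • g (x - t)‖ ≤ ∫ t, κ t * M := by
        refine norm_integral_le_of_norm_le
          ((integrable_of_integral_eq_one hκ₁).mul_const M) (Eventually.of_forall fun t => ?_)
        simpa [abs_of_nonneg (hκ₀ t)] using mul_le_mul_of_nonneg_left (hM (x - t)) (hκ₀ t)
    _ = M := by rw [integral_mul_const, hκ₁, one_mul]

lemma dilate_nonneg (hκ₀ : ∀ x, 0 ≤ κ x) (hε : 0 ≤ ε) (x : ι → ℝ) : 0 ≤ dilate ε κ x :=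
  mul_nonneg (by positivity) (hκ₀ _)

lemma integral_dilate (hε : 0 < ε) : ∫ x, dilate ε κ x = ∫ x, κ x := by
  simp_rw [dilate, integral_const_mul, Measure.integral_comp_inv_smul_of_nonneg _ κ hε.le]
  simp [hε.ne']

lemma support_dilate_subset (hκ : support κ ⊆ Metric.ball 0 (1 / 2)) (hε : 0 < ε) :
    support (dilate ε κ) ⊆ Metric.ball 0 ε := by
  intro x hx
  have hmem : ε⁻¹ • x ∈ Metric.ball (0 : ι → ℝ) (1 / 2) := hκ (right_ne_zero_of_mul hx)
  rw [mem_ball_zero_iff, norm_smul, norm_inv, Real.norm_of_nonneg hε.le,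
    inv_mul_lt_iff₀ hε] at hmem
  rw [mem_ball_zero_iff]
  linarith

lemma tendsto_dilate_convolution (hκ : support κ ⊆ Metric.ball 0 (1 / 2)) (hκ₀ : ∀ x, 0 ≤ κ x)
    (hκ₁ : ∫ x, κ x = 1) (hg : Continuous g) (x : ι → ℝ) :
    Tendsto (fun ε => (dilate ε κ ⋆ g) x) (𝓝[>] 0) (𝓝 (g x)) := by
  have hpos : ∀ᶠ ε : ℝ in 𝓝[>] 0, 0 < ε := eventually_mem_nhdsWithin
  have hsupport : Tendsto (fun ε => support (dilate ε κ)) (𝓝[>] 0)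
      (𝓝 (0 : ι → ℝ)).smallSets := by
    rw [tendsto_smallSets_iff]
    intro t ht
    obtain ⟨δ, hδ, hball⟩ := Metric.mem_nhds_iff.1 ht
    filter_upwards [hpos, nhdsWithin_le_nhds (Iio_mem_nhds hδ)] with ε hε hεδ
    exact ((support_dilate_subset hκ hε).trans (Metric.ball_subset_ball hεδ.le)).trans hball
  exact convolution_tendsto_right (hpos.mono fun ε hε => dilate_nonneg hκ₀ hε.le)
    (hpos.mono fun ε hε => (integral_dilate hε).trans hκ₁) hsupport
    (Eventually.of_forall fun _ => hg.aestronglyMeasurable)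
    ((hg.tendsto x).comp tendsto_snd) tendsto_const_nhds

lemma contDiff_partialDeriv [DecidableEq ι] (hφ : ContDiff ℝ ∞ φ) (i : ι) :
    ContDiff ℝ ∞ (partialDeriv i φ) :=
  (hφ.fderiv_right (m := ∞) (by simp)).clm_apply contDiff_const

lemma partialDeriv_convolution_right [DecidableEq ι] (hφ : ContDiff ℝ ∞ φ)
    (hφc : HasCompactSupport φ) (hA : LocallyIntegrable A) (i : ι) :
    partialDeriv i (A ⋆ φ) = A ⋆ partialDeriv i φ := by
  funext x
  rw [partialDeriv,
    (hφc.hasFDerivAt_convolution_right _ hA (hφ.of_le (by simp)) x).fderiv,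
    convolution_precompR_apply _ hA (hφc.fderiv ℝ) (hφ.continuous_fderiv (by simp))]
  rfl

lemma convolution_comm (f g : (ι → ℝ) → ℝ) : f ⋆ g = g ⋆ f := by
  funext x
  rw [convolution_lsmul_swap, convolution_def]
  simp [mul_comm]

lemma integral_mul_convolution (hA : Integrable A) (hκ : Continuous κ) (hκc : HasCompactSupport κ)
    (hg : Continuous g) (hgc : HasCompactSupport g) :
    ∫ x, A x * (κ ⋆ g) x = ∫ t, g t * (A ⋆ fun x => κ (-x)) t := by
  obtain ⟨M, hM⟩ := hκc.exists_bound_of_continuous hκ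
  have hint : Integrable (fun z : (ι → ℝ) × (ι → ℝ) => A z.1 * g z.2 * κ (z.1 - z.2))
      (volume.prod volume) :=
    (hA.mul_prod (hg.integrable_of_hasCompactSupport hgc)).mul_bdd
      (by fun_prop) (Eventually.of_forall fun z => hM _)
  calc ∫ x, A x * (κ ⋆ g) x = ∫ x, ∫ t, A x * g t * κ (x - t) := by
        simp_rw [convolution_lsmul_swap, ← integral_const_mul, smul_eq_mul, mul_comm (κ _),
          mul_assoc]
    _ = ∫ t, ∫ x, A x * g t * κ (x - t) := integral_integral_swap hint
    _ = ∫ t, g t * (A ⋆ fun x => κ (-x)) t := by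
        simp [convolution_def, ← integral_const_mul, mul_left_comm, mul_assoc]

lemma integral_sub_const_mul (hA : Integrable A) (hκ : Continuous κ) (hκc : HasCompactSupport κ)
    (hg : Continuous g) (hgc : HasCompactSupport g) (c : ℝ) :
    ∫ x, (A x - c) * g x = ((∫ x, A x * g x) - ∫ x, A x * (κ ⋆ g) x) +
      ∫ t, g t * ((A ⋆ fun x => κ (-x)) t - c) := by
  have hAg : Integrable fun x => A x * g x :=
    hA.locallyIntegrable.integrable_smul_right_of_hasCompactSupport hg hgc
  have hgi : Integrable g := hg.integrable_of_hasCompactSupport hgc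
  have hF : Continuous (A ⋆ fun x => κ (-x)) :=
    (hκc.comp_homeomorph (Homeomorph.neg _)).continuous_convolution_right _
      hA.locallyIntegrable (hκ.comp continuous_neg)
  have hgF : Integrable fun t => g t * (A ⋆ fun x => κ (-x)) t :=
    (hg.mul hF).integrable_of_hasCompactSupport hgc.mul_right
  simp_rw [integral_mul_convolution hA hκ hκc hg hgc, sub_mul, mul_sub]
  rw [integral_sub hAg (hgi.const_mul _), integral_sub hgF (hgi.mul_const _),
    integral_const_mul, integral_mul_const]
  ring

lemma lintegral_enorm_le_eLpNorm (hr : 1 ≤ r) (hg : Continuous g)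
    (hgs : support g ⊆ Metric.ball x₀ (1 / 2)) :
    ∫⁻ x, ‖g x‖ₑ ≤ eLpNorm g (ENNReal.ofReal r) volume := by
  have : IsProbabilityMeasure (volume.restrict (Metric.ball x₀ (1 / 2))) :=
    ⟨by rw [Measure.restrict_apply_univ, Real.volume_pi_ball _ (by norm_num)]; norm_num⟩
  rw [← eLpNorm_one_eq_lintegral_enorm, ← eLpNorm_restrict_eq_of_support_subset (p := 1) hgs,
    ← eLpNorm_restrict_eq_of_support_subset (p := ENNReal.ofReal r) hgs]
  exact eLpNorm_le_eLpNorm_of_exponent_le (ENNReal.one_le_ofReal.2 hr) hg.aestronglyMeasurable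

lemma enorm_integral_mul_sub_le_of_lipschitzOnWith {F : (ι → ℝ) → ℝ} {L : ℝ≥0}
    (hF : LipschitzOnWith L F (Metric.ball x₀ (1 / 2))) (hr : 1 ≤ r) (hg : Continuous g)
    (hgs : support g ⊆ Metric.ball x₀ (1 / 2)) :
    ‖∫ t, g t * (F t - F x₀)‖ₑ ≤ L * eLpNorm g (ENNReal.ofReal r) volume := by
  have hpointwise (t : ι → ℝ) : ‖g t * (F t - F x₀)‖ₑ ≤ L * ‖g t‖ₑ := by
    by_cases ht : g t = 0
    · simp [ht]
    have hball : t ∈ Metric.ball x₀ (1 / 2) := hgs ht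
    have hdist : edist t x₀ ≤ 1 := by
      rw [edist_dist, ENNReal.ofReal_le_one]
      linarith [Metric.mem_ball.1 hball]
    rw [enorm_mul, mul_comm]
    gcongr
    rw [← edist_eq_enorm_sub]
    exact (hF hball (Metric.mem_ball_self (by norm_num))).trans (mul_le_of_le_one_right' hdist)
  calc ‖∫ t, g t * (F t - F x₀)‖ₑ ≤ ∫⁻ t, ‖g t * (F t - F x₀)‖ₑ :=
        enorm_integral_le_lintegral_enorm _
    _ ≤ ∫⁻ t, L * ‖g t‖ₑ := lintegral_mono hpointwise
    _ ≤ L * eLpNorm g (ENNReal.ofReal r) volume := by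
        rw [lintegral_const_mul' _ _ ENNReal.coe_ne_top]
        gcongr
        exact lintegral_enorm_le_eLpNorm hr hg hgs

lemma laplacian_convolution [DecidableEq ι] (hφ : ContDiff ℝ ∞ φ) (hφc : HasCompactSupport φ)
    (hg : LocallyIntegrable g) : laplacian (φ ⋆ g) = laplacian φ ⋆ g := by
  funext x
  have hconv (i : ι) : partialDeriv i (partialDeriv i (g ⋆ φ)) =
      g ⋆ partialDeriv i (partialDeriv i φ) := by
    rw [partialDeriv_convolution_right hφ hφc hg,
      partialDeriv_convolution_right (contDiff_partialDeriv hφ i)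
        (hasCompactSupport_partialDeriv hφc i) hg]
  have hint (i : ι) : ConvolutionExistsAt g (partialDeriv i (partialDeriv i φ)) x
      (ContinuousLinearMap.lsmul ℝ ℝ) volume :=
    HasCompactSupport.convolutionExists_right _
      (hasCompactSupport_partialDeriv (hasCompactSupport_partialDeriv hφc i) i) hg
      (contDiff_partialDeriv (contDiff_partialDeriv hφ i) i).continuous x
  rw [convolution_comm φ, convolution_comm _ g, laplacian]
  simp_rw [hconv, convolution_def]
  rw [← integral_finsetSum _ fun i _ => hint i]
  simp [laplacian]

/-- `∇A` has norm at most `D` in the dual of the closure of `C_c^∞(U)` under `∑ₖ ‖∂ₖw‖_r`, that is,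
in `W^{-1,r'}(U)`. -/
def WeakGradientBound [DecidableEq ι] (A : (ι → ℝ) → ℝ) (U : Set (ι → ℝ)) (r : ℝ) (D : ℝ≥0) :
    Prop :=
  ∀ i w, ContDiff ℝ ∞ w → support w ⊆ U →
    ‖∫ x, A x * partialDeriv i w x‖ₑ ≤ D * ∑ k, eLpNorm (partialDeriv k w) (ENNReal.ofReal r) volume

variable [DecidableEq ι] {U : Set (ι → ℝ)} {D : ℝ≥0}

variable (ι) in
lemma exists_enorm_integral_mul_laplacian_le {s : ℝ} (hrs : r.HolderConjugate s) :
    ∃ C : ℝ≥0, ∀ (A : (ι → ℝ) → ℝ) U D u, LocallyIntegrable A → WeakGradientBound A U r D →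
      ContDiff ℝ ∞ u → HasCompactSupport u → (∀ i, support (partialDeriv i u) ⊆ U) →
        ‖∫ x, A x * laplacian u x‖ₑ ≤
          C * D * eLpNorm (laplacian u) (ENNReal.ofReal r) volume := by
  obtain ⟨C, hC⟩ := exists_eLpNorm_partialDeriv_partialDeriv_le ι hrs
  let n : ℝ≥0 := Fintype.card ι
  refine ⟨n * (n * C), fun A U D u hA hAU hu huc hus => ?_⟩
  have hint (i : ι) : Integrable fun x => A x * partialDeriv i (partialDeriv i u) x :=
    hA.integrable_smul_right_of_hasCompactSupport
      (contDiff_partialDeriv (contDiff_partialDeriv hu i) i).continuous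
      (hasCompactSupport_partialDeriv (hasCompactSupport_partialDeriv huc i) i)
  calc ‖∫ x, A x * laplacian u x‖ₑ
      = ‖∑ i, ∫ x, A x * partialDeriv i (partialDeriv i u) x‖ₑ := by
        rw [← integral_finsetSum _ fun i _ => hint i]
        simp_rw [laplacian, Finset.mul_sum]
    _ ≤ ∑ i, ‖∫ x, A x * partialDeriv i (partialDeriv i u) x‖ₑ := enorm_sum_le _ _
    _ ≤ ∑ _i : ι, D * ∑ _k : ι, C * eLpNorm (laplacian u) (ENNReal.ofReal r) volume := by
        gcongr with i
        refine (hAU i _ (contDiff_partialDeriv hu i) (hus i)).trans ?_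
        gcongr with k
        exact hC k i u (contDiff_infty.1 hu 2) huc
    _ = ↑(n * (n * C)) * D * eLpNorm (laplacian u) (ENNReal.ofReal r) volume := by
        simp [n]
        ring

namespace IsParametrixMollifier

lemma hasCompactSupport (hκ : IsParametrixMollifier κ) : HasCompactSupport κ :=
  hasCompactSupport_of_support_subset_ball hκ.support_subset

lemma contDiff_dilate (hκ : IsParametrixMollifier κ) (ε : ℝ) : ContDiff ℝ ∞ (dilate ε κ) :=
  contDiff_const.mul (hκ.contDiff.comp (contDiff_const_smul _))

lemma hasCompactSupport_dilate (hκ : IsParametrixMollifier κ) (hε : 0 < ε) :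
    HasCompactSupport (dilate ε κ) :=
  hasCompactSupport_of_support_subset_ball (support_dilate_subset hκ.support_subset hε)

lemma exists_laplacian_eq_convolution_sub (hκ : IsParametrixMollifier κ) (hε : 0 < ε) (hε₁ : ε ≤ 1)
    (hg : Continuous g) (hgs : support g ⊆ Metric.ball x₀ (1 / 2)) :
    ∃ u : (ι → ℝ) → ℝ, ContDiff ℝ ∞ u ∧ HasCompactSupport u ∧
      (∀ i, support (partialDeriv i u) ⊆ Metric.ball x₀ 1) ∧
      laplacian u = dilate ε κ ⋆ g - κ ⋆ g := by
  obtain ⟨Γ, hΓ, hΓs, hΔΓ⟩ := hκ.exists_laplacian_eq ε hε hε₁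
  have hΓc : HasCompactSupport Γ := hasCompactSupport_of_support_subset_ball hΓs
  have hgl : LocallyIntegrable g := hg.locallyIntegrable
  refine ⟨Γ ⋆ g, hΓc.contDiff_convolution_left _ hΓ hgl,
    hΓc.convolution _ (hasCompactSupport_of_support_subset_ball hgs), fun i => ?_, ?_⟩
  · have hts : tsupport Γ ⊆ Metric.closedBall 0 (1 / 2) :=
      (closure_mono hΓs).trans Metric.closure_ball_subset_closedBall
    rw [convolution_comm, partialDeriv_convolution_right hΓ hΓc hgl]
    calc support (g ⋆ partialDeriv i Γ) ⊆ support g + support (partialDeriv i Γ) :=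
          support_convolution_subset _
      _ ⊆ Metric.ball x₀ (1 / 2) + Metric.closedBall 0 (1 / 2) :=
          Set.add_subset_add hgs ((support_partialDeriv_subset i Γ).trans hts)
      _ = Metric.ball x₀ 1 := by
          rw [ball_add_closedBall (by norm_num) (by norm_num), add_zero]
          norm_num
  · rw [laplacian_convolution hΓ hΓc hgl, funext hΔΓ]
    have hdilate : ConvolutionExists (dilate ε κ) g (ContinuousLinearMap.lsmul ℝ ℝ) volume :=
      (hκ.hasCompactSupport_dilate hε).convolutionExists_left _
        (hκ.contDiff_dilate ε).continuous hgl
    have hconv : ConvolutionExists κ g (ContinuousLinearMap.lsmul ℝ ℝ) volume :=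
      hκ.hasCompactSupport.convolutionExists_left _ hκ.contDiff.continuous hgl
    funext x
    rw [Pi.sub_apply, convolution_def, convolution_def, convolution_def,
      ← integral_sub (hdilate x) (hconv x)]
    simp

lemma continuous_dilate_convolution (hκ : IsParametrixMollifier κ) (hε : 0 < ε)
    (hg : Continuous g) : Continuous (dilate ε κ ⋆ g) :=
  ((hκ.hasCompactSupport_dilate hε).contDiff_convolution_left (n := ⊤) _
    (hκ.contDiff_dilate ε) hg.locallyIntegrable).continuous

lemma continuous_convolution (hκ : IsParametrixMollifier κ) (hg : Continuous g) :
    Continuous (κ ⋆ g) :=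
  (hκ.hasCompactSupport.contDiff_convolution_left (n := ⊤) _
    hκ.contDiff hg.locallyIntegrable).continuous

lemma abs_dilate_convolution_le (hκ : IsParametrixMollifier κ) (hε : 0 < ε) {M : ℝ}
    (hM : ∀ x, |g x| ≤ M) (x : ι → ℝ) : |(dilate ε κ ⋆ g) x| ≤ M :=
  abs_convolution_le (dilate_nonneg hκ.nonneg hε.le)
    ((integral_dilate hε).trans hκ.integral_eq_one) hM x

lemma tendsto_integral_mul_dilate_convolution (hκ : IsParametrixMollifier κ) (hA : Integrable A)
    (hg : Continuous g) (hgc : HasCompactSupport g) :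
    Tendsto (fun ε => ∫ x, A x * (dilate ε κ ⋆ g) x) (𝓝[>] 0) (𝓝 (∫ x, A x * g x)) := by
  obtain ⟨M, hM⟩ := hgc.exists_bound_of_continuous hg
  refine tendsto_integral_filter_of_dominated_convergence (fun x => |A x| * M) ?_ ?_
    (hA.abs.mul_const M) (Eventually.of_forall fun x =>
      (tendsto_dilate_convolution hκ.support_subset hκ.nonneg hκ.integral_eq_one hg x).const_mul _)
  · filter_upwards [eventually_mem_nhdsWithin] with ε hε
    exact hA.aestronglyMeasurable.mul (hκ.continuous_dilate_convolution hε hg).aestronglyMeasurable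
  · filter_upwards [eventually_mem_nhdsWithin] with ε hε
    refine Eventually.of_forall fun x => ?_
    rw [Real.norm_eq_abs, abs_mul]
    exact mul_le_mul_of_nonneg_left (hκ.abs_dilate_convolution_le hε hM x) (abs_nonneg _)

lemma enorm_integral_sub_integral_convolution_le (hκ : IsParametrixMollifier κ) (hr : 1 ≤ r)
    {C : ℝ≥0}
    (hC : ∀ u, ContDiff ℝ ∞ u → HasCompactSupport u →
      (∀ i, support (partialDeriv i u) ⊆ Metric.ball x₀ 1) →
        ‖∫ x, A x * laplacian u x‖ₑ ≤ C * eLpNorm (laplacian u) (ENNReal.ofReal r) volume)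
    (hA : Integrable A) (hg : Continuous g) (hgs : support g ⊆ Metric.ball x₀ (1 / 2)) :
    ‖(∫ x, A x * g x) - ∫ x, A x * (κ ⋆ g) x‖ₑ ≤
      2 * C * eLpNorm g (ENNReal.ofReal r) volume := by
  have hgc : HasCompactSupport g := hasCompactSupport_of_support_subset_ball hgs
  obtain ⟨M, hM⟩ := hgc.exists_bound_of_continuous hg
  have hconv : Continuous (κ ⋆ g) := hκ.continuous_convolution hg
  refine le_of_tendsto ((hκ.tendsto_integral_mul_dilate_convolution hA hg hgc).sub_const _).enorm ?_
  filter_upwards [Ioc_mem_nhdsGT one_pos] with ε ⟨hε, hε₁⟩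
  have hdilate : Continuous (dilate ε κ ⋆ g) := hκ.continuous_dilate_convolution hε hg
  obtain ⟨u, hu, huc, hus, hΔu⟩ := hκ.exists_laplacian_eq_convolution_sub hε hε₁ hg hgs
  have hintegral : (∫ x, A x * (dilate ε κ ⋆ g) x) - ∫ x, A x * (κ ⋆ g) x =
      ∫ x, A x * laplacian u x := by
    rw [hΔu, ← integral_sub
      (hA.mul_bdd hdilate.aestronglyMeasurable (Eventually.of_forall
        (hκ.abs_dilate_convolution_le hε hM)))
      (hA.mul_bdd hconv.aestronglyMeasurable (Eventually.of_forall
        (abs_convolution_le hκ.nonneg hκ.integral_eq_one hM)))]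
    simp [mul_sub]
  have hnorm : eLpNorm (laplacian u) (ENNReal.ofReal r) volume ≤
      2 * eLpNorm g (ENNReal.ofReal r) volume := by
    rw [hΔu, two_mul]
    refine (eLpNorm_sub_le hdilate.aestronglyMeasurable hconv.aestronglyMeasurable
      (by simpa using hr)).trans (add_le_add ?_ ?_)
    · exact eLpNorm_convolution_le (hκ.contDiff_dilate ε).continuous.measurable
        (dilate_nonneg hκ.nonneg hε.le) ((integral_dilate hε).trans hκ.integral_eq_one) hg hr
    · exact eLpNorm_convolution_le hκ.contDiff.continuous.measurable hκ.nonneg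
        hκ.integral_eq_one hg hr
  calc _ = ‖∫ x, A x * laplacian u x‖ₑ := by rw [hintegral]
    _ ≤ C * (2 * eLpNorm g (ENNReal.ofReal r) volume) := (hC u hu huc hus).trans (by gcongr)
    _ = 2 * C * eLpNorm g (ENNReal.ofReal r) volume := by ring

end IsParametrixMollifier

lemma norm_le_sum_norm_apply_single {E : Type*} [NormedAddCommGroup E] [NormedSpace ℝ E]
    (L : (ι → ℝ) →L[ℝ] E) : ‖L‖ ≤ ∑ i, ‖L (Pi.single i 1)‖ := by
  refine L.opNorm_le_bound (by positivity) fun v => ?_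
  have hv : L v = ∑ i, v i • L (Pi.single i 1) := by
    conv_lhs => rw [pi_eq_sum_univ' v, map_sum]
    simp
  rw [hv, Finset.sum_mul]
  refine norm_sum_le_of_le _ fun i _ => ?_
  rw [norm_smul, mul_comm]
  exact mul_le_mul_of_nonneg_left (norm_le_pi_norm v i) (norm_nonneg _)

namespace WeakGradientBound

lemma enorm_partialDeriv_convolution_le (hAU : WeakGradientBound A U r D)
    (hA : LocallyIntegrable A) (hφ : ContDiff ℝ ∞ φ) (hφs : support φ ⊆ Metric.ball 0 (1 / 2))
    {y : ι → ℝ} (hy : Metric.ball y (1 / 2) ⊆ U) (i : ι) :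
    ‖partialDeriv i (A ⋆ φ) y‖ₑ ≤
      D * ∑ k, eLpNorm (partialDeriv k φ) (ENNReal.ofReal r) volume := by
  let w : (ι → ℝ) → ℝ := fun x => φ (y - x)
  have hws : support w ⊆ U := fun x hx => hy (by
    have := hφs (show y - x ∈ support φ from hx)
    rwa [mem_ball_zero_iff, ← dist_eq_norm, dist_comm] at this)
  have hconv : partialDeriv i (A ⋆ φ) y = -∫ x, A x * partialDeriv i w x := by
    rw [partialDeriv_convolution_right hφ (hasCompactSupport_of_support_subset_ball hφs) hA,
      partialDeriv_comp_const_sub, convolution_def, ← integral_neg]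
    simp
  have hnorm (k : ι) : eLpNorm (partialDeriv k w) (ENNReal.ofReal r) volume =
      eLpNorm (partialDeriv k φ) (ENNReal.ofReal r) volume := by
    rw [partialDeriv_comp_const_sub, ← eLpNorm_comp_measurePreserving
      (contDiff_partialDeriv hφ k).continuous.aestronglyMeasurable
      (Measure.measurePreserving_sub_left volume y)]
    exact eLpNorm_neg _ _ _
  rw [hconv, enorm_neg]
  exact (hAU i w (hφ.comp (contDiff_const.sub contDiff_id)) hws).trans_eq (by simp_rw [hnorm])

lemma lipschitzOnWith_convolution (hAU : WeakGradientBound A (Metric.ball x₀ 1) r D)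
    (hA : LocallyIntegrable A) (hφ : ContDiff ℝ ∞ φ) (hφs : support φ ⊆ Metric.ball 0 (1 / 2))
    {K : ℝ≥0} (hK : ∑ k, eLpNorm (partialDeriv k φ) (ENNReal.ofReal r) volume ≤ K) :
    LipschitzOnWith (Fintype.card ι * (D * K)) (A ⋆ φ) (Metric.ball x₀ (1 / 2)) := by
  have hφc : HasCompactSupport φ := hasCompactSupport_of_support_subset_ball hφs
  refine (convex_ball x₀ (1 / 2)).lipschitzOnWith_of_nnnorm_fderiv_le
    (fun y _ => (hφc.hasFDerivAt_convolution_right _ hA (hφ.of_le (by simp)) y).differentiableAt)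
    fun y hy => ?_
  have hball : Metric.ball y (1 / 2) ⊆ Metric.ball x₀ 1 :=
    Metric.ball_subset_ball' (by linarith [Metric.mem_ball.1 hy])
  have hpartial (i : ι) : ‖partialDeriv i (A ⋆ φ) y‖₊ ≤ D * K :=
    enorm_le_coe.1 ((hAU.enorm_partialDeriv_convolution_le hA hφ hφs hball i).trans
      (by push_cast; gcongr))
  calc ‖fderiv ℝ (A ⋆ φ) y‖ ≤ ∑ i, ‖partialDeriv i (A ⋆ φ) y‖ := norm_le_sum_norm_apply_single _
    _ ≤ ∑ _i : ι, (D * K : ℝ) := Finset.sum_le_sum fun i _ => mod_cast hpartial i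
    _ = _ := by simp

end WeakGradientBound

variable (ι) in
lemma exists_enorm_integral_sub_const_mul_le [Nonempty ι] {s : ℝ} (hrs : r.HolderConjugate s) :
    ∃ C : ℝ≥0, ∀ (A : (ι → ℝ) → ℝ) D x₀, Integrable A →
      WeakGradientBound A (Metric.ball x₀ 1) r D → ∃ c : ℝ, ∀ g, Continuous g →
        support g ⊆ Metric.ball x₀ (1 / 2) →
          ‖∫ x, (A x - c) * g x‖ₑ ≤ C * D * eLpNorm g (ENNReal.ofReal r) volume := by
  obtain ⟨κ, hκ⟩ := exists_isParametrixMollifier ι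
  obtain ⟨C, hC⟩ := exists_enorm_integral_mul_laplacian_le ι hrs
  let κ' : (ι → ℝ) → ℝ := fun x => κ (-x)
  have hκ' : ContDiff ℝ ∞ κ' := hκ.contDiff.comp contDiff_neg
  have hκs' : support κ' ⊆ Metric.ball 0 (1 / 2) := fun x hx => by
    simpa using hκ.support_subset (show -x ∈ support κ from hx)
  have hκc' : HasCompactSupport κ' := hasCompactSupport_of_support_subset_ball hκs'
  obtain ⟨K, hK⟩ : ∃ K : ℝ≥0,
      ∑ k, eLpNorm (partialDeriv k κ') (ENNReal.ofReal r) volume = K :=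
    (ENNReal.canLift.prf _ (ENNReal.sum_ne_top.2 fun k _ =>
      ((contDiff_partialDeriv hκ' k).continuous.memLp_of_hasCompactSupport
        (hasCompactSupport_partialDeriv hκc' k)).eLpNorm_ne_top)).imp fun _ => Eq.symm
  refine ⟨2 * C + Fintype.card ι * K, fun A D x₀ hA hAU => ⟨(A ⋆ κ') x₀, fun g hg hgs => ?_⟩⟩
  have hgc : HasCompactSupport g := hasCompactSupport_of_support_subset_ball hgs
  have hlaplacian (u : (ι → ℝ) → ℝ) (hu : ContDiff ℝ ∞ u) (huc : HasCompactSupport u)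
      (hus : ∀ i, support (partialDeriv i u) ⊆ Metric.ball x₀ 1) :
      ‖∫ x, A x * laplacian u x‖ₑ ≤
        (C * D : ℝ≥0) * eLpNorm (laplacian u) (ENNReal.ofReal r) volume := by
    rw [ENNReal.coe_mul]
    exact hC A _ D u hA.locallyIntegrable hAU hu huc hus
  have hlip := hAU.lipschitzOnWith_convolution hA.locallyIntegrable hκ' hκs' hK.le
  rw [integral_sub_const_mul hA hκ.contDiff.continuous hκ.hasCompactSupport hg hgc]
  refine (enorm_add_le _ _).trans ((add_le_add
    (hκ.enorm_integral_sub_integral_convolution_le hrs.lt.le hlaplacian hA hg hgs)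
    (enorm_integral_mul_sub_le_of_lipschitzOnWith hlip hrs.lt.le hg hgs)).trans_eq ?_)
  push_cast
  ring

end LocalNecas

/-! ### The Nečas inequality on the cube -/

section Duality

open scoped NNReal Topology BoundedContinuousFunction
open Filter Function

lemma continuous_signedPow {t : ℝ} (ht : -1 < t) : Continuous (signedPow t) := by
  have hsplit : signedPow t = fun a => (max a 0) ^ (t + 1) - (max (-a) 0) ^ (t + 1) := by
    funext a
    rcases le_total 0 a with h | h
    · simp [signedPow_of_nonneg ht h, h, Real.zero_rpow (by linarith : t + 1 ≠ 0)]
    · rw [← neg_neg a, signedPow_neg, signedPow_of_nonneg ht (neg_nonneg.2 h)]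
      simp [h, Real.zero_rpow (by linarith : t + 1 ≠ 0)]
  rw [hsplit]
  exact ((continuous_id.max continuous_const).rpow_const fun _ => .inr (by linarith)).sub
    ((continuous_neg.max continuous_const).rpow_const fun _ => .inr (by linarith))

lemma eLpNorm_signedPow_sub_two {α : Type*} [MeasurableSpace α] {μ : Measure α} {r s : ℝ}
    (hrs : r.HolderConjugate s) (b : α → ℝ) :
    eLpNorm (fun x => signedPow (s - 2) (b x)) (ENNReal.ofReal r) μ =
      eLpNorm b (ENNReal.ofReal s) μ ^ (s - 1) := by
  rw [← eLpNorm_norm]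
  simp_rw [Real.norm_eq_abs, abs_signedPow_sub_two hrs.symm.lt, ← Real.norm_eq_abs]
  rw [eLpNorm_norm_rpow _ hrs.symm.sub_one_pos, ← ENNReal.ofReal_mul hrs.nonneg, mul_comm,
    hrs.symm.sub_one_mul_conj]

lemma enorm_integral_eq_lintegral_enorm {α : Type*} [MeasurableSpace α] {μ : Measure α}
    {f : α → ℝ} (hf : ∀ x, 0 ≤ f x) (hfi : Integrable f μ) :
    ‖∫ x, f x ∂μ‖ₑ = ∫⁻ x, ‖f x‖ₑ ∂μ := by
  simp_rw [Real.enorm_of_nonneg (integral_nonneg hf), Real.enorm_of_nonneg (hf _)]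
  exact ofReal_integral_eq_lintegral_ofReal hfi (.of_forall hf)

variable {X : Type*} [TopologicalSpace X]

lemma exists_seq_continuous_tendsto_one [HasOuterApproxClosed X] {U : Set X} (hU : IsOpen U) :
    ∃ θ : ℕ → X → ℝ, (∀ n, Continuous (θ n)) ∧ (∀ n x, θ n x ∈ Set.Icc 0 1) ∧
      (∀ n, support (θ n) ⊆ U) ∧ ∀ x ∈ U, Tendsto (fun n => θ n x) atTop (𝓝 1) := by
  let f := hU.isClosed_compl.apprSeq
  refine ⟨fun n x => 1 - f n x, fun n => by fun_prop, fun n x => ⟨sub_nonneg.2 ?_, by simp⟩,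
    fun n => support_subset_iff'.2 fun x hx => ?_, fun x hx => ?_⟩
  · exact mod_cast HasOuterApproxClosed.apprSeq_apply_le_one hU.isClosed_compl n x
  · simp [f, HasOuterApproxClosed.apprSeq_apply_eq_one hU.isClosed_compl n hx]
  · have h := tendsto_pi_nhds.1 (HasOuterApproxClosed.tendsto_apprSeq hU.isClosed_compl) x
    rw [Set.indicator_of_notMem (Set.notMem_compl_iff.2 hx)] at h
    simpa using (NNReal.tendsto_coe.2 h).const_sub 1

variable [MeasurableSpace X] [BorelSpace X] {μ : Measure X} {U : Set X} {r s : ℝ} {b : X → ℝ}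

lemma lintegral_enorm_rpow_le_of_forall_enorm_setIntegral_mul_le
    (hrs : r.HolderConjugate s) {D : ℝ≥0∞} (hb : Continuous b)
    (hbs : MemLp b (ENNReal.ofReal s) (μ.restrict U)) {θ : X → ℝ} (hθ : Continuous θ)
    (hθ01 : ∀ x, θ x ∈ Set.Icc 0 1) (hθU : support θ ⊆ U)
    (hdual : ∀ g, Continuous g → support g ⊆ U →
      ‖∫ x in U, b x * g x ∂μ‖ₑ ≤ D * eLpNorm g (ENNReal.ofReal r) (μ.restrict U)) :
    ∫⁻ x in U, ‖θ x‖ₑ * ‖b x‖ₑ ^ s ∂μ ≤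
      D * eLpNorm (fun x => signedPow (s - 2) (b x)) (ENNReal.ofReal r) (μ.restrict U) := by
  have hs := hrs.symm.lt
  let g : X → ℝ := fun x => θ x * signedPow (s - 2) (b x)
  have hg : Continuous g := hθ.mul ((continuous_signedPow (by linarith)).comp hb)
  have hgU : support g ⊆ U := (support_mul_subset_left _ _).trans hθU
  have hbg (x : X) : b x * g x = θ x * |b x| ^ s := by
    rw [mul_left_comm, self_mul_signedPow (by linarith), sub_add_cancel]
  have hbg_nonneg (x : X) : 0 ≤ b x * g x := by
    rw [hbg]
    exact mul_nonneg (hθ01 x).1 (Real.rpow_nonneg (abs_nonneg _) _)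
  have hbg_int : IntegrableOn (fun x => b x * g x) U μ := by
    have hb_int := hbs.integrable_norm_rpow (by simpa using hrs.symm.pos) ENNReal.ofReal_ne_top
    rw [ENNReal.toReal_ofReal hrs.symm.nonneg] at hb_int
    refine hb_int.mono' (hb.mul hg).aestronglyMeasurable (.of_forall fun x => ?_)
    rw [Real.norm_of_nonneg (hbg_nonneg x), hbg]
    exact mul_le_of_le_one_left (Real.rpow_nonneg (abs_nonneg _) _) (hθ01 x).2
  calc ∫⁻ x in U, ‖θ x‖ₑ * ‖b x‖ₑ ^ s ∂μ = ∫⁻ x in U, ‖b x * g x‖ₑ ∂μ := by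
        refine lintegral_congr fun x => ?_
        rw [hbg, enorm_mul, Real.enorm_rpow_of_nonneg (abs_nonneg _) hrs.symm.nonneg,
          Real.enorm_abs]
    _ = ‖∫ x in U, b x * g x ∂μ‖ₑ := (enorm_integral_eq_lintegral_enorm hbg_nonneg hbg_int).symm
    _ ≤ D * eLpNorm g (ENNReal.ofReal r) (μ.restrict U) := hdual g hg hgU
    _ ≤ _ := by
        gcongr
        refine eLpNorm_mono fun x => ?_
        rw [norm_mul, Real.norm_of_nonneg (hθ01 x).1]
        exact mul_le_of_le_one_left (norm_nonneg _) (hθ01 x).2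

lemma eLpNorm_le_of_forall_enorm_setIntegral_mul_le [HasOuterApproxClosed X] (hU : IsOpen U)
    (hrs : r.HolderConjugate s) {D : ℝ≥0∞} (hb : Continuous b)
    (hbs : MemLp b (ENNReal.ofReal s) (μ.restrict U))
    (hdual : ∀ g, Continuous g → support g ⊆ U →
      ‖∫ x in U, b x * g x ∂μ‖ₑ ≤ D * eLpNorm g (ENNReal.ofReal r) (μ.restrict U)) :
    eLpNorm b (ENNReal.ofReal s) (μ.restrict U) ≤ D := by
  obtain ⟨θ, hθ, hθ01, hθU, hlim⟩ := exists_seq_continuous_tendsto_one hU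
  set N := eLpNorm b (ENNReal.ofReal s) (μ.restrict U) with hN
  rcases eq_or_ne N 0 with hN0 | hN0
  · simp [hN0]
  have hpow : N ^ s ≤ D * N ^ (s - 1) := by
    calc N ^ s = ∫⁻ x in U, ‖b x‖ₑ ^ s ∂μ := by
          rw [hN, eLpNorm_eq_eLpNorm' (by simpa using hrs.symm.pos) ENNReal.ofReal_ne_top,
            ENNReal.toReal_ofReal hrs.symm.nonneg,
            lintegral_rpow_enorm_eq_rpow_eLpNorm' hrs.symm.pos]
      _ = ∫⁻ x in U, liminf (fun n => ‖θ n x‖ₑ * ‖b x‖ₑ ^ s) atTop ∂μ := by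
          refine setLIntegral_congr_fun hU.measurableSet fun x hx => (Tendsto.liminf_eq ?_).symm
          simpa using ENNReal.Tendsto.mul_const (hlim x hx).enorm (.inl (by simp))
      _ ≤ liminf (fun n => ∫⁻ x in U, ‖θ n x‖ₑ * ‖b x‖ₑ ^ s ∂μ) atTop :=
          lintegral_liminf_le fun n => by fun_prop
      _ ≤ D * N ^ (s - 1) := by
          refine liminf_le_of_le (by isBoundedDefault) fun c hc => ?_
          obtain ⟨n, hn⟩ := hc.exists
          rw [hN, ← eLpNorm_signedPow_sub_two hrs]
          exact hn.trans (lintegral_enorm_rpow_le_of_forall_enorm_setIntegral_mul_le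
            hrs hb hbs (hθ n) (hθ01 n) (hθU n) hdual)
  rw [← sub_add_cancel s 1, ENNReal.rpow_add _ _ hN0 hbs.eLpNorm_ne_top, ENNReal.rpow_one,
    add_sub_cancel_right, mul_comm] at hpow
  exact (ENNReal.mul_le_mul_iff_left (ENNReal.rpow_pos hN0.bot_lt hbs.eLpNorm_ne_top).ne'
    (by finiteness)).1 hpow

end Duality

section UnitCube

open scoped NNReal

/-- The open unit cube `(0, 1)^ι`. -/
def unitCube (ι : Type*) : Set (ι → ℝ) := Set.univ.pi fun _ => Set.Ioo 0 1

variable {ι : Type*} {x : ι → ℝ}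

lemma mem_unitCube : x ∈ unitCube ι ↔ ∀ j, x j ∈ Set.Ioo (0 : ℝ) 1 := by simp [unitCube]

lemma unitCube_subset_Icc : unitCube ι ⊆ Set.Icc 0 1 := fun _ hx =>
  ⟨fun j => (mem_unitCube.1 hx j).1.le, fun j => (mem_unitCube.1 hx j).2.le⟩

lemma closure_unitCube : closure (unitCube ι) = Set.Icc 0 1 := by
  rw [unitCube, closure_pi_set]
  simp only [closure_Ioo (zero_ne_one (α := ℝ))]
  exact Set.pi_univ_Icc _ _

lemma measurableSet_unitCube [Countable ι] : MeasurableSet (unitCube ι) :=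
  .univ_pi fun _ => measurableSet_Ioo

lemma isOpen_unitCube [Finite ι] : IsOpen (unitCube ι) :=
  isOpen_set_pi Set.finite_univ fun _ _ => isOpen_Ioo

lemma Icc_mem_nhds_of_mem_unitCube [Finite ι] (hx : x ∈ unitCube ι) :
    Set.Icc (0 : ι → ℝ) 1 ∈ nhds x :=
  Filter.mem_of_superset (isOpen_unitCube.mem_nhds hx) unitCube_subset_Icc

lemma uniqueDiffOn_Icc_zero_one [Finite ι] : UniqueDiffOn ℝ (Set.Icc (0 : ι → ℝ) 1) := by
  cases nonempty_fintype ι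
  refine uniqueDiffOn_convex (convex_Icc _ _) ⟨fun _ => 1 / 2, mem_interior_iff_mem_nhds.2 ?_⟩
  exact Icc_mem_nhds_of_mem_unitCube (mem_unitCube.2 fun _ => by norm_num)

lemma mem_frontier_unitCube_iff [Finite ι] :
    x ∈ frontier (unitCube ι) ↔ x ∈ Set.Icc 0 1 ∧ ∃ k, x k = 0 ∨ x k = 1 := by
  rw [isOpen_unitCube.frontier_eq, closure_unitCube, Set.mem_sdiff, mem_unitCube, not_forall]
  refine and_congr_right fun hx => exists_congr fun k => ?_
  have h0 : 0 ≤ x k := hx.1 k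
  have h1 : x k ≤ 1 := hx.2 k
  grind

variable [Fintype ι]

lemma unitCube_eq_ball : unitCube ι = Metric.ball (fun _ => 1 / 2) (1 / 2) := by
  rw [ball_pi _ (by norm_num), unitCube]
  norm_num [Real.ball_eq_Ioo]

instance : IsProbabilityMeasure (volume.restrict (unitCube ι)) :=
  ⟨by simp [unitCube, Real.volume_pi_Ioo]⟩

lemma unitCube_ae_eq_Icc : (unitCube ι : Set (ι → ℝ)) =ᵐ[volume] Set.Icc 0 1 :=
  Measure.univ_pi_Ioo_ae_eq_Icc

lemma integrableOn_unitCube_of_continuousOn {f : (ι → ℝ) → ℝ}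
    (hf : ContinuousOn f (Set.Icc 0 1)) : IntegrableOn f (unitCube ι) :=
  (hf.integrableOn_compact isCompact_Icc).mono_set unitCube_subset_Icc

end UnitCube

section Reflection

open scoped NNReal ContDiff
open Filter Function

/-- The slopes of the five affine maps `t`, `-t`, `-2t`, `2 - t`, `3 - 2t` of a higher-order
reflection across the end points of `[0, 1]`. -/
noncomputable def reflectionSlope : Fin 5 → ℝ := ![1, -1, -2, -1, -2]

/-- The constant terms of the five affine maps whose slopes are `reflectionSlope`. -/
noncomputable def reflectionOffset : Fin 5 → ℝ := ![0, 0, 0, 2, 3]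

/-- The weights of the five affine maps. They make both the weights and the quotients of weights
by slopes cancel at `0` (first three maps) and at `1` (first and last two maps). -/
noncomputable def reflectionWeight : Fin 5 → ℝ := ![1, 3, -4, 3, -4]

variable {ι : Type*} {m : ι → Fin 5} {x : ι → ℝ} {w : (ι → ℝ) → ℝ}

/-- The affine map of `ι → ℝ` that acts on the coordinate `j` as the affine map number `m j`. -/
noncomputable def reflectionMap (m : ι → Fin 5) (x : ι → ℝ) : ι → ℝ :=
  fun j => reflectionSlope (m j) * x j + reflectionOffset (m j)

lemma one_le_abs_reflectionSlope (c : Fin 5) : 1 ≤ |reflectionSlope c| := by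
  fin_cases c <;> simp [reflectionSlope]

lemma reflectionSlope_ne_zero (c : Fin 5) : reflectionSlope c ≠ 0 :=
  abs_pos.1 (one_pos.trans_le (one_le_abs_reflectionSlope c))

lemma reflectionMap_zero (x : ι → ℝ) : reflectionMap 0 x = x := by
  funext j
  simp [reflectionMap, reflectionSlope, reflectionOffset]

lemma reflectionMap_notMem_unitCube (hm : m ≠ 0) (hx : x ∈ unitCube ι) :
    reflectionMap m x ∉ unitCube ι := by
  obtain ⟨j, hj⟩ := Function.ne_iff.1 hm
  obtain ⟨hx0, hx1⟩ := mem_unitCube.1 hx j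
  intro hmem
  obtain ⟨h0, h1⟩ := mem_unitCube.1 hmem j
  rw [reflectionMap] at h0 h1
  generalize m j = c at hj h0 h1
  fin_cases c <;> simp [reflectionSlope, reflectionOffset] at hj h0 h1 <;> linarith

lemma sum_mul_reflection_eq_zero {b : Fin 5 → ℝ} {u : ℝ → ℝ} {t : ℝ}
    (hb0 : b 0 + b 1 + b 2 = 0) (hb1 : b 0 + b 3 + b 4 = 0)
    (hu : support u ⊆ Set.Ioo (-1 / 2) (3 / 2)) (ht : t = 0 ∨ t = 1) :
    ∑ c, b c * u (reflectionSlope c * t + reflectionOffset c) = 0 := by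
  have hu_out (s : ℝ) (hs : s ∉ Set.Ioo (-1 / 2 : ℝ) (3 / 2)) : u s = 0 :=
    notMem_support.1 fun h => hs (hu h)
  rcases ht with rfl | rfl
  · have h2 : u 2 = 0 := hu_out 2 (by norm_num)
    have h3 : u 3 = 0 := hu_out 3 (by norm_num)
    simp only [Fin.sum_univ_five, mul_zero, zero_add]
    simp only [reflectionOffset, Matrix.cons_val, h2, h3]
    linear_combination u 0 * hb0
  · have h1 : u (-1) = 0 := hu_out (-1) (by norm_num)
    have h2 : u (-2) = 0 := hu_out (-2) (by norm_num)
    simp only [Fin.sum_univ_five, reflectionSlope, reflectionOffset, Matrix.cons_val]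
    norm_num only [h1, h2]
    linear_combination u 1 * hb1

/-- The weights for which `partialDeriv i ∘ reflectionSum (primitiveWeight i)` is
`reflectionSum (fun _ => reflectionWeight) ∘ partialDeriv i`. -/
noncomputable def primitiveWeight [DecidableEq ι] (i : ι) : ι → Fin 5 → ℝ :=
  update (fun _ => reflectionWeight) i (reflectionWeight / reflectionSlope)

lemma sum_primitiveWeight_eq_zero [DecidableEq ι] (i k : ι) :
    primitiveWeight i k 0 + primitiveWeight i k 1 + primitiveWeight i k 2 = 0 ∧
      primitiveWeight i k 0 + primitiveWeight i k 3 + primitiveWeight i k 4 = 0 := by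
  by_cases hki : k = i
  · subst hki
    constructor <;> simp [primitiveWeight, reflectionWeight, reflectionSlope] <;> norm_num
  · constructor <;> simp [primitiveWeight, hki, reflectionWeight] <;> norm_num

lemma contDiff_reflectionMap (m : ι → Fin 5) [Fintype ι] : ContDiff ℝ ∞ (reflectionMap m) := by
  unfold reflectionMap
  fun_prop

lemma continuous_reflectionMap (m : ι → Fin 5) : Continuous (reflectionMap m) := by
  unfold reflectionMap
  fun_prop

variable [Fintype ι]

lemma antilipschitzWith_reflectionMap (m : ι → Fin 5) :
    AntilipschitzWith 1 (reflectionMap m) := by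
  refine AntilipschitzWith.of_le_mul_dist fun x y => ?_
  rw [NNReal.coe_one, one_mul]
  refine (dist_pi_le_iff dist_nonneg).2 fun j => le_trans ?_ (dist_le_pi_dist _ _ j)
  rw [reflectionMap, reflectionMap, dist_add_right, Real.dist_eq, Real.dist_eq, ← mul_sub, abs_mul]
  exact le_mul_of_one_le_left (abs_nonneg _) (one_le_abs_reflectionSlope (m j))

lemma map_reflectionMap_volume (m : ι → Fin 5) :
    Measure.map (reflectionMap m) volume =
      ENNReal.ofReal |(∏ j, reflectionSlope (m j))⁻¹| • volume := by
  classical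
  let S := Matrix.diagonal fun j => reflectionSlope (m j)
  have hdet : S.det ≠ 0 := by
    simp [S, Finset.prod_ne_zero_iff, reflectionSlope_ne_zero]
  have hcomp : reflectionMap m = (· + fun j => reflectionOffset (m j)) ∘ S.toLin' := by
    funext x j
    simp [reflectionMap, S, Matrix.mulVec_diagonal]
  rw [hcomp, ← Measure.map_map (by fun_prop)
    (LinearMap.continuous_of_finiteDimensional _).measurable,
    Real.map_matrix_volume_pi_eq_smul_volume_pi hdet, Measure.map_smul,
    (measurePreserving_add_right volume _).map_eq, Matrix.det_diagonal]

lemma eLpNorm_comp_reflectionMap_le {f : (ι → ℝ) → ℝ} (hf : Continuous f) (m : ι → Fin 5)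
    (p : ℝ≥0∞) : eLpNorm (fun x => f (reflectionMap m x)) p volume ≤ eLpNorm f p volume := by
  have hmap : Measure.map (reflectionMap m) volume ≤ volume := by
    rw [map_reflectionMap_volume]
    refine Measure.le_iff.2 fun s _ => mul_le_of_le_one_left' ?_
    rw [ENNReal.ofReal_le_one, abs_inv, Finset.abs_prod]
    exact inv_le_one_of_one_le₀
      (Finset.one_le_prod fun j _ => one_le_abs_reflectionSlope (m j))
  calc eLpNorm (f ∘ reflectionMap m) p volume
      = eLpNorm f p (Measure.map (reflectionMap m) volume) :=
        (eLpNorm_map_measure hf.aestronglyMeasurable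
          (continuous_reflectionMap m).aemeasurable).symm
    _ ≤ eLpNorm f p volume := eLpNorm_mono_measure f hmap

lemma exists_integrable_integral_mul_eq_comp_reflectionMap {a : (ι → ℝ) → ℝ}
    (ha : IntegrableOn a (unitCube ι)) (m : ι → Fin 5) :
    ∃ A, Integrable A ∧
      ∀ f : (ι → ℝ) → ℝ, ∫ x, A x * f x = ∫ x in unitCube ι, a x * f (reflectionMap m x) := by
  let κ := |(∏ j, reflectionSlope (m j))⁻¹|
  have hκ : κ ≠ 0 := by simp [κ, Finset.prod_ne_zero_iff, reflectionSlope_ne_zero]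
  have hκ₀ : 0 ≤ κ := abs_nonneg _
  have hinj := (antilipschitzWith_reflectionMap m).injective
  have hemb := (continuous_reflectionMap m).measurableEmbedding hinj
  let A := extend (reflectionMap m) ((unitCube ι).indicator a) 0
  have hA (x : ι → ℝ) : A (reflectionMap m x) = (unitCube ι).indicator a x :=
    hinj.extend_apply _ _ _
  have hmap : Measure.map (reflectionMap m) volume = ENNReal.ofReal κ • volume :=
    map_reflectionMap_volume m
  refine ⟨fun x => κ * A x, .const_mul ?_ _, fun f => ?_⟩
  · rw [← integrable_smul_measure (ENNReal.ofReal_pos.2 (hκ₀.lt_of_ne' hκ)).ne'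
      ENNReal.ofReal_ne_top, ← hmap, hemb.integrable_map_iff]
    exact ((integrable_indicator_iff measurableSet_unitCube).2 ha).congr
      (.of_forall fun x => (hA x).symm)
  · calc ∫ x, κ * A x * f x = ∫ x, A x * f x ∂Measure.map (reflectionMap m) volume := by
          rw [hmap, integral_smul_measure, ENNReal.toReal_ofReal hκ₀, smul_eq_mul,
            ← integral_const_mul]
          simp_rw [mul_assoc]
      _ = ∫ x in unitCube ι, a x * f (reflectionMap m x) := by
          simp_rw [hemb.integral_map, hA, ← integral_indicator measurableSet_unitCube,
            Set.indicator_mul_left]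

variable [DecidableEq ι]

/-- The combination `∑ₘ (∏ⱼ β j (m j)) f ∘ reflectionMap m` of reflections, a tensor product of
one-dimensional reflections with weights `β j`. -/
noncomputable def reflectionSum (β : ι → Fin 5 → ℝ) (f : (ι → ℝ) → ℝ) (x : ι → ℝ) : ℝ :=
  ∑ m : ι → Fin 5, (∏ j, β j (m j)) * f (reflectionMap m x)

lemma reflectionSum_reflectionWeight_of_support_subset {g : (ι → ℝ) → ℝ}
    (hg : support g ⊆ unitCube ι) (hx : x ∈ unitCube ι) :
    reflectionSum (fun _ => reflectionWeight) g x = g x := by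
  rw [reflectionSum, Finset.sum_eq_single 0 (fun m _ hm => ?_) (by simp), reflectionMap_zero]
  · simp [reflectionWeight]
  · rw [notMem_support.1 fun h => reflectionMap_notMem_unitCube hm hx (hg h), mul_zero]

lemma exists_integrable_integral_mul_eq_reflectionSum {a : (ι → ℝ) → ℝ}
    (ha : ContinuousOn a (Set.Icc 0 1)) (β : ι → Fin 5 → ℝ) :
    ∃ A, Integrable A ∧ ∀ f : (ι → ℝ) → ℝ, Continuous f → HasCompactSupport f →
      ∫ x, A x * f x = ∫ x in unitCube ι, a x * reflectionSum β f x := by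
  choose A hA hAf using exists_integrable_integral_mul_eq_comp_reflectionMap
    (integrableOn_unitCube_of_continuousOn ha)
  refine ⟨fun x => ∑ m, (∏ j, β j (m j)) * A m x,
    integrable_finsetSum _ fun m _ => (hA m).const_mul _, fun f hf hfc => ?_⟩
  have hAf_int (m : ι → Fin 5) : Integrable fun x => A m x * f x :=
    (hA m).locallyIntegrable.integrable_smul_right_of_hasCompactSupport hf hfc
  have haf_int (m : ι → Fin 5) :
      IntegrableOn (fun x => a x * f (reflectionMap m x)) (unitCube ι) :=
    integrableOn_unitCube_of_continuousOn
      (ha.mul (hf.comp (continuous_reflectionMap m)).continuousOn)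
  simp_rw [reflectionSum, Finset.sum_mul, Finset.mul_sum, mul_assoc, mul_left_comm (a _)]
  rw [integral_finsetSum _ fun m _ => (hAf_int m).const_mul _,
    integral_finsetSum _ fun m _ => (haf_int m).const_mul _]
  simp_rw [integral_const_mul, hAf]

lemma contDiff_reflectionSum (β : ι → Fin 5 → ℝ) (hw : ContDiff ℝ ∞ w) :
    ContDiff ℝ ∞ (reflectionSum β w) :=
  ContDiff.sum fun m _ => contDiff_const.mul (hw.comp (contDiff_reflectionMap m))

lemma hasCompactSupport_reflectionSum (β : ι → Fin 5 → ℝ) (hw : HasCompactSupport w) :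
    HasCompactSupport (reflectionSum β w) := by
  rw [hasCompactSupport_iff_eventuallyEq, coclosedCompact_eq_cocompact,
    ← Metric.cobounded_eq_cocompact] at hw ⊢
  filter_upwards [eventually_all.2 fun m =>
    (antilipschitzWith_reflectionMap m).tendsto_cobounded.eventually hw] with x hx
  simp [reflectionSum, hx]

lemma partialDeriv_reflectionSum (β : ι → Fin 5 → ℝ) (hw : Differentiable ℝ w) (k : ι)
    (x : ι → ℝ) :
    partialDeriv k (reflectionSum β w) x =
      ∑ m, (∏ j, β j (m j)) * reflectionSlope (m k) * partialDeriv k w (reflectionMap m x) := by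
  have hmap (m : ι → Fin 5) : HasFDerivAt (reflectionMap m)
      (.pi fun j => reflectionSlope (m j) • .proj j) x :=
    hasFDerivAt_pi.2 fun j =>
      ((hasFDerivAt_apply (𝕜 := ℝ) (F' := fun _ : ι => ℝ) j x).const_mul _).add_const _
  have hsum := HasFDerivAt.fun_sum fun m (_ : m ∈ Finset.univ) =>
    ((hw (reflectionMap m x)).hasFDerivAt.comp x (hmap m)).const_mul (∏ j, β j (m j))
  have hsingle (m : ι → Fin 5) :
      (fun j => reflectionSlope (m j) * (Pi.single k 1 : ι → ℝ) j) =
        reflectionSlope (m k) • Pi.single k 1 := by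
    funext j
    by_cases hj : j = k <;> simp [hj]
  rw [partialDeriv, hsum.fderiv (f := reflectionSum β w), sum_apply]
  refine Finset.sum_congr rfl fun m _ => ?_
  calc (∏ j, β j (m j)) * fderiv ℝ w (reflectionMap m x)
        (fun j => reflectionSlope (m j) * (Pi.single k 1 : ι → ℝ) j)
      = _ := by rw [hsingle, map_smul, smul_eq_mul, mul_assoc, partialDeriv]

lemma prod_primitiveWeight_mul_reflectionSlope (i : ι) (m : ι → Fin 5) :
    (∏ j, primitiveWeight i j (m j)) * reflectionSlope (m i) = ∏ j, reflectionWeight (m j) := by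
  rw [Fintype.prod_eq_mul_prod_compl i, Fintype.prod_eq_mul_prod_compl i, mul_right_comm]
  congr 1
  · simp [primitiveWeight, reflectionSlope_ne_zero]
  · exact Finset.prod_congr rfl fun j hj => by
      rw [primitiveWeight, update_of_ne (by simpa using hj)]

lemma partialDeriv_reflectionSum_primitiveWeight (hw : Differentiable ℝ w) (i : ι) :
    partialDeriv i (reflectionSum (primitiveWeight i) w) =
      reflectionSum (fun _ => reflectionWeight) (partialDeriv i w) := by
  funext x
  simp_rw [partialDeriv_reflectionSum _ hw, prod_primitiveWeight_mul_reflectionSlope,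
    reflectionSum]

lemma eLpNorm_sum_mul_comp_reflectionMap_le {f : (ι → ℝ) → ℝ} (hf : Continuous f)
    (b : (ι → Fin 5) → ℝ) {p : ℝ≥0∞} (hp : 1 ≤ p) :
    eLpNorm (fun x => ∑ m, b m * f (reflectionMap m x)) p volume ≤
      (∑ m, ‖b m‖ₑ) * eLpNorm f p volume := by
  calc eLpNorm (fun x => ∑ m, b m * f (reflectionMap m x)) p volume
      = eLpNorm (∑ m, b m • fun x => f (reflectionMap m x)) p volume := by
        congr 1
        funext x
        simp
    _ ≤ ∑ m, eLpNorm (b m • fun x => f (reflectionMap m x)) p volume :=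
        eLpNorm_sum_le (fun m _ =>
          ((hf.comp (continuous_reflectionMap m)).const_smul _).aestronglyMeasurable) hp
    _ ≤ (∑ m, ‖b m‖ₑ) * eLpNorm f p volume := by
        rw [Finset.sum_mul]
        refine Finset.sum_le_sum fun m _ => ?_
        rw [eLpNorm_const_smul]
        gcongr
        exact eLpNorm_comp_reflectionMap_le hf m p

variable (ι) in
lemma exists_eLpNorm_partialDeriv_reflectionSum_le {p : ℝ≥0∞} (hp : 1 ≤ p) :
    ∃ C : ℝ≥0, ∀ (i k : ι) (w : (ι → ℝ) → ℝ), ContDiff ℝ ∞ w →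
      eLpNorm (partialDeriv k (reflectionSum (primitiveWeight i) w)) p volume ≤
        C * eLpNorm (partialDeriv k w) p volume := by
  obtain ⟨C, hC⟩ := Finite.exists_le fun ik : ι × ι =>
    ∑ m : ι → Fin 5, ‖(∏ j, primitiveWeight ik.1 j (m j)) * reflectionSlope (m ik.2)‖₊
  refine ⟨C, fun i k w hw => ?_⟩
  simp_rw [funext (partialDeriv_reflectionSum (primitiveWeight i) (hw.differentiable (by simp)) k)]
  refine (eLpNorm_sum_mul_comp_reflectionMap_le (contDiff_partialDeriv hw k).continuous _
    hp).trans ?_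
  gcongr
  simpa only [ENNReal.ofNNReal_finsetSum] using! ENNReal.coe_le_coe.2 (hC (i, k))

lemma reflectionSum_primitiveWeight_eq_zero
    (hw : support w ⊆ Metric.ball (fun _ => 1 / 2) 1) (i : ι)
    (hx : ∃ k, x k = 0 ∨ x k = 1) : reflectionSum (primitiveWeight i) w x = 0 := by
  obtain ⟨k, hk⟩ := hx
  rw [reflectionSum, ← (Equiv.funSplitAt k (Fin 5)).symm.sum_comp, Fintype.sum_prod_type,
    Finset.sum_comm]
  refine Finset.sum_eq_zero fun m' _ => ?_
  let m (c : Fin 5) : ι → Fin 5 := (Equiv.funSplitAt k (Fin 5)).symm (c, m')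
  let u (t : ℝ) : ℝ := w (update (reflectionMap (m 0) x) k t)
  have hu : support u ⊆ Set.Ioo (-1 / 2) (3 / 2) := fun t ht => by
    have hball := hw (mem_support.1 ht)
    rw [ball_pi _ one_pos, Set.mem_univ_pi] at hball
    have htk := hball k
    rw [update_self, Real.ball_eq_Ioo] at htk
    norm_num at htk ⊢
    exact htk
  have hmap (c : Fin 5) : w (reflectionMap (m c) x) =
      u (reflectionSlope c * x k + reflectionOffset c) := by
    refine congrArg w (funext fun j => ?_)
    by_cases hj : j = k
    · subst hj
      simp [reflectionMap, m]
    · simp [reflectionMap, m, hj]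
  have hprod (c : Fin 5) : ∏ j, primitiveWeight i j (m c j) =
      (∏ j : {j // j ≠ k}, primitiveWeight i j (m' j)) * primitiveWeight i k c := by
    rw [Fintype.prod_eq_mul_prod_subtype_ne _ k, mul_comm]
    congr 1
    · exact Finset.prod_congr rfl fun j _ => by simp [m, j.2]
    · simp [m]
  calc ∑ c, (∏ j, primitiveWeight i j (m c j)) * w (reflectionMap (m c) x)
      = (∏ j : {j // j ≠ k}, primitiveWeight i j (m' j)) * ∑ c, primitiveWeight i k c *
          u (reflectionSlope c * x k + reflectionOffset c) := by
        simp_rw [hmap, hprod, mul_assoc, ← Finset.mul_sum]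
    _ = 0 := by
        rw [sum_mul_reflection_eq_zero (sum_primitiveWeight_eq_zero i k).1
          (sum_primitiveWeight_eq_zero i k).2 hu hk, mul_zero]

end Reflection

section CubeNecas

open scoped NNReal ContDiff
open Filter Function

variable {ι : Type*} [Fintype ι] {r s : ℝ}

lemma eLpNorm_unitCube_le_of_forall_enorm_setIntegral_mul_le (hrs : r.HolderConjugate s)
    {D : ℝ≥0∞} {b : (ι → ℝ) → ℝ} (hb : ContinuousOn b (Set.Icc 0 1))
    (hdual : ∀ g, Continuous g → support g ⊆ unitCube ι → ‖∫ x in unitCube ι, b x * g x‖ₑ ≤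
      D * eLpNorm g (ENNReal.ofReal r) (volume.restrict (unitCube ι))) :
    eLpNorm b (ENNReal.ofReal s) (volume.restrict (unitCube ι)) ≤ D := by
  let π (x : ι → ℝ) : ι → ℝ := fun j => max 0 (min 1 (x j))
  have hπ (x : ι → ℝ) : π x ∈ Set.Icc 0 1 :=
    ⟨fun _ => le_max_left _ _, fun _ => max_le zero_le_one (min_le_left _ _)⟩
  have hπ_eq : Set.EqOn (b ∘ π) b (unitCube ι) := fun x hx => by
    have hxj := mem_unitCube.1 hx
    exact congrArg b (funext fun j => by simp [π, (hxj j).1.le, (hxj j).2.le])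
  have hbπ : Continuous (b ∘ π) := hb.comp_continuous (by simp only [π]; fun_prop) hπ
  obtain ⟨B, hB⟩ := isCompact_Icc.exists_bound_of_continuousOn hb
  have hmem : MemLp (b ∘ π) (ENNReal.ofReal s) (volume.restrict (unitCube ι)) :=
    .of_bound hbπ.aestronglyMeasurable B (.of_forall fun x => hB _ (hπ x))
  calc eLpNorm b (ENNReal.ofReal s) (volume.restrict (unitCube ι))
      = eLpNorm (b ∘ π) (ENNReal.ofReal s) (volume.restrict (unitCube ι)) :=
        eLpNorm_congr_ae ((ae_restrict_mem measurableSet_unitCube).mono fun x hx =>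
          (hπ_eq hx).symm)
    _ ≤ D := eLpNorm_le_of_forall_enorm_setIntegral_mul_le isOpen_unitCube hrs hbπ hmem
        fun g hg hgs => by
          rw [setIntegral_congr_fun measurableSet_unitCube fun x hx =>
            congrArg (· * g x) (hπ_eq hx)]
          exact hdual g hg hgs

lemma enorm_le_eLpNorm_sub_const_of_integral_eq_zero {X : Type*} [MeasurableSpace X]
    {μ : Measure X} [IsProbabilityMeasure μ] {a : X → ℝ} (ha : Integrable a μ)
    (ha₀ : ∫ x, a x ∂μ = 0) {p : ℝ≥0∞} (hp : 1 ≤ p) (c : ℝ) :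
    ‖c‖ₑ ≤ eLpNorm (fun x => a x - c) p μ := by
  calc ‖c‖ₑ = ‖∫ x, (a x - c) ∂μ‖ₑ := by
        rw [integral_sub ha (integrable_const c), ha₀]
        simp
    _ ≤ ∫⁻ x, ‖a x - c‖ₑ ∂μ := enorm_integral_le_lintegral_enorm _
    _ = eLpNorm (fun x => a x - c) 1 μ := eLpNorm_one_eq_lintegral_enorm.symm
    _ ≤ eLpNorm (fun x => a x - c) p μ :=
        eLpNorm_le_eLpNorm_of_exponent_le hp (ha.sub (integrable_const c)).aestronglyMeasurable

lemma eLpNorm_le_two_mul_eLpNorm_sub_const_of_integral_eq_zero {X : Type*} [MeasurableSpace X]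
    {μ : Measure X} [IsProbabilityMeasure μ] {a : X → ℝ} (ha : Integrable a μ)
    (ha₀ : ∫ x, a x ∂μ = 0) {p : ℝ≥0∞} (hp : 1 ≤ p) (c : ℝ) :
    eLpNorm a p μ ≤ 2 * eLpNorm (fun x => a x - c) p μ := by
  calc eLpNorm a p μ = eLpNorm ((fun x => a x - c) + fun _ => c) p μ :=
        congrArg (eLpNorm · p μ) (funext fun x => (sub_add_cancel (a x) c).symm)
    _ ≤ eLpNorm (fun x => a x - c) p μ + ‖c‖ₑ := by
        refine (eLpNorm_add_le (ha.sub (integrable_const c)).aestronglyMeasurable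
          aestronglyMeasurable_const hp).trans_eq ?_
        rw [eLpNorm_const _ (one_pos.trans_le hp).ne' (IsProbabilityMeasure.ne_zero μ),
          measure_univ, ENNReal.one_rpow, mul_one, Pi.sub_def]
    _ ≤ 2 * eLpNorm (fun x => a x - c) p μ := by
        rw [two_mul]
        gcongr
        exact enorm_le_eLpNorm_sub_const_of_integral_eq_zero ha ha₀ hp c

variable [DecidableEq ι] {a : (ι → ℝ) → ℝ} {D : ℝ≥0}

/-- The weak gradient of `a` on `U` is bounded by `D` on the smooth `V` that vanish on the boundary
of `U`, where the norm `∑ₖ ‖∂ₖV‖_r` of `V` is taken over the whole space. -/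
def WeakGradientBoundOn (a : (ι → ℝ) → ℝ) (U : Set (ι → ℝ)) (r : ℝ) (D : ℝ≥0) : Prop :=
  ∀ i V, ContDiff ℝ ∞ V → HasCompactSupport V → (∀ x ∈ frontier U, V x = 0) →
    ‖∫ x in U, a x * partialDeriv i V x‖ₑ ≤
      D * ∑ k, eLpNorm (partialDeriv k V) (ENNReal.ofReal r) volume

variable (ι) in
lemma exists_weakGradientBound_reflection (hr : 1 ≤ r) :
    ∃ K : ℝ≥0, ∀ (a : (ι → ℝ) → ℝ) D, ContinuousOn a (Set.Icc 0 1) →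
      WeakGradientBoundOn a (unitCube ι) r D → ∃ A, Integrable A ∧
        WeakGradientBound A (Metric.ball (fun _ => 1 / 2) 1) r (K * D) ∧
        ∀ g, Continuous g → support g ⊆ unitCube ι →
          ∫ x, A x * g x = ∫ x in unitCube ι, a x * g x := by
  obtain ⟨K, hK⟩ := exists_eLpNorm_partialDeriv_reflectionSum_le ι (ENNReal.one_le_ofReal.2 hr)
  refine ⟨K, fun a D ha haD => ?_⟩
  obtain ⟨A, hA, hAf⟩ :=
    exists_integrable_integral_mul_eq_reflectionSum ha (fun _ => reflectionWeight)
  refine ⟨A, hA, fun i w hw hws => ?_, fun g hg hgs => ?_⟩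
  · have hwc : HasCompactSupport w := hasCompactSupport_of_support_subset_ball hws
    let V := reflectionSum (primitiveWeight i) w
    calc ‖∫ x, A x * partialDeriv i w x‖ₑ
        = ‖∫ x in unitCube ι, a x * partialDeriv i V x‖ₑ := by
          rw [hAf _ (contDiff_partialDeriv hw i).continuous (hasCompactSupport_partialDeriv hwc i),
            partialDeriv_reflectionSum_primitiveWeight (hw.differentiable (by simp))]
      _ ≤ D * ∑ k, eLpNorm (partialDeriv k V) (ENNReal.ofReal r) volume :=
          haD i V (contDiff_reflectionSum _ hw) (hasCompactSupport_reflectionSum _ hwc)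
            fun x hx => reflectionSum_primitiveWeight_eq_zero hws i
              (mem_frontier_unitCube_iff.1 hx).2
      _ ≤ D * ∑ k, K * eLpNorm (partialDeriv k w) (ENNReal.ofReal r) volume := by
          gcongr with k
          exact hK i k w hw
      _ = (K * D : ℝ≥0) * ∑ k, eLpNorm (partialDeriv k w) (ENNReal.ofReal r) volume := by
          rw [← Finset.mul_sum, ENNReal.coe_mul]
          ring
  · have hgc : HasCompactSupport g := by
      rw [unitCube_eq_ball] at hgs
      exact hasCompactSupport_of_support_subset_ball hgs
    rw [hAf g hg hgc]
    refine setIntegral_congr_fun measurableSet_unitCube fun x hx => ?_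
    simp only [reflectionSum_reflectionWeight_of_support_subset hgs hx]

variable (ι) in
lemma exists_eLpNorm_unitCube_le_of_weakGradientBoundOn [Nonempty ι] (hrs : r.HolderConjugate s) :
    ∃ C : ℝ≥0, ∀ (a : (ι → ℝ) → ℝ) D, ContinuousOn a (Set.Icc 0 1) →
      WeakGradientBoundOn a (unitCube ι) r D → ∫ x in unitCube ι, a x = 0 →
        eLpNorm a (ENNReal.ofReal s) (volume.restrict (unitCube ι)) ≤ C * D := by
  obtain ⟨K, hK⟩ := exists_weakGradientBound_reflection ι hrs.lt.le
  obtain ⟨C, hC⟩ := exists_enorm_integral_sub_const_mul_le ι hrs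
  refine ⟨2 * (C * K), fun a D ha haD ha₀ => ?_⟩
  obtain ⟨A, hA, hAD, hAa⟩ := hK a D ha haD
  obtain ⟨c, hc⟩ := hC A (K * D) _ hA hAD
  have hsub : eLpNorm (fun x => a x - c) (ENNReal.ofReal s) (volume.restrict (unitCube ι)) ≤
      C * (K * D : ℝ≥0) := by
    refine eLpNorm_unitCube_le_of_forall_enorm_setIntegral_mul_le hrs (ha.sub continuousOn_const)
      fun g hg hgs => ?_
    have hgball := hgs.trans_eq unitCube_eq_ball
    have hgc : HasCompactSupport g := hasCompactSupport_of_support_subset_ball hgball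
    have hint : ∫ x in unitCube ι, (a x - c) * g x = ∫ x, (A x - c) * g x := by
      simp_rw [sub_mul]
      rw [integral_sub, integral_sub, hAa g hg hgs,
        setIntegral_eq_integral_of_forall_compl_eq_zero (f := fun x => c * g x)]
      · exact fun x hx => by rw [notMem_support.1 fun h => hx (hgs h), mul_zero]
      · exact hA.locallyIntegrable.integrable_smul_right_of_hasCompactSupport hg hgc
      · exact (hg.integrable_of_hasCompactSupport hgc).const_mul c
      · exact integrableOn_unitCube_of_continuousOn (ha.mul hg.continuousOn)
      · exact integrableOn_unitCube_of_continuousOn (hg.const_mul c).continuousOn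
    rw [hint, eLpNorm_restrict_eq_of_support_subset hgs]
    exact hc g hg hgball
  refine (eLpNorm_le_two_mul_eLpNorm_sub_const_of_integral_eq_zero
    (integrableOn_unitCube_of_continuousOn ha) ha₀
    (ENNReal.one_le_ofReal.2 hrs.symm.lt.le) c).trans ?_
  calc _ ≤ 2 * (C * (K * D : ℝ≥0) : ℝ≥0∞) := by gcongr
    _ = (2 * (C * K) : ℝ≥0) * D := by
        push_cast
        ring

end CubeNecas

section UnitCubeCalculus

open scoped NNReal
open Filter Function

lemma eqOn_fderivWithin_partialDeriv {ι : Type*} [Finite ι] [DecidableEq ι] (f : (ι → ℝ) → ℝ)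
    (k : ι) :
    Set.EqOn (fun x => fderivWithin ℝ f (Set.Icc 0 1) x (Pi.single k 1)) (partialDeriv k f)
      (unitCube ι) := fun x hx => by
  simp only [partialDeriv, fderivWithin_of_mem_nhds (Icc_mem_nhds_of_mem_unitCube hx)]

variable {ι : Type*} [Fintype ι]

lemma enorm_integral_mul_le_eLpNorm_mul_eLpNorm {X : Type*} [MeasurableSpace X] {μ : Measure X}
    {p q : ℝ} (hpq : p.HolderConjugate q) {f g : X → ℝ} (hf : AEStronglyMeasurable f μ)
    (hg : AEStronglyMeasurable g μ) :
    ‖∫ x, f x * g x ∂μ‖ₑ ≤ eLpNorm f (ENNReal.ofReal p) μ * eLpNorm g (ENNReal.ofReal q) μ := by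
  have := hpq.ennrealOfReal
  calc ‖∫ x, f x * g x ∂μ‖ₑ ≤ ∫⁻ x, ‖f x * g x‖ₑ ∂μ := enorm_integral_le_lintegral_enorm _
    _ = eLpNorm (f • g) 1 μ := eLpNorm_one_eq_lintegral_enorm.symm
    _ ≤ _ := eLpNorm_smul_le_mul_eLpNorm hg hf

variable {f : (ι → ℝ) → ℝ}

lemma hasFDerivAt_of_contDiffOn_Icc (hf : ContDiffOn ℝ 1 f (Set.Icc 0 1)) {x : ι → ℝ}
    (hx : x ∈ unitCube ι) : HasFDerivAt f (fderiv ℝ f x) x :=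
  ((hf.differentiableOn one_ne_zero x (unitCube_subset_Icc hx)).differentiableAt
    (Icc_mem_nhds_of_mem_unitCube hx)).hasFDerivAt

lemma continuousOn_fderivWithin_apply (hf : ContDiffOn ℝ 1 f (Set.Icc 0 1)) (v : ι → ℝ) :
    ContinuousOn (fun x => fderivWithin ℝ f (Set.Icc 0 1) x v) (Set.Icc 0 1) :=
  (hf.continuousOn_fderivWithin uniqueDiffOn_Icc_zero_one le_rfl).clm_apply continuousOn_const

variable [DecidableEq ι]

variable (ι) in
lemma exists_eLpNorm_le_sum_eLpNorm_partialDeriv [Nonempty ι] {r s : ℝ} (hr : 1 ≤ r) (hs : 0 < s)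
    (hrs : s⁻¹ = r⁻¹ - (Fintype.card ι : ℝ)⁻¹) :
    ∃ C : ℝ≥0, ∀ w : (ι → ℝ) → ℝ, ContDiff ℝ 1 w → HasCompactSupport w →
      eLpNorm w (ENNReal.ofReal s) volume ≤
        C * ∑ k, eLpNorm (partialDeriv k w) (ENNReal.ofReal r) volume := by
  refine ⟨SNormLESNormFDerivOfEqConst ℝ (volume : Measure (ι → ℝ)) r.toNNReal, fun w hw hwc => ?_⟩
  have hr₀ : 0 ≤ r := zero_le_one.trans hr
  refine (eLpNorm_le_eLpNorm_fderiv_of_eq volume hw hwc (p := r.toNNReal) (p' := s.toNNReal)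
    (Real.one_le_toNNReal.2 hr) ?_ ?_).trans ?_
  · simp [Fintype.card_pos]
  · simpa [hs.le, hr₀] using hrs
  gcongr
  have hcont (k : ι) : Continuous fun x => ‖partialDeriv k w x‖ :=
    ((hw.continuous_fderiv one_ne_zero).clm_apply continuous_const).norm
  calc eLpNorm (fderiv ℝ w) (ENNReal.ofReal r) volume
      ≤ eLpNorm (∑ k, fun x => ‖partialDeriv k w x‖) (ENNReal.ofReal r) volume :=
        eLpNorm_mono_real fun x => by
          simpa [partialDeriv] using norm_le_sum_norm_apply_single (fderiv ℝ w x)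
    _ ≤ ∑ k, eLpNorm (fun x => ‖partialDeriv k w x‖) (ENNReal.ofReal r) volume :=
        eLpNorm_sum_le (fun k _ => (hcont k).aestronglyMeasurable) (ENNReal.one_le_ofReal.2 hr)
    _ = ∑ k, eLpNorm (partialDeriv k w) (ENNReal.ofReal r) volume := by
        simp only [eLpNorm_norm]

lemma aestronglyMeasurable_partialDeriv (hf : ContDiffOn ℝ 1 f (Set.Icc 0 1)) (k : ι) :
    AEStronglyMeasurable (partialDeriv k f) (volume.restrict (unitCube ι)) :=
  (((continuousOn_fderivWithin_apply hf _).mono unitCube_subset_Icc).congr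
    (eqOn_fderivWithin_partialDeriv f k).symm).aestronglyMeasurable measurableSet_unitCube

lemma integrableOn_partialDeriv_mul (hf : ContDiffOn ℝ 1 f (Set.Icc 0 1)) {V : (ι → ℝ) → ℝ}
    (hV : ContinuousOn V (Set.Icc 0 1)) (k : ι) :
    IntegrableOn (fun x => partialDeriv k f x * V x) (unitCube ι) :=
  (integrableOn_unitCube_of_continuousOn ((continuousOn_fderivWithin_apply hf _).mul hV)).congr_fun
    (fun x hx => congrArg (· * V x) (eqOn_fderivWithin_partialDeriv f k hx)) measurableSet_unitCube

lemma setIntegral_unitCube_partialDeriv_eq_zero {n : ℕ} {f : (Fin n → ℝ) → ℝ}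
    (hf : ContDiffOn ℝ 1 f (Set.Icc 0 1)) (hf₀ : ∀ x ∈ frontier (unitCube (Fin n)), f x = 0)
    (k : Fin n) : ∫ x in unitCube (Fin n), partialDeriv k f x = 0 := by
  obtain ⟨m, rfl⟩ := Nat.exists_eq_succ_of_ne_zero k.pos.ne'
  let f' (x : Fin (m + 1) → ℝ) := fderivWithin ℝ f (Set.Icc 0 1) x
  have hsum (x : Fin (m + 1) → ℝ) :
      ∑ i, (if i = k then f' x else 0) (Pi.single i 1) = f' x (Pi.single k 1) := by
    rw [Finset.sum_eq_single k (fun i _ hi => by simp [hi]) (by simp), if_pos rfl]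
  have hface (i : Fin (m + 1)) {t : ℝ} (ht : t = 0 ∨ t = 1) :
      ∫ y in Set.Icc ((0 : Fin (m + 1) → ℝ) ∘ i.succAbove) ((1 : Fin (m + 1) → ℝ) ∘ i.succAbove),
        (if i = k then f (i.insertNth t y) else 0) = 0 := by
    refine setIntegral_eq_zero_of_forall_eq_zero fun y hy => ?_
    rw [hf₀, ite_self]
    have ht01 : t ∈ Set.Icc 0 1 := by rcases ht with rfl | rfl <;> simp
    refine mem_frontier_unitCube_iff.2 ⟨Fin.insertNth_mem_Icc.2 ⟨ht01, hy⟩, i, ?_⟩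
    rwa [Fin.insertNth_apply_same]
  have hdiv := integral_divergence_of_hasFDerivAt_off_countable' (0 : Fin (m + 1) → ℝ) 1
    (fun _ => zero_le_one) (fun i x => if i = k then f x else 0)
    (fun i x => if i = k then f' x else 0) ∅ Set.countable_empty ?_ ?_ ?_
  · calc ∫ x in unitCube (Fin (m + 1)), partialDeriv k f x
        = ∫ x in unitCube (Fin (m + 1)), f' x (Pi.single k 1) :=
          setIntegral_congr_fun measurableSet_unitCube (eqOn_fderivWithin_partialDeriv f k).symm
      _ = ∫ x in Set.Icc 0 1, f' x (Pi.single k 1) := setIntegral_congr_set unitCube_ae_eq_Icc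
      _ = 0 := by
        simp_rw [hsum] at hdiv
        rw [hdiv]
        exact Finset.sum_eq_zero fun i _ => by
          simp_rw [Pi.one_apply, Pi.zero_apply, hface i (.inr rfl), hface i (.inl rfl), sub_zero]
  · intro i
    split_ifs
    exacts [hf.continuousOn, continuousOn_const]
  · intro x hx i
    have hx : x ∈ unitCube _ := hx.1
    split_ifs
    · simpa only [f', fderivWithin_of_mem_nhds (Icc_mem_nhds_of_mem_unitCube hx)] using
        hasFDerivAt_of_contDiffOn_Icc hf hx
    · exact hasFDerivAt_const _ _
  · simp_rw [hsum]
    exact (continuousOn_fderivWithin_apply hf _).integrableOn_compact isCompact_Icc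

lemma setIntegral_unitCube_mul_partialDeriv {n : ℕ} {f V : (Fin n → ℝ) → ℝ}
    (hf : ContDiffOn ℝ 1 f (Set.Icc 0 1)) (hV : ContDiff ℝ 1 V)
    (hV₀ : ∀ x ∈ frontier (unitCube (Fin n)), V x = 0) (k : Fin n) :
    ∫ x in unitCube (Fin n), f x * partialDeriv k V x =
      -∫ x in unitCube (Fin n), partialDeriv k f x * V x := by
  have hprod : Set.EqOn (partialDeriv k fun x => f x * V x)
      (fun x => f x * partialDeriv k V x + partialDeriv k f x * V x) (unitCube (Fin n)) :=
    fun x hx => by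
      simp only [partialDeriv, ((hasFDerivAt_of_contDiffOn_Icc hf hx).fun_mul
        (hV.differentiable one_ne_zero x).hasFDerivAt).fderiv, add_apply, smul_apply, smul_eq_mul,
        mul_comm]
  have hcont : Continuous (partialDeriv k V) :=
    (hV.continuous_fderiv one_ne_zero).clm_apply continuous_const
  have hint : IntegrableOn (fun x => f x * partialDeriv k V x) (unitCube (Fin n)) :=
    integrableOn_unitCube_of_continuousOn (hf.continuousOn.mul hcont.continuousOn)
  rw [eq_neg_iff_add_eq_zero, ← integral_add hint
    (integrableOn_partialDeriv_mul hf hV.continuous.continuousOn k),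
    ← setIntegral_congr_fun measurableSet_unitCube hprod]
  exact setIntegral_unitCube_partialDeriv_eq_zero (hf.mul hV.contDiffOn)
    (fun x hx => by simp [hV₀ x hx]) k

end UnitCubeCalculus

/-! ### The Korn–Maxwell–Sobolev inequality -/

section KornMaxwell

open scoped NNReal ContDiff

section Matrices

variable {ι : Type*}

/-- The symmetric part of a square matrix, written as a function so that it carries the sup norm. -/
noncomputable def symmPart (A : ι → ι → ℝ) : ι → ι → ℝ := fun i j => (A i j + A j i) / 2

/-- The skew-symmetric part of a square matrix. -/
noncomputable def skewPart (A : ι → ι → ℝ) : ι → ι → ℝ := fun i j => (A i j - A j i) / 2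

lemma continuous_symmPart_apply (i j : ι) : Continuous fun A : ι → ι → ℝ => symmPart A i j := by
  unfold symmPart
  fun_prop

lemma continuous_symmPart : Continuous (symmPart (ι := ι)) :=
  continuous_pi fun i => continuous_pi fun j => continuous_symmPart_apply i j

lemma continuous_skewPart_apply (i j : ι) : Continuous fun A : ι → ι → ℝ => skewPart A i j := by
  unfold skewPart
  fun_prop

lemma symmPart_add_skewPart_apply (A : ι → ι → ℝ) (i j : ι) :
    symmPart A i j + skewPart A i j = A i j := by
  simp only [symmPart, skewPart]
  ring

lemma enorm_skewPart_le {T : ι → ι → ι → ℝ} {a b : ℝ≥0∞}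
    (ha : ∀ i j k, ‖T i j k - T i k j‖ₑ ≤ a)
    (hb : ∀ i j k, ‖symmPart (fun i j => T i j k) i j‖ₑ ≤ b) (i j k : ι) :
    ‖skewPart (fun i j => T i j k) i j‖ₑ ≤ 3 * (a + b) := by
  let A (i j k : ι) := T i j k - T i k j
  let S (i j k : ι) := symmPart (fun i j => T i j k) i j
  -- A tensor that is skew in one pair of indices and symmetric in another vanishes; this is the
  -- corresponding identity when both hold up to errors.
  have hid : skewPart (fun i j => T i j k) i j =
      (2⁻¹ : ℝ) • (A i j k - A k i j + A j k i) + (S i k j - S j k i) := by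
    simp only [skewPart, symmPart, A, S, smul_eq_mul]
    ring
  have hhalf : ‖(2⁻¹ : ℝ)‖ₑ ≤ 1 := by simp [← ofReal_norm]
  calc ‖skewPart (fun i j => T i j k) i j‖ₑ
      ≤ ‖(2⁻¹ : ℝ)‖ₑ * (‖A i j k‖ₑ + ‖A k i j‖ₑ + ‖A j k i‖ₑ) + (‖S i k j‖ₑ + ‖S j k i‖ₑ) := by
        rw [hid]
        refine (enorm_add_le _ _).trans (add_le_add ?_ enorm_sub_le)
        rw [enorm_smul]
        gcongr
        exact (enorm_add_le _ _).trans (add_le_add_left enorm_sub_le _)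
    _ ≤ 1 * (a + a + a) + (b + b) := by
        gcongr
        exacts [ha i j k, ha k i j, ha j k i, hb i k j, hb j k i]
    _ ≤ 1 * (a + a + a) + (b + b) + b := le_self_add
    _ = 3 * (a + b) := by ring

variable [Fintype ι]

lemma norm_apply_apply_le {E : Type*} [SeminormedAddCommGroup E] (A : ι → ι → E) (i j : ι) :
    ‖A i j‖ ≤ ‖A‖ :=
  (norm_le_pi_norm (A i) j).trans (norm_le_pi_norm A i)

lemma norm_le_norm_symmPart_add_sum_norm_skewPart (A : ι → ι → ℝ) :
    ‖A‖ ≤ ‖symmPart A‖ + ∑ t : ι × ι, ‖skewPart A t.1 t.2‖ := by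
  have h₀ : 0 ≤ ‖symmPart A‖ + ∑ t : ι × ι, ‖skewPart A t.1 t.2‖ := by positivity
  refine (pi_norm_le_iff_of_nonneg h₀).2 fun i => (pi_norm_le_iff_of_nonneg h₀).2 fun j => ?_
  rw [← symmPart_add_skewPart_apply A i j]
  refine (norm_add_le _ _).trans (add_le_add (norm_apply_apply_le _ i j) ?_)
  exact Finset.single_le_sum (f := fun t : ι × ι => ‖skewPart A t.1 t.2‖)
    (fun _ _ => norm_nonneg _) (Finset.mem_univ (i, j))

variable {X : Type*} [MeasurableSpace X] {μ : Measure X} {F : X → ι → ι → ℝ}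

lemma eLpNorm_le_eLpNorm_symmPart_add_sum_eLpNorm_skewPart {q : ℝ≥0∞} (hq : 1 ≤ q)
    (hF : AEStronglyMeasurable F μ) :
    eLpNorm F q μ ≤ eLpNorm (fun x => symmPart (F x)) q μ +
      ∑ t : ι × ι, eLpNorm (fun x => skewPart (F x) t.1 t.2) q μ := by
  have hsymm : AEStronglyMeasurable (fun x => ‖symmPart (F x)‖) μ :=
    (continuous_symmPart.comp_aestronglyMeasurable hF).norm
  have hskew (t : ι × ι) : AEStronglyMeasurable (fun x => ‖skewPart (F x) t.1 t.2‖) μ :=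
    ((continuous_skewPart_apply t.1 t.2).comp_aestronglyMeasurable hF).norm
  calc eLpNorm F q μ
      ≤ eLpNorm ((fun x => ‖symmPart (F x)‖) +
          ∑ t : ι × ι, fun x => ‖skewPart (F x) t.1 t.2‖) q μ :=
        eLpNorm_mono_real fun x => by
          simpa using norm_le_norm_symmPart_add_sum_norm_skewPart (F x)
    _ ≤ eLpNorm (fun x => ‖symmPart (F x)‖) q μ +
          ∑ t : ι × ι, eLpNorm (fun x => ‖skewPart (F x) t.1 t.2‖) q μ :=
        (eLpNorm_add_le hsymm (Finset.aestronglyMeasurable_sum _ fun t _ => hskew t) hq).trans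
          (add_le_add_right (eLpNorm_sum_le (fun t _ => hskew t) hq) _)
    _ = _ := by simp only [eLpNorm_norm]

lemma integral_skewPart_eq_zero
    (h : ∀ P : ι → ι → ℝ, (∀ i j, P j i = -P i j) → ∫ x, ∑ i, ∑ j, F x i j * P i j ∂μ = 0)
    (i j : ι) : ∫ x, skewPart (F x) i j ∂μ = 0 := by
  classical
  let E (i j k l : ι) : ℝ := if k = i ∧ l = j then 1 else 0
  rw [← h (skewPart (E i j)) fun k l => by simp only [skewPart]; ring]
  congr with x
  simp only [skewPart, E, and_comm, mul_div_assoc', mul_sub, ← Finset.sum_div,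
    Finset.sum_sub_distrib]
  simp [ite_and]

end Matrices

variable {n : ℕ} {p q r s : ℝ}

/-- The curl in arbitrary dimension: entry `i j k` is `∂ₖ Fᵢⱼ - ∂ⱼ Fᵢₖ`. -/
noncomputable def generalizedCurl {ι : Type*} [DecidableEq ι] (F : (ι → ℝ) → ι → ι → ℝ)
    (x : ι → ℝ) : ι → ι → ι → ℝ :=
  fun i j k => partialDeriv k (fun y => F y i j) x - partialDeriv j (fun y => F y i k) x

lemma enorm_setIntegral_mul_partialDeriv_sub_le (hps : p.HolderConjugate s)
    {f g V : (Fin n → ℝ) → ℝ} (hf : ContDiffOn ℝ 1 f (Set.Icc 0 1))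
    (hg : ContDiffOn ℝ 1 g (Set.Icc 0 1)) (hV : ContDiff ℝ 1 V)
    (hV₀ : ∀ x ∈ frontier (unitCube (Fin n)), V x = 0) (j k : Fin n) :
    ‖(∫ x in unitCube (Fin n), f x * partialDeriv k V x) -
        ∫ x in unitCube (Fin n), g x * partialDeriv j V x‖ₑ ≤
      eLpNorm (fun x => partialDeriv k f x - partialDeriv j g x) (ENNReal.ofReal p)
          (volume.restrict (unitCube (Fin n))) *
        eLpNorm V (ENNReal.ofReal s) (volume.restrict (unitCube (Fin n))) := by
  have hV' : ContinuousOn V (Set.Icc 0 1) := hV.continuous.continuousOn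
  rw [setIntegral_unitCube_mul_partialDeriv hf hV hV₀, setIntegral_unitCube_mul_partialDeriv hg hV
    hV₀, ← neg_sub', enorm_neg, ← integral_sub (integrableOn_partialDeriv_mul hf hV' k)
    (integrableOn_partialDeriv_mul hg hV' j)]
  simp only [← sub_mul]
  exact enorm_integral_mul_le_eLpNorm_mul_eLpNorm hps
    ((aestronglyMeasurable_partialDeriv hf k).sub (aestronglyMeasurable_partialDeriv hg j))
    hV.continuous.aestronglyMeasurable

lemma enorm_setIntegral_skewPart_mul_partialDeriv_le (hps : p.HolderConjugate s)
    (hqr : q.HolderConjugate r) {F : (Fin n → ℝ) → Fin n → Fin n → ℝ}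
    (hF : ContDiffOn ℝ 1 F (Set.Icc 0 1)) {V : (Fin n → ℝ) → ℝ} (hV : ContDiff ℝ 1 V)
    (hV₀ : ∀ x ∈ frontier (unitCube (Fin n)), V x = 0) (i j k : Fin n) :
    ‖∫ x in unitCube (Fin n), skewPart (F x) i j * partialDeriv k V x‖ₑ ≤
      3 * (eLpNorm (generalizedCurl F) (ENNReal.ofReal p) (volume.restrict (unitCube (Fin n))) *
          eLpNorm V (ENNReal.ofReal s) (volume.restrict (unitCube (Fin n))) +
        eLpNorm (fun x => symmPart (F x)) (ENNReal.ofReal q) (volume.restrict (unitCube (Fin n))) *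
          ∑ l, eLpNorm (partialDeriv l V) (ENNReal.ofReal r)
            (volume.restrict (unitCube (Fin n)))) := by
  have hFij (i j) : ContDiffOn ℝ 1 (fun x => F x i j) (Set.Icc 0 1) :=
    contDiffOn_pi.1 (contDiffOn_pi.1 hF i) j
  have hcont (k) : Continuous (partialDeriv k V) :=
    (hV.continuous_fderiv one_ne_zero).clm_apply continuous_const
  have hint (i j k) : IntegrableOn (fun x => F x i j * partialDeriv k V x) (unitCube (Fin n)) :=
    integrableOn_unitCube_of_continuousOn ((hFij i j).continuousOn.mul (hcont k).continuousOn)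
  let T (i j k : Fin n) := ∫ x in unitCube (Fin n), F x i j * partialDeriv k V x
  have hskew : ∫ x in unitCube (Fin n), skewPart (F x) i j * partialDeriv k V x =
      skewPart (fun i j => T i j k) i j := by
    simp only [skewPart, T, div_mul_eq_mul_div, sub_mul, integral_div,
      integral_sub (hint i j k) (hint j i k)]
  have hsymm (i j k) : symmPart (fun i j => T i j k) i j =
      ∫ x in unitCube (Fin n), symmPart (F x) i j * partialDeriv k V x := by
    simp only [symmPart, T, div_mul_eq_mul_div, add_mul, integral_div,
      integral_add (hint i j k) (hint j i k)]
  rw [hskew]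
  refine enorm_skewPart_le (fun i j k => ?_) (fun i j k => ?_) i j k
  · refine (enorm_setIntegral_mul_partialDeriv_sub_le hps (hFij i j) (hFij i k) hV hV₀ j k).trans ?_
    gcongr
    exact eLpNorm_mono fun x => (norm_le_pi_norm (generalizedCurl F x i j) k).trans
      (norm_apply_apply_le (generalizedCurl F x) i j)
  · rw [hsymm]
    have hmeas : AEStronglyMeasurable (fun x => symmPart (F x) i j)
        (volume.restrict (unitCube (Fin n))) :=
      ((continuous_symmPart_apply i j).comp_continuousOn
        (hF.continuousOn.mono unitCube_subset_Icc)).aestronglyMeasurable measurableSet_unitCube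
    refine (enorm_integral_mul_le_eLpNorm_mul_eLpNorm hqr hmeas
      (hcont k).aestronglyMeasurable).trans (mul_le_mul' ?_ ?_)
    · exact eLpNorm_mono fun x => norm_apply_apply_le (symmPart (F x)) i j
    · exact Finset.single_le_sum (f := fun l => eLpNorm (partialDeriv l V) (ENNReal.ofReal r)
        (volume.restrict (unitCube (Fin n)))) (fun _ _ => zero_le) (Finset.mem_univ k)

lemma weakGradientBoundOn_skewPart (hps : p.HolderConjugate s) (hqr : q.HolderConjugate r)
    {C : ℝ≥0} (hC : ∀ w : (Fin n → ℝ) → ℝ, ContDiff ℝ 1 w → HasCompactSupport w →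
      eLpNorm w (ENNReal.ofReal s) volume ≤
        C * ∑ k, eLpNorm (partialDeriv k w) (ENNReal.ofReal r) volume)
    {F : (Fin n → ℝ) → Fin n → Fin n → ℝ} (hF : ContDiffOn ℝ 1 F (Set.Icc 0 1)) {D : ℝ≥0}
    (hD : eLpNorm (fun x => symmPart (F x)) (ENNReal.ofReal q)
        (volume.restrict (unitCube (Fin n))) +
      eLpNorm (generalizedCurl F) (ENNReal.ofReal p) (volume.restrict (unitCube (Fin n))) ≤ D)
    (i j : Fin n) :
    WeakGradientBoundOn (fun x => skewPart (F x) i j) (unitCube (Fin n)) r (3 * (C + 1) * D) := by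
  intro k V hV hVc hV₀
  have hV₁ : ContDiff ℝ 1 V := hV.of_le (by simp)
  refine (enorm_setIntegral_skewPart_mul_partialDeriv_le hps hqr hF hV₁ hV₀ i j k).trans ?_
  set S := eLpNorm (fun x => symmPart (F x)) (ENNReal.ofReal q) (volume.restrict (unitCube (Fin n)))
  set R := eLpNorm (generalizedCurl F) (ENNReal.ofReal p) (volume.restrict (unitCube (Fin n)))
  set W := ∑ l, eLpNorm (partialDeriv l V) (ENNReal.ofReal r) volume
  calc 3 * (R * eLpNorm V (ENNReal.ofReal s) (volume.restrict (unitCube (Fin n))) +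
        S * ∑ l, eLpNorm (partialDeriv l V) (ENNReal.ofReal r) (volume.restrict (unitCube (Fin n))))
      ≤ 3 * (R * (C * W) + S * W) := by
        gcongr
        · exact (eLpNorm_restrict_le V _ volume _).trans (hC V hV₁ hVc)
        · exact Finset.sum_le_sum fun l _ => eLpNorm_restrict_le _ _ volume _
    _ ≤ 3 * (R * (C * W) + S * W + (R * W + S * (C * W))) := by
        gcongr 3 * ?_
        exact le_self_add
    _ = 3 * (C + 1) * (S + R) * W := by ring
    _ ≤ _ := by push_cast; gcongr

lemma exists_eLpNorm_skewPart_le [NeZero n] (hps : p.HolderConjugate s) (hrq : r.HolderConjugate q)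
    (hsr : s⁻¹ = r⁻¹ - (n : ℝ)⁻¹) :
    ∃ C : ℝ≥0, ∀ F : (Fin n → ℝ) → Fin n → Fin n → ℝ, ContDiffOn ℝ 1 F (Set.Icc 0 1) →
      (∀ P : Fin n → Fin n → ℝ, (∀ i j, P j i = -P i j) →
        ∫ x in unitCube (Fin n), ∑ i, ∑ j, F x i j * P i j = 0) →
      ∀ D : ℝ≥0, eLpNorm (fun x => symmPart (F x)) (ENNReal.ofReal q)
          (volume.restrict (unitCube (Fin n))) +
        eLpNorm (generalizedCurl F) (ENNReal.ofReal p) (volume.restrict (unitCube (Fin n))) ≤ D →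
      ∀ i j, eLpNorm (fun x => skewPart (F x) i j) (ENNReal.ofReal q)
        (volume.restrict (unitCube (Fin n))) ≤ C * D := by
  obtain ⟨C₁, hC₁⟩ := exists_eLpNorm_unitCube_le_of_weakGradientBoundOn (Fin n) hrq
  obtain ⟨C₂, hC₂⟩ := exists_eLpNorm_le_sum_eLpNorm_partialDeriv (Fin n) hrq.lt.le hps.symm.pos
    (by simpa using hsr)
  refine ⟨C₁ * (3 * (C₂ + 1)), fun F hF hF₀ D hD i j => ?_⟩
  have hcont : ContinuousOn (fun x => skewPart (F x) i j) (Set.Icc 0 1) :=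
    (continuous_skewPart_apply i j).comp_continuousOn hF.continuousOn
  simpa [mul_assoc] using hC₁ _ _ hcont
    (weakGradientBoundOn_skewPart hps hrq.symm hC₂ hF hD i j) (integral_skewPart_eq_zero hF₀ i j)

lemma exists_eLpNorm_le_eLpNorm_symmPart_add_eLpNorm_generalizedCurl [NeZero n]
    (hps : p.HolderConjugate s) (hrq : r.HolderConjugate q) (hsr : s⁻¹ = r⁻¹ - (n : ℝ)⁻¹) :
    ∃ c : ℝ≥0, 0 < c ∧ ∀ F : (Fin n → ℝ) → Fin n → Fin n → ℝ, ContDiffOn ℝ 1 F (Set.Icc 0 1) →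
      (∀ P : Fin n → Fin n → ℝ, (∀ i j, P j i = -P i j) →
        ∫ x in unitCube (Fin n), ∑ i, ∑ j, F x i j * P i j = 0) →
      eLpNorm F (ENNReal.ofReal q) (volume.restrict (unitCube (Fin n))) ≤
        c * (eLpNorm (fun x => symmPart (F x)) (ENNReal.ofReal q)
            (volume.restrict (unitCube (Fin n))) +
          eLpNorm (generalizedCurl F) (ENNReal.ofReal p)
            (volume.restrict (unitCube (Fin n)))) := by
  obtain ⟨C, hC⟩ := exists_eLpNorm_skewPart_le hps hrq hsr
  refine ⟨1 + n ^ 2 * C, by positivity, fun F hF hF₀ => ?_⟩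
  set μ := volume.restrict (unitCube (Fin n))
  set S := eLpNorm (fun x => symmPart (F x)) (ENNReal.ofReal q) μ
  set R := eLpNorm (generalizedCurl F) (ENNReal.ofReal p) μ
  rcases eq_or_ne (S + R) ⊤ with htop | hfin
  · rw [htop, ENNReal.mul_top (by simp)]
    exact le_top
  have hskew (t : Fin n × Fin n) :
      eLpNorm (fun x => skewPart (F x) t.1 t.2) (ENNReal.ofReal q) μ ≤ C * (S + R) := by
    simpa only [ENNReal.coe_toNNReal hfin] using
      hC F hF hF₀ (S + R).toNNReal (ENNReal.coe_toNNReal hfin).ge t.1 t.2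
  have hmeas : AEStronglyMeasurable F μ :=
    (hF.continuousOn.mono unitCube_subset_Icc).aestronglyMeasurable measurableSet_unitCube
  calc eLpNorm F (ENNReal.ofReal q) μ
      ≤ S + ∑ t : Fin n × Fin n, eLpNorm (fun x => skewPart (F x) t.1 t.2) (ENNReal.ofReal q) μ :=
        eLpNorm_le_eLpNorm_symmPart_add_sum_eLpNorm_skewPart
          (ENNReal.one_le_ofReal.2 hrq.symm.lt.le) hmeas
    _ ≤ (S + R) + ∑ _t : Fin n × Fin n, C * (S + R) :=
        add_le_add le_self_add (Finset.sum_le_sum fun t _ => hskew t)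
    _ = ((1 + n ^ 2 * C : ℝ≥0) : ℝ≥0∞) * (S + R) := by
        simp only [Finset.sum_const, Finset.card_univ, Fintype.card_prod, Fintype.card_fin,
          nsmul_eq_mul]
        push_cast
        ring

end KornMaxwell

lemma unitCube_fin_three : unitCube (Fin 3) = Q3 := by
  ext x
  simp only [mem_unitCube, Q3, Set.mem_ofPred_eq]

lemma norm_generalizedCurl_le_norm_mcurl (F : (Fin 3 → ℝ) → Fin 3 → Fin 3 → ℝ) (x : Fin 3 → ℝ) :
    ‖generalizedCurl F x‖ ≤ ‖mcurl F x‖ := by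
  refine (pi_norm_le_iff_of_nonneg (norm_nonneg _)).2 fun i =>
    (pi_norm_le_iff_of_nonneg (norm_nonneg _)).2 fun j =>
      (pi_norm_le_iff_of_nonneg (norm_nonneg _)).2 fun k => ?_
  have h₀ := norm_apply_apply_le (mcurl F x) i 0
  have h₁ := norm_apply_apply_le (mcurl F x) i 1
  have h₂ := norm_apply_apply_le (mcurl F x) i 2
  change ‖pd k (fun y => F y i j) x - pd j (fun y => F y i k) x‖ ≤ _
  fin_cases j <;> fin_cases k <;>
    first
    | (rw [sub_self, norm_zero]; exact norm_nonneg _)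
    | assumption
    | (rw [norm_sub_rev]; assumption)

end KornMaxwellSobolev

open KornMaxwellSobolev in
theorem korn_maxwell_sobolev_second_kind_general {n : ℕ} (p : ℝ) (hp : 1 < p) (hpn : p < n) :
    ∃ c : ℝ, 0 < c ∧
      ∀ F : (Fin n → ℝ) → Fin n → Fin n → ℝ,
        ContDiffOn ℝ 1 F (closure (unitCube (Fin n))) →
        (∀ P : Fin n → Fin n → ℝ, (∀ i j, P j i = -P i j) →
          ∫ x in unitCube (Fin n), (∑ i, ∑ j, F x i j * P i j) = 0) →
          eLpNorm F (ENNReal.ofReal (n * p / (n - p))) (volume.restrict (unitCube (Fin n))) ≤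
            ENNReal.ofReal c *
              (eLpNorm (fun x => symmPart (F x)) (ENNReal.ofReal (n * p / (n - p)))
                  (volume.restrict (unitCube (Fin n))) +
                eLpNorm (generalizedCurl F) (ENNReal.ofReal p)
                  (volume.restrict (unitCube (Fin n)))) := by
  have hn : (0 : ℝ) < n := by linarith
  have : NeZero n := ⟨by rintro rfl; simp at hn⟩
  have : 0 < n - p := sub_pos.2 hpn
  have : 0 < p - 1 := sub_pos.2 hp
  have hr : 0 < (n + 1) * p - n := by nlinarith
  have hps : p.HolderConjugate (p / (p - 1)) := Real.HolderConjugate.conjExponent hp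
  have hrq : (n * p / ((n + 1) * p - n)).HolderConjugate (n * p / (n - p)) := by
    refine Real.holderConjugate_iff.2 ⟨by rw [lt_div_iff₀ hr]; linarith, ?_⟩
    field_simp
    ring
  have hsr : (p / (p - 1))⁻¹ = (n * p / ((n + 1) * p - n))⁻¹ - (n : ℝ)⁻¹ := by
    field_simp
    ring
  obtain ⟨c, hc, h⟩ :=
    exists_eLpNorm_le_eLpNorm_symmPart_add_eLpNorm_generalizedCurl hps hrq hsr
  exact ⟨c, hc, by simpa only [closure_unitCube, ENNReal.ofReal_coe_nnreal] using h⟩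

/-- Korn–Maxwell–Sobolev inequality of the second kind (symmetric part, `1 < p < 3`):
there is `c = c(p) > 0` such that for all `F ∈ C^∞(closure Q; ℝ^{3×3})` whose
Frobenius product with every skew-symmetric matrix integrates to zero over `Q`, one has
`‖F‖_{L^{3p/(3−p)}(Q)} ≤ c(‖F^sym‖_{L^{3p/(3−p)}(Q)} + ‖curl F‖_{Lᵖ(Q)})`. -/
theorem korn_maxwell_sobolev_second_kind (p : ℝ) (hp1 : 1 < p) (hp3 : p < 3) :
    ∃ c : ℝ, 0 < c ∧
      ∀ F : (Fin 3 → ℝ) → Fin 3 → Fin 3 → ℝ,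
        ContDiffOn ℝ (⊤ : ℕ∞) F (closure Q3) →
        (∀ P : Fin 3 → Fin 3 → ℝ, (∀ i j, P j i = -P i j) →
          ∫ x in Q3, (∑ i, ∑ j, F x i j * P i j) = 0) →
          eLpNorm F (ENNReal.ofReal (3 * p / (3 - p))) (volume.restrict Q3) ≤
            ENNReal.ofReal c *
              (eLpNorm (fun x => fun i j => (F x i j + F x j i) / 2)
                  (ENNReal.ofReal (3 * p / (3 - p))) (volume.restrict Q3) +
                eLpNorm (fun x => mcurl F x) (ENNReal.ofReal p)
                  (volume.restrict Q3)) := by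
  obtain ⟨c, hc, h⟩ := korn_maxwell_sobolev_second_kind_general (n := 3) p hp1 (mod_cast hp3)
  rw [KornMaxwellSobolev.unitCube_fin_three] at h
  refine ⟨c, hc, fun F hF hF₀ => (h F (hF.of_le (by simp)) hF₀).trans ?_⟩
  gcongr ENNReal.ofReal c * (_ + ?_)
  exact eLpNorm_mono (KornMaxwellSobolev.norm_generalizedCurl_le_norm_mcurl F)
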